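/- arXiv:math/0608252 — 2 statements merged into one kernel-verified Lean document; each statement's English description precedes it below -/
import Mathlib

section
/- If p and q are strictly positive probability vectors on finite alphabets with H(p) > H(q), then there exists a finitary homomorphism from the Bernoulli scheme BS(p) to the Bernoulli scheme BS(q) whose code length has finite expectation. -/
open MeasureTheory ENNReal Filter

noncomputable section

/-- The left shift transformation on bi-infinite sequences: `(shift x) n = x (n+1)`. -/
def shift {A : Type*} : (ℤ → A) → (ℤ → A) := fun x n => x (n + 1)

/-- `φ` is a homomorphism (factor map) from the shift system `(ℤ → A, μ, shift)` to
`(ℤ → B, ν, shift)`, defined on the shift-invariant full-measure domain `D`. -/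
structure IsFactorMap {A B : Type*} [MeasurableSpace A] [MeasurableSpace B]
    (μ : Measure (ℤ → A)) (ν : Measure (ℤ → B))
    (D : Set (ℤ → A)) (φ : (ℤ → A) → (ℤ → B)) : Prop where
  measurable_map : Measurable φ
  dom_measurable : MeasurableSet D
  dom_shift_invariant : shift ⁻¹' D = D
  dom_full : μ D = 1
  pushforward : ν = μ.map φ
  equivariant : ∀ x ∈ D, φ (shift x) = shift (φ x)

/-- The window `[-q, r]` of `x` determines the zero coordinate of the image under `φ`
(among points of the domain `D`). -/
def DeterminesAt {A B : Type*} (D : Set (ℤ → A)) (φ : (ℤ → A) → (ℤ → B))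
    (q r : ℕ) (x : ℤ → A) : Prop :=
  ∀ y ∈ D, (∀ i : ℤ, -(q : ℤ) ≤ i → i ≤ (r : ℤ) → y i = x i) → φ y 0 = φ x 0

/-- A homomorphism `φ` with domain `D` is finitary if for almost every `x` in the domain
there are nonnegative integers `q`, `r` such that the coordinates `x_{-q}, …, x_r`
determine `(φ x)_0`. -/
def IsFinitary {A B : Type*} [MeasurableSpace A] [MeasurableSpace B]
    (μ : Measure (ℤ → A)) (D : Set (ℤ → A)) (φ : (ℤ → A) → (ℤ → B)) : Prop :=
  ∀ᵐ x ∂μ, x ∈ D → ∃ q r : ℕ, DeterminesAt D φ q r x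

/-- The code length `C(x) = q(x) + r(x)` with `q(x), r(x)` minimal such that the window
`[-q(x), r(x)]` determines the zero output coordinate (`⊤` if no finite window works). -/
def codeLength {A B : Type*} (D : Set (ℤ → A)) (φ : (ℤ → A) → (ℤ → B))
    (x : ℤ → A) : ℝ≥0∞ :=
  ⨅ (q : ℕ) (r : ℕ) (_ : DeterminesAt D φ q r x), ((q : ℝ≥0∞) + (r : ℝ≥0∞))

/-- `μ` is the Bernoulli (product) measure on `(ℤ → A)` given by the probability vector `p`. -/
def IsBernoulliMeasure {A : Type*} [MeasurableSpace A] (μ : Measure (ℤ → A)) (p : A → ℝ) : Prop :=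
  ∀ (F : Finset ℤ) (s : ℤ → A),
    μ {x | ∀ i ∈ F, x i = s i} = ENNReal.ofReal (∏ i ∈ F, p (s i))

/-- A strictly positive probability vector on a finite alphabet. -/
def IsProbVector {A : Type*} [Fintype A] (p : A → ℝ) : Prop :=
  (∀ i, 0 < p i) ∧ ∑ i, p i = 1

/-- The entropy `H(p) = -∑ p_i log p_i` of a probability vector. -/
def vecEntropy {A : Type*} [Fintype A] (p : A → ℝ) : ℝ := -∑ i, p i * Real.log (p i)

/-- A finitary isomorphism: a pair of mutually inverse finitary factor maps. -/
def IsFinitaryIsomorphism {A B : Type*} [MeasurableSpace A] [MeasurableSpace B]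
    (μ : Measure (ℤ → A)) (ν : Measure (ℤ → B))
    (D : Set (ℤ → A)) (E : Set (ℤ → B))
    (φ : (ℤ → A) → (ℤ → B)) (ψ : (ℤ → B) → (ℤ → A)) : Prop :=
  IsFactorMap μ ν D φ ∧ IsFactorMap ν μ E ψ ∧
  IsFinitary μ D φ ∧ IsFinitary ν E ψ ∧
  (∀ x ∈ D, φ x ∈ E ∧ ψ (φ x) = x) ∧ (∀ y ∈ E, ψ y ∈ D ∧ φ (ψ y) = y)

/-!
A law with `m` atoms can be split according to the value of one letter into conditional laws with
at most `card A + m - 1` atoms in all, hence the expected logarithm of the number of atoms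
decreases by a fixed amount: any law on a set `T` is simulated at an expected cost
`O(log (card T))`. If `H(q) < H(p)`, most words of length `n` of `p` are exponentially lighter than
most words of length `L = n + 1` of `q`, so that reading `n` letters settles the outcome but for an
exponentially small probability, and the word `q ^ L` is simulated at an expected cost less than
`L`.

A machine started at a time `t₀` cuts the sites into blocks of length at most `L` and, for each
completed block, puts the simulation of a word of law `q ^ L` on a stack; each letter of `x` is
handed to the most recent unfinished simulation. Letters arrive faster than they are consumed, so a
potential with negative drift shows that the times at which the stack is unfinished since a given
moment have summable probabilities. A block is also completed whenever `k` consecutive letters of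
`x` are equal to `a₀`. For large `k` this spoils only a small part of the drift, and since the most
recent blocks are served first, what comes after such a marker does not depend on the machine's
past: `t₀` can be sent to `-∞`, and the code length is controlled by the waiting times for a marker
and for an empty stack, both of finite expectation. Finally, the conditional probability that the
output agrees with a given word is a martingale, so that the output has law `q`.
-/

section Simulation

variable {A T : Type*} [Fintype A] [Fintype T]

/-- The number of atoms of a law on a finite set. -/
def suppCard (r : T → ℝ) : ℕ := (Finset.univ.filter fun y => r y ≠ 0).card

theorem suppCard_le_card (r : T → ℝ) : suppCard r ≤ Fintype.card T := Finset.card_le_univ _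

theorem suppCard_pos {r : T → ℝ} (hr : r ∈ stdSimplex ℝ T) : 0 < suppCard r := by
  obtain ⟨y, -, hy⟩ := Finset.exists_ne_zero_of_sum_ne_zero (hr.2.trans_ne one_ne_zero)
  exact Finset.card_pos.2 ⟨y, by simpa using hy⟩

theorem eq_single_of_forall_ne_zero [DecidableEq T] {r : T → ℝ} (hr : r ∈ stdSimplex ℝ T) {y : T}
    (h : ∀ z, r z ≠ 0 → z = y) : r = Pi.single y 1 := by
  have hne : ∀ z ≠ y, r z = 0 := fun z hz => not_not.1 (mt (h z) hz)
  refine funext fun z => ?_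
  rcases eq_or_ne z y with rfl | hz
  · rw [Pi.single_eq_same, ← hr.2, Fintype.sum_eq_single z hne]
  · rw [Pi.single_eq_of_ne hz, hne z hz]

theorem exists_eq_single_of_suppCard_le_one [DecidableEq T] {r : T → ℝ} (hr : r ∈ stdSimplex ℝ T)
    (h : suppCard r ≤ 1) : ∃ y, r = Pi.single y 1 := by
  obtain ⟨y, hy⟩ := Finset.card_eq_one.1 (h.antisymm (suppCard_pos hr))
  exact ⟨y, eq_single_of_forall_ne_zero hr fun z hz =>
    Finset.mem_singleton.1 (hy ▸ Finset.mem_filter_univ z |>.2 hz)⟩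

/-- A sequential procedure reading letters of law `p`, one at a time. After the word `w` has been
read, `law w` is the conditional law of the result, `out w` is the result once it is known, and
`pot w` bounds the expected number of letters still to be read. -/
structure IsSimulator [DecidableEq T] (p : A → ℝ) (law : List A → T → ℝ) (pot : List A → ℝ)
    (out : List A → Option T) : Prop where
  law_mem : ∀ w, law w ∈ stdSimplex ℝ T
  law_step : ∀ w, out w = none → ∀ y, ∑ a, p a * law (w ++ [a]) y = law w y
  law_done : ∀ w y, out w = some y → law w = Pi.single y 1
  pot_nonneg : ∀ w, 0 ≤ pot w
  pot_step : ∀ w, out w = none → ∑ a, p a * pot (w ++ [a]) + 1 ≤ pot w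

/-- The law `r` can be simulated from letters of law `p` with at most `c` letters on average. -/
def SimulableWithin [DecidableEq T] (p : A → ℝ) (r : T → ℝ) (c : ℝ) : Prop :=
  ∃ law pot out, IsSimulator p law pot out ∧ law [] = r ∧ pot [] ≤ c

theorem IsProbVector.sum_mul_mem_stdSimplex {p : A → ℝ} (hp : IsProbVector p)
    {r : A → T → ℝ} (hr : ∀ a, r a ∈ stdSimplex ℝ T) :
    (fun y => ∑ a, p a * r a y) ∈ stdSimplex ℝ T := by
  refine ⟨fun y => Finset.sum_nonneg fun a _ => mul_nonneg (hp.1 a).le ((hr a).1 y), ?_⟩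
  rw [Finset.sum_comm]
  simp [← Finset.mul_sum, (hr _).2, hp.2]

section Basic

variable [DecidableEq T] {p : A → ℝ}

theorem SimulableWithin.mono {r : T → ℝ} {c d : ℝ} (h : SimulableWithin p r c) (hcd : c ≤ d) :
    SimulableWithin p r d := by
  obtain ⟨law, pot, out, hsim, hlaw, hpot⟩ := h
  exact ⟨law, pot, out, hsim, hlaw, hpot.trans hcd⟩

theorem simulableWithin_single (p : A → ℝ) (y : T) : SimulableWithin p (Pi.single y 1) 0 := by
  refine ⟨fun _ => Pi.single y 1, fun _ => 0, fun _ => some y, ?_, rfl, le_rfl⟩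
  exact ⟨fun _ => single_mem_stdSimplex ℝ y, by simp, by rintro _ z ⟨⟩; rfl, by simp, by simp⟩

theorem SimulableWithin.cons (hp : IsProbVector p) {r : A → T → ℝ} {c : A → ℝ}
    (h : ∀ a, SimulableWithin p (r a) (c a)) :
    SimulableWithin p (fun y => ∑ a, p a * r a y) (∑ a, p a * c a + 1) := by
  choose law pot out hsim hlaw hpot using h
  refine ⟨fun | [] => fun y => ∑ a, p a * r a y | a :: w => law a w,
    fun | [] => ∑ a, p a * c a + 1 | a :: w => pot a w,
    fun | [] => none | a :: w => out a w, ⟨?_, ?_, ?_, ?_, ?_⟩, rfl, le_rfl⟩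
  · rintro (_ | ⟨a, w⟩)
    · exact hp.sum_mul_mem_stdSimplex fun a => hlaw a ▸ (hsim a).law_mem []
    · exact (hsim a).law_mem w
  · rintro (_ | ⟨a, w⟩) hw y
    · simp [hlaw]
    · exact (hsim a).law_step w hw y
  · rintro (_ | ⟨a, w⟩) y hw
    · simp at hw
    · exact (hsim a).law_done w y hw
  · rintro (_ | ⟨a, w⟩)
    · have hc : ∀ a, 0 ≤ p a * c a := fun a =>
        mul_nonneg (hp.1 a).le (((hsim a).pot_nonneg []).trans (hpot a))
      exact add_nonneg (Finset.sum_nonneg fun a _ => hc a) zero_le_one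
    · exact (hsim a).pot_nonneg w
  · rintro (_ | ⟨a, w⟩) hw
    · simp only [List.nil_append, add_le_add_iff_right]
      exact Finset.sum_le_sum fun a _ => mul_le_mul_of_nonneg_left (hpot a) (hp.1 a).le
    · exact (hsim a).pot_step w hw

theorem sum_prod_mul_eq_sum_cons {n : ℕ} (f : (Fin (n + 1) → A) → ℝ) :
    ∑ u, (∏ i, p (u i)) * f u =
      ∑ a, p a * ∑ v : Fin n → A, (∏ i, p (v i)) * f (Fin.cons a v) := by
  rw [← (Fin.consEquiv fun _ => A).sum_comp, Fintype.sum_prod_type]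
  simp [Fin.consEquiv, Fin.prod_univ_succ, Finset.mul_sum, mul_assoc]

theorem SimulableWithin.words (hp : IsProbVector p) :
    ∀ {n : ℕ} {r : (Fin n → A) → T → ℝ} {c : (Fin n → A) → ℝ},
      (∀ u, SimulableWithin p (r u) (c u)) →
      SimulableWithin p (fun y => ∑ u, (∏ i, p (u i)) * r u y) (∑ u, (∏ i, p (u i)) * c u + n)
  | 0, r, c, h => by simpa using h default
  | n + 1, r, c, h => by
    have key := SimulableWithin.cons hp fun a => SimulableWithin.words hp fun v => h (Fin.cons a v)
    simp only [sum_prod_mul_eq_sum_cons]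
    refine key.mono (le_of_eq ?_)
    simp only [mul_add, Finset.sum_add_distrib, ← Finset.sum_mul, hp.2]
    push_cast
    ring

theorem simulableWithin_of_potential {V : (T → ℝ) → ℝ} (hV : ∀ r ∈ stdSimplex ℝ T, 0 ≤ V r)
    (hstep : ∀ r ∈ stdSimplex ℝ T, (∃ y, r = Pi.single y 1) ∨
      ∃ r' : A → T → ℝ, (∀ a, r' a ∈ stdSimplex ℝ T) ∧ (∀ y, ∑ a, p a * r' a y = r y) ∧
        ∑ a, p a * V (r' a) + 1 ≤ V r)
    {r : T → ℝ} (hr : r ∈ stdSimplex ℝ T) : SimulableWithin p r (V r) := by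
  classical
  have hnext : ∀ r : stdSimplex ℝ T, ∃ r' : A → stdSimplex ℝ T, (¬∃ y, r.1 = Pi.single y 1) →
      (∀ y, ∑ a, p a * (r' a).1 y = r.1 y) ∧ ∑ a, p a * V (r' a).1 + 1 ≤ V r.1 := by
    rintro ⟨r, hr⟩
    rcases hstep r hr with hy | ⟨r', hr', h⟩
    · exact ⟨fun _ => ⟨r, hr⟩, fun h => absurd hy h⟩
    · exact ⟨fun a => ⟨r' a, hr' a⟩, fun _ => h⟩
  choose next hnext using hnext
  let state : List A → stdSimplex ℝ T := fun w => w.foldl next ⟨r, hr⟩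
  have hstate : ∀ w a, state (w ++ [a]) = next (state w) a := fun w a => by simp [state]
  let out : List A → Option T := fun w =>
    if h : ∃ y, (state w).1 = Pi.single y 1 then some h.choose else none
  have hout : ∀ w, out w = none → ¬∃ y, (state w).1 = Pi.single y 1 := fun w hw h => by
    simp [out, dif_pos h] at hw
  refine ⟨fun w => (state w).1, fun w => V (state w).1, out, ⟨fun w => (state w).2, ?_, ?_,
    fun w => hV _ (state w).2, ?_⟩, rfl, le_rfl⟩
  · intro w hw
    simpa only [hstate] using (hnext _ (hout w hw)).1
  · intro w y hy
    simp only [out] at hy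
    split_ifs at hy with h
    rw [← Option.some.inj hy]
    exact h.choose_spec
  · intro w hw
    simpa only [hstate] using (hnext _ (hout w hw)).2

end Basic

section SparseCoupling

theorem exists_split {r : T → ℝ} (hr : ∀ y, 0 ≤ r y) {c : ℝ} (hc : 0 ≤ c) (hcr : c ≤ ∑ y, r y) :
    ∃ r₁ : T → ℝ, (∀ y, 0 ≤ r₁ y) ∧ (∀ y, r₁ y ≤ r y) ∧ ∑ y, r₁ y = c ∧
      suppCard r₁ + suppCard (r - r₁) ≤ suppCard r + 1 := by
  classical
  obtain ⟨S, hSc : ∑ y ∈ S, r y ≤ c, hmax⟩ :=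
    (Set.toFinite {S : Finset T | ∑ y ∈ S, r y ≤ c}).exists_maximal ⟨∅, by simpa using hc⟩
  by_cases hS : S = Finset.univ
  · exact ⟨r, hr, fun _ => le_rfl, (hS ▸ hSc).antisymm hcr, by simp [suppCard]⟩
  obtain ⟨t, ht⟩ : ∃ t, t ∉ S := by simpa [Finset.eq_univ_iff_forall] using hS
  have hct : c < r t + ∑ y ∈ S, r y := by
    by_contra! h
    exact ht (hmax (show ∑ y ∈ insert t S, r y ≤ c by rwa [Finset.sum_insert ht])
      (Finset.subset_insert t S) (Finset.mem_insert_self t S))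
  let r₁ : T → ℝ := fun y => if y ∈ S then r y else if y = t then c - ∑ y ∈ S, r y else 0
  have hr₁S : ∀ y ∈ S, r₁ y = r y := fun y hy => if_pos hy
  have hr₁t : r₁ t = c - ∑ y ∈ S, r y := by simp [r₁, ht]
  have hr₁0 : ∀ y ∉ S, y ≠ t → r₁ y = 0 := fun y hy hyt => by simp [r₁, hy, hyt]
  refine ⟨r₁, fun y => ?_, fun y => ?_, ?_, ?_⟩
  · grind
  · grind
  · have hsum : ∀ y ∉ insert t S, r₁ y = 0 := by grind
    rw [← Finset.sum_subset (Finset.subset_univ (insert t S)) fun y _ => hsum y,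
      Finset.sum_insert ht, Finset.sum_congr rfl hr₁S, hr₁t, sub_add_cancel]
  · have hsupp : (Finset.univ.filter fun y => r₁ y ≠ 0) ⊆
        insert t ((Finset.univ.filter fun y => r y ≠ 0).filter (· ∈ S)) := fun y => by
      simp only [Finset.mem_filter, Finset.mem_insert]
      grind
    have hsupp' : (Finset.univ.filter fun y => (r - r₁) y ≠ 0) ⊆
        (Finset.univ.filter fun y => r y ≠ 0).filter (· ∉ S) := fun y => by
      simp only [Finset.mem_filter, Pi.sub_apply]
      grind
    have hcard := (Finset.card_le_card hsupp).trans (Finset.card_insert_le _ _)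
    have hcard' := Finset.card_le_card hsupp'
    have hsplit := Finset.card_filter_add_card_filter_not
      (s := Finset.univ.filter fun y => r y ≠ 0) (· ∈ S)
    simp only [suppCard]
    omega

variable {I : Type*} {P : I → ℝ}

theorem exists_sparse_coupling_on (hP : ∀ i, 0 ≤ P i) {S : Finset I}
    (hS : S.Nonempty) : ∀ {r : T → ℝ}, (∀ y, 0 ≤ r y) → ∑ y, r y = ∑ i ∈ S, P i →
      ∃ κ : I → T → ℝ, (∀ i ∈ S, ∀ y, 0 ≤ κ i y) ∧ (∀ i ∈ S, ∑ y, κ i y = P i) ∧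
        (∀ y, ∑ i ∈ S, κ i y = r y) ∧ ∑ i ∈ S, suppCard (κ i) + 1 ≤ S.card + suppCard r := by
  classical
  induction hS using Finset.Nonempty.cons_induction with
  | singleton i =>
    intro r hr hsum
    exact ⟨fun _ => r, fun _ _ => hr, by simpa using hsum, by simp, by simp [add_comm]⟩
  | cons i S hi _ ih =>
    intro r hr hsum
    rw [Finset.sum_cons] at hsum
    obtain ⟨r₁, hr₁, hr₁r, hr₁sum, hr₁supp⟩ := exists_split hr (hP i)
      (hsum ▸ le_add_of_nonneg_right (Finset.sum_nonneg fun j _ => hP j))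
    obtain ⟨κ, hκ, hκP, hκr, hκsupp⟩ := ih (r := r - r₁) (fun y => sub_nonneg.2 (hr₁r y)) (by
      simp only [Pi.sub_apply, Finset.sum_sub_distrib, hr₁sum, hsum, add_sub_cancel_left])
    have hupdate : ∀ j ∈ S, Function.update κ i r₁ j = κ j := fun j hj =>
      Function.update_of_ne (ne_of_mem_of_not_mem hj hi) _ _
    refine ⟨Function.update κ i r₁, ?_, ?_, fun y => ?_, ?_⟩
    · simpa +contextual [hupdate] using ⟨hr₁, hκ⟩
    · simpa +contextual [hupdate] using ⟨hr₁sum, hκP⟩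
    · rw [Finset.sum_cons, Finset.sum_congr rfl fun j hj => by rw [hupdate j hj], hκr]
      simp
    · rw [Finset.sum_cons, Finset.sum_congr rfl fun j hj => by rw [hupdate j hj]]
      simp only [Function.update_self, Finset.card_cons]
      omega

theorem exists_sparse_disintegration [Fintype I] (hP : IsProbVector P) {r : T → ℝ}
    (hr : r ∈ stdSimplex ℝ T) :
    ∃ κ : I → T → ℝ, (∀ i, κ i ∈ stdSimplex ℝ T) ∧ (∀ y, ∑ i, P i * κ i y = r y) ∧
      ∑ i, suppCard (κ i) + 1 ≤ Fintype.card I + suppCard r := by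
  classical
  have hI : (Finset.univ : Finset I).Nonempty :=
    Finset.nonempty_of_sum_ne_zero (hP.2.trans_ne one_ne_zero)
  obtain ⟨κ, hκ, hκP, hκr, hκsupp⟩ :=
    exists_sparse_coupling_on (fun i => (hP.1 i).le) hI hr.1 (hr.2.trans hP.2.symm)
  refine ⟨fun i y => κ i y / P i, fun i => ⟨fun y => ?_, ?_⟩, fun y => ?_, ?_⟩
  · exact div_nonneg (hκ i (Finset.mem_univ i) y) (hP.1 i).le
  · rw [← Finset.sum_div, hκP i (Finset.mem_univ i), div_self (hP.1 i).ne']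
  · simp only [mul_div_cancel₀ _ (hP.1 _).ne', hκr]
  · simpa [suppCard, (hP.1 _).ne'] using hκsupp

end SparseCoupling

section Logarithmic

variable {p : A → ℝ}

theorem IsProbVector.sum_mul_log_le {s : A → ℝ} {m b : ℝ} (hp : IsProbVector p)
    (hb : ∀ a, p a ≤ b) (hb1 : b ≤ 1) (hm : 2 ≤ m) (hs : ∀ a, 1 ≤ s a)
    (hsum : ∑ a, s a + 1 ≤ Fintype.card A + m) :
    ∑ a, p a * Real.log (s a) ≤ Real.log m - (1 - b) / 2 := by
  have hb0 : 0 ≤ b := by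
    obtain ⟨a, -, -⟩ := Finset.exists_ne_zero_of_sum_ne_zero (hp.2.trans_ne one_ne_zero)
    exact (hp.1 a).le.trans (hb a)
  have hterm : ∀ a, p a * Real.log (s a) ≤
      p a * (Real.log m + (1 / m - 1)) + b / m * (s a - 1) := fun a => by
    have hsa : 0 < s a := one_pos.trans_le (hs a)
    have hlog : Real.log (s a) ≤ Real.log m + (s a / m - 1) := by
      have := Real.log_le_sub_one_of_pos (x := s a / m) (by positivity)
      rw [Real.log_div hsa.ne' (by positivity)] at this
      linarith
    calc p a * Real.log (s a) ≤ p a * (Real.log m + (s a / m - 1)) :=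
          mul_le_mul_of_nonneg_left hlog (hp.1 a).le
      _ = p a * (Real.log m + (1 / m - 1)) + p a / m * (s a - 1) := by ring
      _ ≤ _ := by
          have := hs a
          have := hb a
          gcongr
  calc ∑ a, p a * Real.log (s a)
      ≤ ∑ a, (p a * (Real.log m + (1 / m - 1)) + b / m * (s a - 1)) :=
        Finset.sum_le_sum fun a _ => hterm a
    _ = Real.log m + (1 / m - 1) + b / m * (∑ a, s a - Fintype.card A) := by
        simp [Finset.sum_add_distrib, ← Finset.sum_mul, ← Finset.mul_sum, hp.2]
    _ ≤ Real.log m + (1 / m - 1) + b / m * (m - 1) := by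
        gcongr _ + b / m * ?_
        linarith
    _ = Real.log m - (1 - b) * (1 - 1 / m) := by
        field_simp
        ring
    _ ≤ Real.log m - (1 - b) * (1 - 1 / 2) := by
        gcongr
    _ = Real.log m - (1 - b) / 2 := by ring

theorem simulableWithin_log [DecidableEq T] {b : ℝ} (hp : IsProbVector p) (hb : ∀ a, p a ≤ b)
    (hb1 : b < 1) {r : T → ℝ} (hr : r ∈ stdSimplex ℝ T) :
    SimulableWithin p r (2 / (1 - b) * Real.log (Fintype.card T)) := by
  have hb1' : 0 < 1 - b := sub_pos.2 hb1
  have hlog : ∀ r : T → ℝ, 0 ≤ 2 / (1 - b) * Real.log (suppCard r) := fun r =>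
    mul_nonneg (by positivity) (Real.log_natCast_nonneg _)
  refine (simulableWithin_of_potential (V := fun r => 2 / (1 - b) * Real.log (suppCard r))
    (fun r _ => hlog r) (fun r hr => ?_) hr).mono ?_
  · rcases le_or_gt (suppCard r) 1 with h1 | h2
    · exact Or.inl (exists_eq_single_of_suppCard_le_one hr h1)
    obtain ⟨κ, hκ, hκr, hκsupp⟩ := exists_sparse_disintegration hp hr
    have hdrop := hp.sum_mul_log_le (s := fun a => (suppCard (κ a) : ℝ)) (m := suppCard r) hb
      hb1.le (by exact_mod_cast h2) (fun a => by exact_mod_cast suppCard_pos (hκ a))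
      (by exact_mod_cast hκsupp)
    refine Or.inr ⟨κ, hκ, hκr, ?_⟩
    calc ∑ a, p a * (2 / (1 - b) * Real.log (suppCard (κ a))) + 1
        = 2 / (1 - b) * ∑ a, p a * Real.log (suppCard (κ a)) + 1 := by
          simp only [Finset.mul_sum, mul_left_comm]
      _ ≤ 2 / (1 - b) * (Real.log (suppCard r) - (1 - b) / 2) + 1 := by gcongr
      _ = 2 / (1 - b) * Real.log (suppCard r) := by
          field_simp
          ring
  · have : (0 : ℝ) < suppCard r := by exact_mod_cast suppCard_pos hr
    have : (suppCard r : ℝ) ≤ Fintype.card T := by exact_mod_cast suppCard_le_card r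
    gcongr

end Logarithmic

section MostlyPointMasses

variable {U : Type*} [Fintype U] {P : U → ℝ}

theorem exists_lift_disintegration {T' : Type*} [Fintype T'] [DecidableEq T']
    (hP : IsProbVector P) {Q : T → ℝ} (hQ : ∀ y, 0 ≤ Q y) (f : T → T') {κ : U → T' → ℝ}
    (hκ : ∀ u, κ u ∈ stdSimplex ℝ T') (hκQ : ∀ z, ∑ u, P u * κ u z = ∑ y with f y = z, Q y) :
    ∃ r : U → T → ℝ, (∀ u, r u ∈ stdSimplex ℝ T) ∧ (∀ y, ∑ u, P u * r u y = Q y) ∧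
      ∀ u y, r u y ≠ 0 → κ u (f y) ≠ 0 := by
  let Q' : T' → ℝ := fun z => ∑ y with f y = z, Q y
  have hQ' : ∀ z, 0 ≤ Q' z := fun z => Finset.sum_nonneg fun y _ => hQ y
  have hcancel : ∀ u z, κ u z * (Q' z / Q' z) = κ u z := fun u z => by
    rcases eq_or_ne (Q' z) 0 with hz | hz
    · have hsum : ∑ u, P u * κ u z = 0 := (hκQ z).trans hz
      rw [Finset.sum_eq_zero_iff_of_nonneg fun u _ => mul_nonneg (hP.1 u).le ((hκ u).1 z)] at hsum
      simp [(mul_eq_zero_iff_left (hP.1 u).ne').1 (hsum u (Finset.mem_univ u))]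
    · rw [div_self hz, mul_one]
  refine ⟨fun u y => κ u (f y) * (Q y / Q' (f y)), fun u => ⟨fun y => ?_, ?_⟩, fun y => ?_,
    fun u y => left_ne_zero_of_mul⟩
  · exact mul_nonneg ((hκ u).1 _) (div_nonneg (hQ y) (hQ' _))
  · rw [← (hκ u).2, ← Finset.sum_fiberwise Finset.univ f]
    refine Finset.sum_congr rfl fun z _ => ?_
    rw [← hcancel u z, Finset.sum_div, Finset.mul_sum]
    exact Finset.sum_congr rfl fun y hy => by simp only [(Finset.mem_filter.1 hy).2]
  · simp only [← mul_assoc, ← Finset.sum_mul, hκQ]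
    refine mul_div_cancel_of_imp' fun h => ?_
    exact (Finset.sum_eq_zero_iff_of_nonneg fun y _ => hQ y).1 h y (by simp)

theorem suppCard_sub_one_mul_le {Q : Option T → ℝ} (hQ : Q ∈ stdSimplex ℝ (Option T)) {W : ℝ}
    (hW : 0 ≤ W) (h : ∀ y, Q (some y) ≠ 0 → W ≤ Q (some y)) : ((suppCard Q : ℝ) - 1) * W ≤ 1 := by
  have hcard : suppCard Q ≤ (Finset.univ.filter fun y => Q (some y) ≠ 0).card + 1 := by
    simp only [suppCard, Finset.card_filter, Fintype.sum_option]
    grind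
  calc ((suppCard Q : ℝ) - 1) * W
      ≤ (Finset.univ.filter fun y => Q (some y) ≠ 0).card * W := by
        gcongr
        rw [sub_le_iff_le_add]
        exact_mod_cast hcard
    _ ≤ ∑ y with Q (some y) ≠ 0, Q (some y) := by
        rw [← nsmul_eq_mul]
        exact Finset.card_nsmul_le_sum _ _ _ fun y hy => h y (Finset.mem_filter.1 hy).2
    _ ≤ ∑ y, Q (some y) := Finset.sum_le_univ_sum_of_nonneg fun y => hQ.1 _
    _ ≤ 1 := by
        rw [← hQ.2, Fintype.sum_option]
        exact le_add_of_nonneg_left (hQ.1 none)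

theorem sum_suppCard_sub_one_le {κ : U → T → ℝ} {m : ℕ}
    (h : ∑ u, suppCard (κ u) + 1 ≤ Fintype.card U + m) :
    ∑ u, ((suppCard (κ u) : ℝ) - 1) ≤ m - 1 := by
  have : ∑ u, (suppCard (κ u) : ℝ) + 1 ≤ Fintype.card U + m := by exact_mod_cast h
  simp only [Finset.sum_sub_distrib, Finset.sum_const, Finset.card_univ, nsmul_eq_mul, mul_one]
  linarith

open scoped Classical in
theorem sum_filter_not_single_le [DecidableEq T] (hP : IsProbVector P)
    {κ : U → Option T → ℝ}
    (hκ : ∀ u, κ u ∈ stdSimplex ℝ (Option T)) {ω : ℝ} (hω : 0 ≤ ω) :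
    ∑ u with ¬∃ y, κ u = Pi.single (some y) 1, P u ≤
      ∑ u with ω < P u, P u + ∑ u, P u * κ u none + ω * ∑ u, ((suppCard (κ u) : ℝ) - 1) := by
  rw [Finset.sum_filter, Finset.sum_filter, Finset.mul_sum, ← Finset.sum_add_distrib,
    ← Finset.sum_add_distrib]
  refine Finset.sum_le_sum fun u _ => ?_
  have hPu := hP.1 u
  have hnone : 0 ≤ P u * κ u none := mul_nonneg hPu.le ((hκ u).1 none)
  have hsupp : (1 : ℝ) ≤ suppCard (κ u) := by exact_mod_cast suppCard_pos (hκ u)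
  have hsupp' : 0 ≤ ω * ((suppCard (κ u) : ℝ) - 1) := mul_nonneg hω (by linarith)
  split_ifs with hsingle hlarge hlarge
  · linarith
  · linarith
  · linarith
  · rcases le_or_gt (suppCard (κ u)) 1 with h1 | h2
    · obtain ⟨_ | y, ho⟩ := exists_eq_single_of_suppCard_le_one (hκ u) h1
      · have : κ u none = 1 := by rw [ho, Pi.single_eq_same]
        rw [this]
        linarith
      · exact absurd ⟨y, ho⟩ hsingle
    · have : (2 : ℝ) ≤ suppCard (κ u) := by exact_mod_cast h2
      nlinarith

open scoped Classical in
theorem exists_mostly_single_disintegration [DecidableEq T] (hP : IsProbVector P) {Q : T → ℝ}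
    (hQ : Q ∈ stdSimplex ℝ T) {ω W : ℝ} (hω : 0 ≤ ω) (hW : 0 < W) :
    ∃ r : U → T → ℝ, (∀ u, r u ∈ stdSimplex ℝ T) ∧ (∀ y, ∑ u, P u * r u y = Q y) ∧
      ∑ u with ¬∃ y, r u = Pi.single y 1, P u ≤
        ∑ u with ω < P u, P u + ∑ y with Q y < W, Q y + ω / W := by
  -- The atoms of `Q` lighter than `W` are lumped into the single atom `none`.
  let f : T → Option T := fun y => if Q y < W then none else some y
  have hf : ∀ y z, f y = some z ↔ y = z ∧ W ≤ Q y := by grind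
  have hf_none : ∀ y, f y = none ↔ Q y < W := by grind
  let Q' : Option T → ℝ := fun z => ∑ y with f y = z, Q y
  have hQ' : Q' ∈ stdSimplex ℝ (Option T) :=
    ⟨fun z => Finset.sum_nonneg fun y _ => hQ.1 y, (Finset.sum_fiberwise _ f Q).trans hQ.2⟩
  have hQ'_some : ∀ y, Q' (some y) ≠ 0 → W ≤ Q' (some y) := fun y hy => by
    obtain ⟨z, hz, -⟩ := Finset.exists_ne_zero_of_sum_ne_zero hy
    obtain ⟨rfl, hW⟩ := (hf z y).1 (Finset.mem_filter.1 hz).2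
    exact hW.trans (Finset.single_le_sum (fun y _ => hQ.1 y) hz)
  obtain ⟨κ, hκ, hκQ, hκsupp⟩ := exists_sparse_disintegration hP hQ'
  obtain ⟨r, hr, hrQ, hrκ⟩ := exists_lift_disintegration hP hQ.1 f hκ hκQ
  have hsingle : ∀ u, (∃ y, κ u = Pi.single (some y) 1) → ∃ y, r u = Pi.single y 1 := by
    rintro u ⟨z, hz⟩
    refine ⟨z, eq_single_of_forall_ne_zero (hr u) fun y hy => ?_⟩
    have hfy : f y = some z := by
      by_contra h
      exact hrκ u y hy (by simp [hz, h])
    exact ((hf y z).1 hfy).1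
  have hsum : ∑ u, ((suppCard (κ u) : ℝ) - 1) ≤ 1 / W := by
    rw [le_div_iff₀ hW]
    refine le_trans ?_ (suppCard_sub_one_mul_le hQ' hW.le hQ'_some)
    gcongr
    exact sum_suppCard_sub_one_le hκsupp
  refine ⟨r, hr, hrQ, ?_⟩
  calc ∑ u with ¬∃ y, r u = Pi.single y 1, P u
      ≤ ∑ u with ¬∃ y, κ u = Pi.single (some y) 1, P u :=
        Finset.sum_le_sum_of_subset_of_nonneg
          (Finset.monotone_filter_right _ fun u _ h h' => h (hsingle u h'))
          fun u _ _ => (hP.1 u).le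
    _ ≤ ∑ u with ω < P u, P u + ∑ u, P u * κ u none + ω * ∑ u, ((suppCard (κ u) : ℝ) - 1) :=
        sum_filter_not_single_le hP hκ hω
    _ ≤ ∑ u with ω < P u, P u + ∑ y with Q y < W, Q y + ω / W := by
        rw [hκQ none, div_eq_mul_one_div ω W]
        simp only [Q', hf_none]
        gcongr

end MostlyPointMasses

end Simulation

section EntropyGap

variable {A B : Type*} [Fintype A] [Fintype B]

theorem IsProbVector.words {p : A → ℝ} (hp : IsProbVector p) (n : ℕ) :
    IsProbVector fun u : Fin n → A => ∏ i, p (u i) := by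
  refine ⟨fun u => Finset.prod_pos fun i _ => hp.1 _, ?_⟩
  simpa [hp.2] using (Fintype.prod_sum fun (_ : Fin n) a => p a).symm

theorem IsProbVector.mem_stdSimplex {p : A → ℝ} (hp : IsProbVector p) : p ∈ stdSimplex ℝ A :=
  ⟨fun a => (hp.1 a).le, hp.2⟩

theorem IsProbVector.exists_sum_mul_exp_lt_one {p f : A → ℝ} (hp : IsProbVector p)
    (hf : ∑ a, p a * f a < 0) : ∃ s > 0, ∑ a, p a * Real.exp (s * f a) < 1 := by
  have hderiv : HasDerivAt (fun s => ∑ a, p a * Real.exp (s * f a)) (∑ a, p a * f a) 0 := by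
    refine HasDerivAt.fun_sum fun a _ => ?_
    simpa using (((hasDerivAt_id (0 : ℝ)).mul_const (f a)).exp).const_mul (p a)
  obtain ⟨s, hslope, hs⟩ :=
    ((hderiv.tendsto_slope_zero_right.eventually (gt_mem_nhds hf)).and self_mem_nhdsWithin).exists
  refine ⟨s, hs, ?_⟩
  rw [smul_eq_mul, ← div_eq_inv_mul, div_lt_iff₀ hs, zero_mul, sub_neg] at hslope
  simpa [hp.2] using hslope

theorem IsProbVector.exists_sum_prod_le_pow {p f : A → ℝ} (hp : IsProbVector p)
    (hf : ∑ a, p a * f a < 0) : ∃ c : ℝ, 0 ≤ c ∧ c < 1 ∧ ∀ n : ℕ,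
      ∑ u : Fin n → A with 0 ≤ ∑ i, f (u i), ∏ i, p (u i) ≤ c ^ n := by
  obtain ⟨s, hs, hs1⟩ := hp.exists_sum_mul_exp_lt_one hf
  have hterm : ∀ a, 0 ≤ p a * Real.exp (s * f a) := fun a =>
    mul_nonneg (hp.1 a).le (Real.exp_nonneg _)
  refine ⟨_, Finset.sum_nonneg fun a _ => hterm a, hs1, fun n => ?_⟩
  calc ∑ u : Fin n → A with 0 ≤ ∑ i, f (u i), ∏ i, p (u i)
      ≤ ∑ u : Fin n → A with 0 ≤ ∑ i, f (u i), ∏ i, p (u i) * Real.exp (s * f (u i)) := by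
        refine Finset.sum_le_sum fun u hu => ?_
        rw [Finset.prod_mul_distrib, ← Real.exp_sum, ← Finset.mul_sum]
        exact le_mul_of_one_le_right (Finset.prod_nonneg fun i _ => (hp.1 _).le)
          (Real.one_le_exp (mul_nonneg hs.le (Finset.mem_filter.1 hu).2))
    _ ≤ ∑ u : Fin n → A, ∏ i, p (u i) * Real.exp (s * f (u i)) :=
        Finset.sum_le_univ_sum_of_nonneg fun u => Finset.prod_nonneg fun i _ => hterm _
    _ = (∑ a, p a * Real.exp (s * f a)) ^ n := by
        simpa using (Fintype.prod_sum fun (_ : Fin n) a => p a * Real.exp (s * f a)).symm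

theorem IsProbVector.log_prod {p : A → ℝ} (hp : IsProbVector p) {n : ℕ} (u : Fin n → A) :
    Real.log (∏ i, p (u i)) = ∑ i, Real.log (p (u i)) :=
  Real.log_prod fun _ _ => (hp.1 _).ne'

theorem IsProbVector.exists_sum_heavy_words_le_pow {p : A → ℝ} (hp : IsProbVector p) {h : ℝ}
    (hh : h < vecEntropy p) : ∃ c : ℝ, 0 ≤ c ∧ c < 1 ∧ ∀ n : ℕ,
      ∑ u : Fin n → A with Real.exp (-(n * h)) < ∏ i, p (u i), ∏ i, p (u i) ≤ c ^ n := by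
  obtain ⟨c, hc0, hc1, hc⟩ := hp.exists_sum_prod_le_pow (f := fun a => Real.log (p a) + h) (by
    simp only [mul_add, Finset.sum_add_distrib, ← Finset.sum_mul, hp.2]
    rw [vecEntropy] at hh
    linarith)
  refine ⟨c, hc0, hc1, fun n => (Finset.sum_le_sum_of_subset_of_nonneg
    (Finset.monotone_filter_right _ fun u _ hu => ?_) fun u _ _ => ((hp.words n).1 u).le).trans
    (hc n)⟩
  have := (Real.lt_log_iff_exp_lt ((hp.words n).1 u)).2 hu
  rw [hp.log_prod] at this
  simp only [Finset.sum_add_distrib, Finset.sum_const, Finset.card_fin, nsmul_eq_mul]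
  linarith

theorem IsProbVector.exists_sum_light_words_le_pow {p : A → ℝ} (hp : IsProbVector p) {h : ℝ}
    (hh : vecEntropy p < h) : ∃ c : ℝ, 0 ≤ c ∧ c < 1 ∧ ∀ n : ℕ,
      ∑ u : Fin n → A with ∏ i, p (u i) < Real.exp (-(n * h)), ∏ i, p (u i) ≤ c ^ n := by
  obtain ⟨c, hc0, hc1, hc⟩ := hp.exists_sum_prod_le_pow (f := fun a => -(Real.log (p a) + h)) (by
    simp only [mul_neg, mul_add, Finset.sum_neg_distrib, Finset.sum_add_distrib, ← Finset.sum_mul,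
      hp.2]
    rw [vecEntropy] at hh
    linarith)
  refine ⟨c, hc0, hc1, fun n => (Finset.sum_le_sum_of_subset_of_nonneg
    (Finset.monotone_filter_right _ fun u _ hu => ?_) fun u _ _ => ((hp.words n).1 u).le).trans
    (hc n)⟩
  have := (Real.log_lt_iff_lt_exp ((hp.words n).1 u)).2 hu
  rw [hp.log_prod] at this
  simp only [Finset.sum_neg_distrib, Finset.sum_add_distrib, Finset.sum_const, Finset.card_fin,
    nsmul_eq_mul]
  linarith

theorem simulableWithin_of_heavy_of_light {T : Type*} [Fintype T] [DecidableEq T] {p : A → ℝ}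
    (hp : IsProbVector p) {b : ℝ} (hb : ∀ a, p a ≤ b) (hb1 : b < 1) {Q : T → ℝ}
    (hQ : Q ∈ stdSimplex ℝ T) (n : ℕ) {ω W : ℝ} (hω : 0 ≤ ω) (hW : 0 < W) :
    SimulableWithin p Q ((∑ u : Fin n → A with ω < ∏ i, p (u i), ∏ i, p (u i) +
      ∑ y with Q y < W, Q y + ω / W) * (2 / (1 - b) * Real.log (Fintype.card T)) + n) := by
  classical
  obtain ⟨r, hr, hrQ, hbad⟩ := exists_mostly_single_disintegration (hp.words n) hQ hω hW
  let K := 2 / (1 - b) * Real.log (Fintype.card T)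
  have hK : 0 ≤ K :=
    mul_nonneg (div_nonneg zero_le_two (sub_pos.2 hb1).le) (Real.log_natCast_nonneg _)
  have hsim : ∀ u, SimulableWithin p (r u) (if ¬∃ y, r u = Pi.single y 1 then K else 0) := by
    intro u
    by_cases hu : ∃ y, r u = Pi.single y 1
    · obtain ⟨y, hy⟩ := hu
      rw [if_neg (not_not.2 ⟨y, hy⟩), hy]
      exact simulableWithin_single p y
    · rw [if_pos hu]
      exact simulableWithin_log hp hb hb1 (hr u)
  have hwords := SimulableWithin.words hp hsim
  simp only [hrQ, mul_ite, mul_zero, ← Finset.sum_filter, ← Finset.sum_mul] at hwords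
  refine hwords.mono ?_
  gcongr

theorem tendsto_succ_mul_const_pow_of_lt_one {c : ℝ} (hc : 0 ≤ c) (hc1 : c < 1) :
    Tendsto (fun n : ℕ => ((n : ℝ) + 1) * c ^ n) atTop (nhds 0) := by
  simpa [add_mul] using (tendsto_self_mul_const_pow_of_lt_one hc hc1).add
    (tendsto_pow_atTop_nhds_zero_of_lt_one hc hc1)

/-- With `h₁ < h₂` between the entropies, `n` letters of `p` are typically lighter than
`exp (-n h₂)` and `n + 1` letters of `q` are typically heavier than `exp (-(n + 1) h₁)`. -/
theorem exists_simulableWithin_lt [DecidableEq B] {p : A → ℝ} {q : B → ℝ} (hp : IsProbVector p)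
    (hq : IsProbVector q) (hH : vecEntropy q < vecEntropy p) {b : ℝ} (hb : ∀ a, p a ≤ b)
    (hb1 : b < 1) :
    ∃ L : ℕ, 0 < L ∧ ∃ c < (L : ℝ), SimulableWithin p (fun y : Fin L → B => ∏ i, q (y i)) c := by
  obtain ⟨h₁, hqh₁, hh₁p⟩ := exists_between hH
  obtain ⟨h₂, hh, hh₂p⟩ := exists_between hh₁p
  obtain ⟨c, hc0, hc1, hc⟩ := hp.exists_sum_heavy_words_le_pow hh₂p
  obtain ⟨d, hd0, hd1, hd⟩ := hq.exists_sum_light_words_le_pow hqh₁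
  let e := Real.exp (h₁ - h₂)
  have he1 : e < 1 := Real.exp_lt_one_iff.2 (sub_neg.2 hh)
  let K := 2 / (1 - b) * Real.log (Fintype.card B)
  have hK : 0 ≤ K :=
    mul_nonneg (div_nonneg zero_le_two (sub_pos.2 hb1).le) (Real.log_natCast_nonneg _)
  have hlim : Tendsto (fun n : ℕ => K * ((n + 1) * c ^ n + (n + 1) * d ^ n +
      Real.exp h₁ * ((n + 1) * e ^ n))) atTop (nhds (K * (0 + 0 + Real.exp h₁ * 0))) :=
    (((tendsto_succ_mul_const_pow_of_lt_one hc0 hc1).add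
      (tendsto_succ_mul_const_pow_of_lt_one hd0 hd1)).add
      ((tendsto_succ_mul_const_pow_of_lt_one (Real.exp_nonneg _) he1).const_mul _)).const_mul K
  obtain ⟨n, hn⟩ := (hlim.eventually (gt_mem_nhds (show _ < (1 : ℝ) by simp))).exists
  have hratio : Real.exp (-(n * h₂)) / Real.exp (-((n + 1 : ℕ) * h₁)) = Real.exp h₁ * e ^ n := by
    rw [← Real.exp_sub, ← Real.exp_nat_mul, ← Real.exp_add]
    push_cast
    ring_nf
  refine ⟨n + 1, n.succ_pos, _, ?_, simulableWithin_of_heavy_of_light hp hb hb1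
    (hq.words (n + 1)).mem_stdSimplex n (Real.exp_nonneg (-(n * h₂)))
    (Real.exp_pos (-((n + 1 : ℕ) * h₁)))⟩
  have hd' : d ^ (n + 1) ≤ d ^ n := pow_le_pow_of_le_one hd0 hd1.le n.le_succ
  calc _ ≤ (c ^ n + d ^ n + Real.exp h₁ * e ^ n) * (K * (n + 1)) + n := by
        rw [show 2 / (1 - b) * Real.log (Fintype.card (Fin (n + 1) → B)) = K * (n + 1) by
          simp only [K, Fintype.card_fun, Fintype.card_fin, Nat.cast_pow, Real.log_pow]
          push_cast
          ring, hratio]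
        gcongr
        · exact hc n
        · exact (hd (n + 1)).trans hd'
    _ = K * ((n + 1) * c ^ n + (n + 1) * d ^ n + Real.exp h₁ * ((n + 1) * e ^ n)) + n := by ring
    _ < (n + 1 : ℕ) := by
        push_cast
        linarith

end EntropyGap

section FinitelyDetermined

variable {ι A β γ δ : Type*}

/-- `f` depends on finitely many coordinates only. -/
def FinitelyDetermined (f : (ι → A) → β) : Prop := ∃ F : Finset ι, DependsOn f (F : Set ι)

namespace FinitelyDetermined

theorem comp {f : (ι → A) → β} (hf : FinitelyDetermined f) (g : β → γ) :
    FinitelyDetermined fun x => g (f x) := by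
  obtain ⟨F, hF⟩ := hf
  exact ⟨F, fun x y h => congrArg g (hF h)⟩

theorem comp₂ {f : (ι → A) → β} {f' : (ι → A) → γ} (hf : FinitelyDetermined f)
    (hf' : FinitelyDetermined f') (g : β → γ → δ) : FinitelyDetermined fun x => g (f x) (f' x) := by
  classical
  obtain ⟨F, hF⟩ := hf
  obtain ⟨F', hF'⟩ := hf'
  refine ⟨F ∪ F', fun x y h => ?_⟩
  exact congrArg₂ g (hF fun i hi => h i (by simp_all)) (hF' fun i hi => h i (by simp_all))

theorem apply (t : ι) : FinitelyDetermined fun x : ι → A => x t :=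
  ⟨{t}, fun x y h => h t (by simp)⟩

theorem update [DecidableEq ι] {f : (ι → A) → β} (hf : FinitelyDetermined f) (t : ι) (a : A) :
    FinitelyDetermined fun x => f (Function.update x t a) := by
  obtain ⟨F, hF⟩ := hf
  refine ⟨F, fun x y h => hF fun i hi => ?_⟩
  rcases eq_or_ne i t with rfl | hit
  · simp
  · simp [hit, h i hi]

theorem finite_range [Finite A] {f : (ι → A) → β} (hf : FinitelyDetermined f) :
    (Set.range f).Finite := by
  obtain ⟨F, hF⟩ := hf
  rcases isEmpty_or_nonempty β with h | h
  · exact Set.toFinite _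
  obtain ⟨g, rfl⟩ := dependsOn_iff_exists_comp.1 hF
  exact (Set.finite_range g).subset (Set.range_comp_subset_range _ _)

variable [Finite A] [MeasurableSpace A] [DiscreteMeasurableSpace A]

theorem measurable [MeasurableSpace β] {f : (ι → A) → β} (hf : FinitelyDetermined f) :
    Measurable f := by
  obtain ⟨F, hF⟩ := hf
  rcases isEmpty_or_nonempty β with h | h
  · have : IsEmpty (ι → A) := f.isEmpty
    exact measurable_of_empty f
  obtain ⟨g, rfl⟩ := dependsOn_iff_exists_comp.1 hF
  exact (Measurable.of_discrete (f := g)).comp (Finset.measurable_restrict F)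

theorem integrable {f : (ι → A) → ℝ} (hf : FinitelyDetermined f) (μ : Measure (ι → A))
    [IsFiniteMeasure μ] : Integrable f μ := by
  obtain ⟨C, hC⟩ := (hf.finite_range.image fun r => ‖r‖).bddAbove
  exact Integrable.of_bound hf.measurable.aestronglyMeasurable C
    (.of_forall fun x => hC ⟨f x, ⟨x, rfl⟩, rfl⟩)

theorem measurableSet {s : (ι → A) → Prop} (hs : FinitelyDetermined s) : MeasurableSet {x | s x} :=
  measurableSet_setOfPred.2 hs.measurable

end FinitelyDetermined

theorem finitelyDetermined_forall_eq (F : Finset ι) (s : ι → A) :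
    FinitelyDetermined fun x => ∀ i ∈ F, x i = s i :=
  ⟨F, fun x y h => propext (forall₂_congr fun i hi => by rw [h i hi])⟩

end FinitelyDetermined

section Bernoulli

variable {A : Type*} [MeasurableSpace A] {p : A → ℝ} {μ : Measure (ℤ → A)}

theorem IsBernoulliMeasure.isProbabilityMeasure [Nonempty A] (hμ : IsBernoulliMeasure μ p) :
    IsProbabilityMeasure μ :=
  ⟨by simpa using hμ ∅ fun _ => Classical.arbitrary A⟩

open scoped Classical in
theorem IsBernoulliMeasure.measure_update (hμ : IsBernoulliMeasure μ p) (t : ℤ) (a : A)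
    (F : Finset ℤ) (s : ℤ → A) :
    μ {x | ∀ i ∈ F, Function.update x t a i = s i} =
      if t ∈ F ∧ a ≠ s t then 0 else ENNReal.ofReal (∏ i ∈ F.erase t, p (s i)) := by
  split_ifs with h
  · convert measure_empty (μ := μ)
    refine Set.eq_empty_of_forall_notMem fun x hx => h.2 ?_
    simpa using hx t h.1
  · rw [← hμ]
    congr 1
    ext x
    simp only [Set.mem_ofPred_eq, Finset.mem_erase]
    refine forall_congr' fun i => ?_
    rcases eq_or_ne i t with rfl | hi
    · simpa using h
    · simp [hi]

variable [DiscreteMeasurableSpace A] [Nonempty A]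

theorem IsBernoulliMeasure.unique [Countable A] {μ' : Measure (ℤ → A)} (hμ : IsBernoulliMeasure μ p)
    (hμ' : IsBernoulliMeasure μ' p) : μ = μ' := by
  have := hμ.isProbabilityMeasure
  have := hμ'.isProbabilityMeasure
  refine IsProjectiveLimit.unique (P := fun I : Finset ℤ => μ.map I.restrict) (fun I => rfl)
    fun I => Measure.ext_of_singleton fun s => ?_
  obtain ⟨s, rfl⟩ := Subtype.surjective_restrict (β := fun _ : ℤ => A) (· ∈ I) s
  have hcylinder : I.restrict (π := fun _ => A) ⁻¹' {Subtype.restrict (· ∈ I) s} =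
      {x | ∀ i ∈ I, x i = s i} := by
    ext x
    simp [funext_iff, Finset.restrict]
  rw [Measure.map_apply (Finset.measurable_restrict I) (measurableSet_singleton _),
    Measure.map_apply (Finset.measurable_restrict I) (measurableSet_singleton _), hcylinder, hμ,
    hμ']

variable [Fintype A]

theorem IsBernoulliMeasure.eq_sum_map_update (hp : IsProbVector p) (hμ : IsBernoulliMeasure μ p)
    (t : ℤ) : μ = ∑ a, ENNReal.ofReal (p a) • μ.map fun x => Function.update x t a := by
  classical
  refine hμ.unique (p := p) fun F s => ?_
  have hF := (finitelyDetermined_forall_eq F s).measurableSet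
  simp only [Measure.finsetSum_apply, Measure.smul_apply, smul_eq_mul,
    Measure.map_apply measurable_update_left hF, Set.preimage_ofPred_eq, hμ.measure_update]
  by_cases ht : t ∈ F
  · simp only [ht, true_and, ne_eq, ite_not, mul_ite, mul_zero, Finset.sum_ite_eq',
      Finset.mem_univ, if_true]
    rw [← ENNReal.ofReal_mul (hp.1 _).le, Finset.mul_prod_erase F (fun i => p (s i)) ht]
  · simp only [ht, false_and, if_false, Finset.erase_eq_of_notMem ht]
    rw [← Finset.sum_mul, ← ENNReal.ofReal_sum_of_nonneg fun i _ => (hp.1 i).le, hp.2,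
      ENNReal.ofReal_one, one_mul]

theorem IsBernoulliMeasure.integral_eq_integral_sum_update (hp : IsProbVector p)
    (hμ : IsBernoulliMeasure μ p) (t : ℤ) {f : (ℤ → A) → ℝ} (hf : FinitelyDetermined f) :
    ∫ x, f x ∂μ = ∫ x, ∑ a, p a * f (Function.update x t a) ∂μ := by
  have := hμ.isProbabilityMeasure
  have hupdate (a : A) : AEMeasurable (fun x : ℤ → A => Function.update x t a) μ :=
    measurable_update_left.aemeasurable
  have hintegrable (a : A) : Integrable f (μ.map fun x => Function.update x t a) :=
    have := Measure.isProbabilityMeasure_map (hupdate a)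
    hf.integrable _
  conv_lhs => rw [hμ.eq_sum_map_update hp t]
  rw [integral_finsetSum_measure fun a _ => (hintegrable a).smul_measure ENNReal.ofReal_ne_top,
    integral_finsetSum _ fun a _ => ((hf.update t a).integrable μ).const_mul (p a)]
  refine Finset.sum_congr rfl fun a _ => ?_
  rw [integral_smul_measure, integral_map (hupdate a) hf.measurable.aestronglyMeasurable,
    ENNReal.toReal_ofReal (hp.1 a).le, smul_eq_mul, integral_const_mul]

theorem IsBernoulliMeasure.measureReal_inter_apply_eq (hp : IsProbVector p)
    (hμ : IsBernoulliMeasure μ p) {E : Set (ℤ → A)} (hE : MeasurableSet E) {t : ℤ}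
    (ht : DependsOn (· ∈ E) {t}ᶜ) (a : A) : μ.real (E ∩ {x | x t = a}) = p a * μ.real E := by
  classical
  have hpre (b : A) : (fun x => Function.update x t b) ⁻¹' (E ∩ {x | x t = a}) =
      if b = a then E else ∅ := by
    have hmem (x : ℤ → A) : Function.update x t b ∈ E ↔ x ∈ E :=
      (ht fun i hi => Function.update_of_ne hi b x).to_iff
    ext x
    split_ifs with hb
    · subst hb
      simp [hmem]
    · simp [hb]
  have hEa : MeasurableSet (E ∩ {x | x t = a}) :=
    hE.inter ((FinitelyDetermined.apply t).comp (· = a)).measurableSet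
  rw [measureReal_def, measureReal_def, ← ENNReal.toReal_ofReal (hp.1 a).le, ← ENNReal.toReal_mul]
  congr 1
  conv_lhs => rw [hμ.eq_sum_map_update hp t]
  simp only [Measure.finsetSum_apply, Measure.smul_apply, smul_eq_mul,
    Measure.map_apply measurable_update_left hEa, hpre]
  simp [apply_ite μ]

theorem IsBernoulliMeasure.setIntegral_apply_eq (hp : IsProbVector p) (hμ : IsBernoulliMeasure μ p)
    {P : (ℤ → A) → Prop} (hP : FinitelyDetermined P) {t : ℤ} (hPt : DependsOn P {t}ᶜ) {β : Type*}
    {Y : (ℤ → A) → β} (hY : FinitelyDetermined Y) (hYt : DependsOn Y {t}ᶜ)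
    (g : A → β → ℝ) :
    ∫ x in {x | P x}, g (x t) (Y x) ∂μ = ∫ x in {x | P x}, ∑ a, p a * g a (Y x) ∂μ := by
  classical
  have hupdate (x : ℤ → A) (a : A) : ∀ i ∈ ({t}ᶜ : Set ℤ), Function.update x t a i = x i :=
    fun i hi => Function.update_of_ne hi a x
  have hf : FinitelyDetermined fun x => if P x then g (x t) (Y x) else 0 :=
    hP.comp₂ ((FinitelyDetermined.apply t).comp₂ hY g) fun P r => if P then r else 0
  simp only [← integral_indicator hP.measurableSet, Set.indicator_apply, Set.mem_ofPred_eq]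
  rw [hμ.integral_eq_integral_sum_update hp t hf]
  congr 1 with x
  simp only [Function.update_self, hYt (hupdate _ _), hPt (hupdate _ _)]
  split_ifs <;> simp

end Bernoulli

section Marker

variable {A : Type*} {k : ℕ} {a₀ : A} {x y : ℤ → A} {s t : ℤ} {j : ℕ}

/-- A marker ends at time `t`: the last `k` letters up to `t` are all equal to `a₀`. -/
def Marker (k : ℕ) (a₀ : A) (x : ℤ → A) (t : ℤ) : Prop := ∀ i < k, x (t - (i : ℕ)) = a₀

/-- No marker ends at any of the times `s - 1, s - 1 - k, …, s - 1 - (j - 1) k`. The windows of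
these markers are disjoint, so that the corresponding events are independent. -/
def NoMarker (k : ℕ) (a₀ : A) (x : ℤ → A) (s : ℤ) (j : ℕ) : Prop :=
  ∀ i < j, ¬Marker k a₀ x (s - 1 - (i * k : ℕ))

theorem Marker.congr (h : ∀ i : ℤ, t - k < i → i ≤ t → x i = y i) :
    Marker k a₀ x t ↔ Marker k a₀ y t :=
  forall₂_congr fun i hi => by rw [h _ (by omega) (by omega)]

theorem marker_succ : Marker (k + 1) a₀ x t ↔ Marker k a₀ x t ∧ x (t - k) = a₀ :=
  Nat.forall_lt_succ_right

theorem finitelyDetermined_marker (t : ℤ) :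
    FinitelyDetermined fun x : ℤ → A => Marker k a₀ x t :=
  ⟨Finset.Icc (t - k) t, fun x y h =>
    propext (Marker.congr fun i hi hi' => h i (by simp; omega))⟩

theorem noMarker_succ : NoMarker k a₀ x s (j + 1) ↔
    NoMarker k a₀ x s j ∧ ¬Marker k a₀ x (s - 1 - (j * k : ℕ)) :=
  Nat.forall_lt_succ_right

theorem NoMarker.congr (h : ∀ i : ℤ, s - 1 - (j * k : ℕ) < i → i < s → x i = y i) :
    NoMarker k a₀ x s j ↔ NoMarker k a₀ y s j := by
  refine forall₂_congr fun i hi => not_congr (Marker.congr fun l hl hl' => h l ?_ (by omega))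
  have : (i + 1) * k ≤ j * k := Nat.mul_le_mul_right k hi
  rw [Nat.succ_mul] at this
  omega

theorem finitelyDetermined_noMarker (s : ℤ) (j : ℕ) :
    FinitelyDetermined fun x : ℤ → A => NoMarker k a₀ x s j :=
  ⟨Finset.Icc (s - 1 - (j * k : ℕ)) s, fun x y h =>
    propext <| NoMarker.congr fun i hi hi' =>
      h i (by simp only [Finset.coe_Icc, Set.mem_Icc]; omega)⟩

variable [Fintype A] [MeasurableSpace A] [DiscreteMeasurableSpace A] {p : A → ℝ}
  {μ : Measure (ℤ → A)}

theorem IsBernoulliMeasure.measureReal_inter_marker (hp : IsProbVector p)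
    (hμ : IsBernoulliMeasure μ p) {E : Set (ℤ → A)} (hE : MeasurableSet E)
    (ht : DependsOn (· ∈ E) {i | i ≤ t - k ∨ t < i}) :
    μ.real (E ∩ {x | Marker k a₀ x t}) = p a₀ ^ k * μ.real E := by
  have : Nonempty A := ⟨a₀⟩
  induction k generalizing E with
  | zero => simp [Marker]
  | succ k ih =>
    have hinter : E ∩ {x | Marker (k + 1) a₀ x t} =
        E ∩ {x | x (t - k) = a₀} ∩ {x | Marker k a₀ x t} := by
      ext x
      simp only [Set.mem_inter_iff, Set.mem_ofPred_eq, marker_succ]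
      tauto
    rw [hinter, ih (hE.inter ((FinitelyDetermined.apply (t - k)).comp (· = a₀)).measurableSet),
      hμ.measureReal_inter_apply_eq hp hE, pow_succ, mul_assoc]
    · refine ht.mono fun i hi => ?_
      simp only [Set.mem_ofPred_eq, Set.mem_compl_iff, Set.mem_singleton_iff] at hi ⊢
      push_cast at hi
      omega
    · intro x y hxy
      simp only [Set.mem_ofPred_eq] at hxy
      refine propext (and_congr (ht fun i hi => hxy i ?_).to_iff ?_)
      · simp only [Set.mem_ofPred_eq] at hi
        push_cast at hi
        omega
      · simp [hxy (t - k) (by simp)]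

theorem IsBernoulliMeasure.measureReal_noMarker (hp : IsProbVector p) (hμ : IsBernoulliMeasure μ p)
    (s : ℤ) (j : ℕ) : μ.real {x | NoMarker k a₀ x s j} = (1 - p a₀ ^ k) ^ j := by
  have : Nonempty A := ⟨a₀⟩
  have := hμ.isProbabilityMeasure
  induction j with
  | zero => simp [NoMarker]
  | succ j ih =>
    have hdiff : {x | NoMarker k a₀ x s (j + 1)} =
        {x | NoMarker k a₀ x s j} \ {x | Marker k a₀ x (s - 1 - (j * k : ℕ))} :=
      Set.ext fun x => noMarker_succ
    have hsplit := measureReal_inter_add_sdiff (μ := μ) (s := {x : ℤ → A | NoMarker k a₀ x s j})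
      (finitelyDetermined_marker (k := k) (a₀ := a₀) (s - 1 - (j * k : ℕ))).measurableSet
    rw [hμ.measureReal_inter_marker hp (finitelyDetermined_noMarker s j).measurableSet
      fun x y hxy => propext (NoMarker.congr fun i hi _ => hxy i (Or.inr hi)), ih,
      ← hdiff] at hsplit
    linear_combination hsplit

end Marker

section Machine

/-- A request for the simulation of an output block of length `size`; `input` is the word of
letters read so far on its behalf. -/
structure BlockTask (A : Type*) where
  size : ℕ
  input : List A

/-- A state of the machine: the output sites are grouped into consecutive blocks, `pending` is the
length of the block being formed, and `tasks` is the stack of requests for the blocks already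
formed, the most recent one first. -/
structure MachineState (A : Type*) where
  pending : ℕ
  tasks : List (BlockTask A)

variable {A B : Type*} {L : ℕ} (out : List A → Option (Fin L → B))

/-- The effect of reading the letter `a`: it is handed to the first unfinished task of the stack. -/
def serve (a : A) : List (BlockTask A) → List (BlockTask A)
  | [] => []
  | v :: l =>
    match out v.input with
    | none => ⟨v.size, v.input ++ [a]⟩ :: l
    | some _ => v :: serve a l

/-- All tasks of a stack are finished. -/
def IsResolved (l : List (BlockTask A)) : Prop := ∀ v ∈ l, out v.input ≠ none

/-- The number of output sites covered by the blocks of a stack. -/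
def totalSize (l : List (BlockTask A)) : ℕ := (l.map BlockTask.size).sum

open scoped Classical in
/-- One step of the machine, on reading the letter `a`. The block being formed is closed when it
reaches length `L` or when a marker ends, as told by `m`. -/
def machineStep (m : Prop) (a : A) (σ : MachineState A) : MachineState A :=
  if σ.pending + 1 = L ∨ m then ⟨0, ⟨σ.pending + 1, []⟩ :: serve out a σ.tasks⟩
  else ⟨σ.pending + 1, serve out a σ.tasks⟩

/-- The position of the site `s` in the block starting at `s₀`; it is meaningful only for
`s₀ ≤ s < s₀ + L`. -/
def blockIndex (L : ℕ) [NeZero L] (s₀ s : ℤ) : Fin L := Fin.ofNat L (s - s₀).toNat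

/-- The output at the site `s`, if it is known, when the blocks of a stack end at the site `o`,
exclusive. -/
def letterAt [NeZero L] : ℤ → List (BlockTask A) → ℤ → Option B
  | _, [], _ => none
  | o, v :: l, s =>
    if s ∈ Finset.Ico (o - v.size) o then
      (out v.input).map fun y => y (blockIndex L (o - v.size) s)
    else letterAt (o - v.size) l s

variable (k : ℕ) (a₀ : A)

/-- The state of the machine started at time `t₀` after reading `n` letters of `x`. -/
def runMachine (x : ℤ → A) (t₀ : ℤ) : ℕ → MachineState A
  | 0 => ⟨0, []⟩
  | n + 1 => machineStep out (Marker k a₀ x (t₀ + n)) (x (t₀ + n)) (runMachine x t₀ n)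

/-- The output at the site `s`, if it is known, of the machine started at time `t₀` after reading
`n` letters of `x`. -/
def machineOutput [NeZero L] (x : ℤ → A) (t₀ : ℤ) (n : ℕ) (s : ℤ) : Option B :=
  letterAt out (t₀ + n - (runMachine out k a₀ x t₀ n).pending) (runMachine out k a₀ x t₀ n).tasks s

variable {out k a₀}

theorem totalSize_cons (v : BlockTask A) (l : List (BlockTask A)) :
    totalSize (v :: l) = v.size + totalSize l := by
  simp [totalSize]

theorem totalSize_serve (a : A) (l : List (BlockTask A)) :
    totalSize (serve out a l) = totalSize l := by
  induction l with
  | nil => rfl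
  | cons v l ih =>
    rw [serve]
    split <;> simp [totalSize_cons, ih]

theorem exists_serve_append (a : A) (l₁ l₂ : List (BlockTask A)) :
    ∃ l₃, serve out a (l₁ ++ l₂) = serve out a l₁ ++ l₃ := by
  induction l₁ with
  | nil => exact ⟨_, rfl⟩
  | cons v l ih =>
    obtain ⟨l₃, h⟩ := ih
    simp only [serve, List.cons_append]
    split
    · exact ⟨l₂, rfl⟩
    · exact ⟨l₃, by rw [h, List.cons_append]⟩

theorem pending_machineStep (m : Prop) (a : A) (σ : MachineState A) :
    (machineStep out m a σ).pending = 0 ∨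
      (machineStep out m a σ).pending = σ.pending + 1 ∧ σ.pending + 1 ≠ L := by
  unfold machineStep
  split_ifs with h
  · exact Or.inl rfl
  · exact Or.inr ⟨rfl, fun hL => h (Or.inl hL)⟩

theorem pending_machineStep_of_marker {m : Prop} (h : m) (a : A) (σ : MachineState A) :
    (machineStep out m a σ).pending = 0 := by
  simp [machineStep, h]

theorem totalSize_machineStep (m : Prop) (a : A) (σ : MachineState A) :
    totalSize (machineStep out m a σ).tasks + (machineStep out m a σ).pending =
      totalSize σ.tasks + σ.pending + 1 := by
  unfold machineStep
  split_ifs <;> simp only [totalSize_cons, totalSize_serve] <;> omega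

variable {x y : ℤ → A} {t₀ : ℤ}

theorem totalSize_runMachine (x : ℤ → A) (t₀ : ℤ) (n : ℕ) :
    totalSize (runMachine out k a₀ x t₀ n).tasks + (runMachine out k a₀ x t₀ n).pending = n := by
  induction n with
  | zero => rfl
  | succ n ih => rw [runMachine, totalSize_machineStep, ih]

theorem pending_runMachine_lt (hL : 0 < L) (x : ℤ → A) (t₀ : ℤ) (n : ℕ) :
    (runMachine out k a₀ x t₀ n).pending < L := by
  induction n with
  | zero => exact hL
  | succ n ih =>
    rw [runMachine]
    rcases pending_machineStep (out := out) (Marker k a₀ x (t₀ + n)) (x (t₀ + n))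
      (runMachine out k a₀ x t₀ n) with h | h <;> omega

theorem runMachine_congr {n : ℕ} (h : ∀ i : ℤ, t₀ - k ≤ i → i < t₀ + n → x i = y i) :
    runMachine out k a₀ x t₀ n = runMachine out k a₀ y t₀ n := by
  induction n with
  | zero => rfl
  | succ n ih =>
    push_cast at h
    rw [runMachine, runMachine, ih fun i hi hi' => h i hi (by omega),
      h (t₀ + n) (by omega) (by omega),
      propext (Marker.congr (a₀ := a₀) fun i hi hi' => h i (by omega) (by omega))]

theorem finitelyDetermined_runMachine (t₀ : ℤ) (n : ℕ) :
    FinitelyDetermined fun x => runMachine out k a₀ x t₀ n :=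
  ⟨Finset.Ico (t₀ - k) (t₀ + n), fun x y h =>
    runMachine_congr fun i hi hi' => h i (by simp [hi, hi'])⟩

theorem dependsOn_runMachine (t₀ : ℤ) (n : ℕ) :
    DependsOn (fun x => runMachine out k a₀ x t₀ n) {t₀ + (n : ℤ)}ᶜ := fun x y h =>
  runMachine_congr fun i _ hi => h i (by simp; omega)

theorem runMachine_shift (x : ℤ → A) (t₀ : ℤ) (n : ℕ) :
    runMachine out k a₀ (shift x) t₀ n = runMachine out k a₀ x (t₀ + 1) n := by
  induction n with
  | zero => rfl
  | succ n ih =>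
    have h : Marker k a₀ (shift x) (t₀ + n) ↔ Marker k a₀ x (t₀ + 1 + n) :=
      forall₂_congr fun i _ => by rw [shift, show t₀ + n - i + 1 = t₀ + 1 + n - i by ring]
    rw [runMachine, runMachine, ih, propext h, shift, add_right_comm]

theorem pending_runMachine_of_marker {n : ℕ} (h : Marker k a₀ x (t₀ + n - 1)) :
    (runMachine out k a₀ x t₀ n).pending = 0 := by
  cases n with
  | zero => rfl
  | succ n => exact pending_machineStep_of_marker (by convert h using 1; push_cast; ring) _ _

theorem exists_pending_runMachine_eq_zero (x : ℤ → A) (t₀ : ℤ) (n : ℕ) :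
    ∃ m, m + (runMachine out k a₀ x t₀ n).pending = n ∧
      (runMachine out k a₀ x t₀ m).pending = 0 := by
  induction n with
  | zero => exact ⟨0, rfl, rfl⟩
  | succ n ih =>
    obtain ⟨m, hm, hm0⟩ := ih
    rcases pending_machineStep (out := out) (Marker k a₀ x (t₀ + n)) (x (t₀ + n))
      (runMachine out k a₀ x t₀ n) with h | ⟨h, -⟩
    · exact ⟨n + 1, by rw [runMachine, h], by rw [runMachine, h]⟩
    · exact ⟨m, by rw [runMachine, h]; omega, hm0⟩

theorem exists_runMachine_add_eq_append {n₀ : ℕ} (h : (runMachine out k a₀ x t₀ n₀).pending = 0)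
    (n : ℕ) : ∃ l, runMachine out k a₀ x t₀ (n₀ + n) =
      ⟨(runMachine out k a₀ x (t₀ + n₀) n).pending,
        (runMachine out k a₀ x (t₀ + n₀) n).tasks ++ l⟩ := by
  induction n with
  | zero => exact ⟨_, congrArg (MachineState.mk · (runMachine out k a₀ x t₀ n₀).tasks) h⟩
  | succ n ih =>
    obtain ⟨l, hl⟩ := ih
    obtain ⟨l', hl'⟩ := exists_serve_append (out := out) (x (t₀ + n₀ + n))
      (runMachine out k a₀ x (t₀ + n₀) n).tasks l
    refine ⟨l', ?_⟩
    rw [← add_assoc, runMachine, hl, runMachine, Nat.cast_add, ← add_assoc]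
    unfold machineStep
    simp only [hl']
    split_ifs <;> rfl

variable [NeZero L] {o s : ℤ} {b : B} {n : ℕ}

theorem letterAt_of_le (h : o ≤ s) (l : List (BlockTask A)) : letterAt out o l s = none := by
  induction l generalizing o with
  | nil => rfl
  | cons v l ih => rw [letterAt, if_neg (by simp [h]), ih (by omega)]

theorem lt_of_letterAt_eq_some {l : List (BlockTask A)} (h : letterAt out o l s = some b) :
    s < o := by
  by_contra! hs
  simp [letterAt_of_le hs] at h

theorem letterAt_add_one (o : ℤ) (l : List (BlockTask A)) (s : ℤ) :
    letterAt out (o + 1) l (s + 1) = letterAt out o l s := by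
  induction l generalizing o with
  | nil => rfl
  | cons v l ih =>
    have hstart : o + 1 - v.size = o - v.size + 1 := by ring
    simp only [letterAt, hstart, ih, blockIndex, add_sub_add_right_eq_sub, Finset.mem_Ico,
      add_le_add_iff_right, add_lt_add_iff_right]

theorem letterAt_append {l₁ : List (BlockTask A)} (h : o - totalSize l₁ ≤ s)
    (l₂ : List (BlockTask A)) : letterAt out o (l₁ ++ l₂) s = letterAt out o l₁ s := by
  induction l₁ generalizing o with
  | nil => exact letterAt_of_le (by simpa [totalSize] using h) _
  | cons v l ih =>
    rw [totalSize_cons] at h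
    rw [List.cons_append, letterAt, letterAt, ih (by omega)]

theorem letterAt_serve {l : List (BlockTask A)} (a : A) (h : letterAt out o l s = some b) :
    letterAt out o (serve out a l) s = some b := by
  induction l generalizing o with
  | nil => exact h
  | cons v l ih =>
    rw [letterAt] at h
    rw [serve]
    split
    · next hv =>
      rw [letterAt]
      split_ifs at h ⊢ with hs
      · simp [hv] at h
      · exact h
    · rw [letterAt]
      split_ifs at h ⊢ with hs
      · exact h
      · exact ih h

theorem IsResolved.letterAt_ne_none {l : List (BlockTask A)} (h : IsResolved out l)
    (hs : o - totalSize l ≤ s) (hso : s < o) : letterAt out o l s ≠ none := by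
  induction l generalizing o with
  | nil =>
    rw [totalSize, List.map_nil, List.sum_nil] at hs
    omega
  | cons v l ih =>
    obtain ⟨hv, hl⟩ := List.forall_mem_cons.1 h
    rw [totalSize_cons] at hs
    rw [letterAt]
    split_ifs with hmem
    · simpa using hv
    · rw [Finset.mem_Ico] at hmem
      exact ih hl (by omega) (by omega)

theorem machineOutput_shift (x : ℤ → A) (t₀ : ℤ) (n : ℕ) (s : ℤ) :
    machineOutput out k a₀ (shift x) t₀ n s = machineOutput out k a₀ x (t₀ + 1) n (s + 1) := by
  rw [machineOutput, machineOutput, runMachine_shift, ← letterAt_add_one]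
  congr 1
  ring

theorem machineOutput_congr (h : ∀ i : ℤ, t₀ - k ≤ i → i < t₀ + n → x i = y i) (s : ℤ) :
    machineOutput out k a₀ x t₀ n s = machineOutput out k a₀ y t₀ n s := by
  simp only [machineOutput, runMachine_congr h]

theorem machineOutput_add {n₀ : ℕ} (h : (runMachine out k a₀ x t₀ n₀).pending = 0) (n : ℕ)
    (hs : t₀ + n₀ ≤ s) :
    machineOutput out k a₀ x t₀ (n₀ + n) s = machineOutput out k a₀ x (t₀ + n₀) n s := by
  obtain ⟨l, hl⟩ := exists_runMachine_add_eq_append h n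
  have hsize := totalSize_runMachine (out := out) (k := k) (a₀ := a₀) x (t₀ + n₀) n
  rw [machineOutput, machineOutput, hl, letterAt_append (by push_cast; omega), Nat.cast_add,
    ← add_assoc]

theorem machineOutput_succ (h : machineOutput out k a₀ x t₀ n s = some b) :
    machineOutput out k a₀ x t₀ (n + 1) s = some b := by
  rw [machineOutput] at h ⊢
  rw [runMachine, machineStep]
  generalize runMachine out k a₀ x t₀ n = σ at *
  have ho : t₀ + (n + 1 : ℕ) - (σ.pending + 1 : ℕ) = t₀ + n - σ.pending := by
    push_cast
    ring
  have hs : s < t₀ + n - σ.pending := lt_of_letterAt_eq_some h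
  split_ifs
  · rw [letterAt, Nat.cast_zero, sub_zero, ho,
      if_neg fun hmem => by rw [Finset.mem_Ico] at hmem; omega, letterAt_serve _ h]
  · rw [ho, letterAt_serve _ h]

theorem machineOutput_mono {n' : ℕ} (hn : n ≤ n') (h : machineOutput out k a₀ x t₀ n s = some b) :
    machineOutput out k a₀ x t₀ n' s = some b := by
  induction n', hn using Nat.le_induction with
  | base => exact h
  | succ m _ ih => exact machineOutput_succ ih

theorem machineOutput_ne_none (h : IsResolved out (runMachine out k a₀ x t₀ n).tasks)
    (hs : t₀ ≤ s) (hsn : s + L ≤ t₀ + n) : machineOutput out k a₀ x t₀ n s ≠ none := by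
  have hpending := pending_runMachine_lt (out := out) (k := k) (a₀ := a₀) (NeZero.pos L) x t₀ n
  have hsize := totalSize_runMachine (out := out) (k := k) (a₀ := a₀) x t₀ n
  exact h.letterAt_ne_none (by omega) (by omega)

end Machine

section Drift

variable {A B : Type*} {L : ℕ}

/-- The total potential of the tasks of a stack. -/
def taskPot (pot : List A → ℝ) (l : List (BlockTask A)) : ℝ := (l.map fun v => pot v.input).sum

/-- The potential of a state of the machine: each site of the block being formed counts for `β`. -/
def machinePot (β : ℝ) (pot : List A → ℝ) (σ : MachineState A) : ℝ :=
  taskPot pot σ.tasks + β * σ.pending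

/-- The machine started at time `t₀` has an unfinished task at each moment from the `M`-th to the
`n`-th. -/
def Busy (out : List A → Option (Fin L → B)) (k : ℕ) (a₀ : A) (M : ℕ) (x : ℤ → A) (t₀ : ℤ)
    (n : ℕ) : Prop :=
  ∀ n' ≤ n, M ≤ n' → ¬IsResolved out (runMachine out k a₀ x t₀ n').tasks

variable {out : List A → Option (Fin L → B)} {k : ℕ} {a₀ : A} {M : ℕ} {t₀ : ℤ} {pot : List A → ℝ}
  {β : ℝ} {n : ℕ}

theorem taskPot_cons (v : BlockTask A) (l : List (BlockTask A)) :
    taskPot pot (v :: l) = pot v.input + taskPot pot l := by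
  simp [taskPot]

theorem taskPot_nonneg (hpot : ∀ w, 0 ≤ pot w) (l : List (BlockTask A)) : 0 ≤ taskPot pot l :=
  List.sum_nonneg (by simp [hpot])

theorem machinePot_nonneg (hβ : 0 ≤ β) (hpot : ∀ w, 0 ≤ pot w) (σ : MachineState A) :
    0 ≤ machinePot β pot σ :=
  add_nonneg (taskPot_nonneg hpot _) (by positivity)

open scoped Classical in
theorem machinePot_machineStep_le (hβ : 0 ≤ β) (hβL : pot [] ≤ β * L)
    (m : Prop) (a : A) (σ : MachineState A) :
    machinePot β pot (machineStep out m a σ) ≤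
      taskPot pot (serve out a σ.tasks) + β * (σ.pending + 1) + if m then pot [] else 0 := by
  have hβσ : 0 ≤ β * (σ.pending + 1) := by positivity
  unfold machineStep machinePot
  split_ifs with h hm hm
  · simp only [taskPot_cons, Nat.cast_zero, mul_zero, add_zero]
    linarith
  · rw [or_iff_left hm] at h
    rw [← h, Nat.cast_add_one] at hβL
    simp only [taskPot_cons, Nat.cast_zero, mul_zero, add_zero]
    linarith
  · exact absurd (Or.inr hm) h
  · simp

theorem Busy.anti {x : ℤ → A} {n' : ℕ} (hn : n ≤ n') (h : Busy out k a₀ M x t₀ n') :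
    Busy out k a₀ M x t₀ n :=
  fun m hm => h m (hm.trans hn)

theorem Busy.congr {x y : ℤ → A} (h : ∀ i : ℤ, t₀ - k ≤ i → i < t₀ + n → x i = y i) :
    Busy out k a₀ M x t₀ n ↔ Busy out k a₀ M y t₀ n :=
  forall₂_congr fun n' hn' => by rw [runMachine_congr fun i hi hi' => h i hi (by omega)]

theorem finitelyDetermined_busy (t₀ : ℤ) (n : ℕ) :
    FinitelyDetermined fun x => Busy out k a₀ M x t₀ n :=
  ⟨Finset.Ico (t₀ - k) (t₀ + n), fun x y h =>
    propext (Busy.congr fun i hi hi' => h i (by simp [hi, hi']))⟩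

theorem dependsOn_busy (t₀ : ℤ) (n : ℕ) :
    DependsOn (fun x => Busy out k a₀ M x t₀ n) {i | i < t₀ + n} := fun _ _ h =>
  propext (Busy.congr fun i _ hi => h i hi)

theorem busy_zero_congr {x y : ℤ → A} : Busy out k a₀ M x t₀ 0 ↔ Busy out k a₀ M y t₀ 0 :=
  forall₂_congr fun n hn => by rw [Nat.le_zero.1 hn]; rfl

variable [Fintype A] {p : A → ℝ}

open scoped Classical in
theorem sum_taskPot_serve_add_one_le (hp : IsProbVector p)
    (hstep : ∀ w, out w = none → ∑ a, p a * pot (w ++ [a]) + 1 ≤ pot w)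
    (l : List (BlockTask A)) :
    ∑ a, p a * taskPot pot (serve out a l) + 1 ≤
      taskPot pot l + if IsResolved out l then 1 else 0 := by
  induction l with
  | nil => simp [serve, taskPot, IsResolved]
  | cons v l ih =>
    have hresolved : IsResolved out (v :: l) ↔ out v.input ≠ none ∧ IsResolved out l :=
      List.forall_mem_cons
    rw [hresolved, taskPot_cons]
    cases hv : out v.input with
    | none =>
      simp only [serve, hv, taskPot_cons, mul_add, Finset.sum_add_distrib, ← Finset.sum_mul, hp.2]
      simpa using by linarith [hstep _ hv]
    | some y =>
      simp only [serve, hv, taskPot_cons, mul_add, Finset.sum_add_distrib, ← Finset.sum_mul, hp.2,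
        ne_eq, reduceCtorEq, not_false_eq_true, true_and]
      linarith

variable [MeasurableSpace A] [DiscreteMeasurableSpace A] {μ : Measure (ℤ → A)}

theorem IsBernoulliMeasure.measureReal_busy_inter_marker_le (hp : IsProbVector p)
    (hμ : IsBernoulliMeasure μ p) (t₀ : ℤ) (n : ℕ) :
    μ.real ({x | Busy out k a₀ M x t₀ n} ∩ {x | Marker k a₀ x (t₀ + n)}) ≤
      p a₀ ^ k * μ.real {x | Busy out k a₀ M x t₀ (n - k)} := by
  have : Nonempty A := ⟨a₀⟩
  have := hμ.isProbabilityMeasure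
  rw [← hμ.measureReal_inter_marker hp (finitelyDetermined_busy t₀ (n - k)).measurableSet]
  · exact measureReal_mono (Set.inter_subset_inter_left _ fun x => Busy.anti (n.sub_le k))
  rcases le_total k n with hk | hk
  · exact (dependsOn_busy t₀ _).mono fun i hi => Or.inl (by simp at hi; omega)
  · rw [Nat.sub_eq_zero_of_le hk]
    exact fun x y _ => propext busy_zero_congr

theorem setIntegral_machinePot_succ_le (hp : IsProbVector p) (hμ : IsBernoulliMeasure μ p)
    (hβ : 0 ≤ β) (hpot : ∀ w, 0 ≤ pot w) (hβL : pot [] ≤ β * L) (t₀ : ℤ) (n : ℕ) :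
    ∫ x in {x | Busy out k a₀ M x t₀ (n + 1)},
        machinePot β pot (runMachine out k a₀ x t₀ (n + 1)) ∂μ ≤
      ∫ x in {x | Busy out k a₀ M x t₀ n},
        (taskPot pot (serve out (x (t₀ + n)) (runMachine out k a₀ x t₀ n).tasks) +
          β * ((runMachine out k a₀ x t₀ n).pending + 1)) ∂μ +
      pot [] * p a₀ ^ k * μ.real {x | Busy out k a₀ M x t₀ (n - k)} := by
  classical
  have : Nonempty A := ⟨a₀⟩
  have := hμ.isProbabilityMeasure
  have hM := (finitelyDetermined_marker (k := k) (a₀ := a₀) (t₀ + n)).measurableSet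
  have hpotStep := (finitelyDetermined_runMachine (out := out) (k := k) (a₀ := a₀) t₀ (n + 1)).comp
    (machinePot β pot)
  have hserved : FinitelyDetermined fun x =>
      taskPot pot (serve out (x (t₀ + n)) (runMachine out k a₀ x t₀ n).tasks) +
        β * ((runMachine out k a₀ x t₀ n).pending + 1) :=
    (FinitelyDetermined.apply (t₀ + n)).comp₂ (finitelyDetermined_runMachine t₀ n)
      fun a σ => taskPot pot (serve out a σ.tasks) + β * (σ.pending + 1)
  have hmarker : Integrable ({x | Marker k a₀ x (t₀ + n)}.indicator fun _ => pot []) μ :=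
    (integrable_const _).indicator hM
  calc
    _ ≤ ∫ x in {x | Busy out k a₀ M x t₀ n},
        machinePot β pot (runMachine out k a₀ x t₀ (n + 1)) ∂μ :=
      setIntegral_mono_set (hpotStep.integrable μ).integrableOn
        (.of_forall fun x => machinePot_nonneg hβ hpot _)
        (.of_forall fun x => Busy.anti n.le_succ)
    _ ≤ ∫ x in {x | Busy out k a₀ M x t₀ n},
        (taskPot pot (serve out (x (t₀ + n)) (runMachine out k a₀ x t₀ n).tasks) +
          β * ((runMachine out k a₀ x t₀ n).pending + 1) +
          {x | Marker k a₀ x (t₀ + n)}.indicator (fun _ => pot []) x) ∂μ :=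
      setIntegral_mono (hpotStep.integrable μ).integrableOn
        ((hserved.integrable μ).add hmarker).integrableOn
        fun x => machinePot_machineStep_le hβ hβL _ _ _
    _ ≤ _ := by
      rw [integral_add (hserved.integrable μ).integrableOn hmarker.integrableOn,
        setIntegral_indicator hM, setIntegral_const, smul_eq_mul, mul_comm, mul_assoc]
      gcongr
      · exact hpot []
      · exact hμ.measureReal_busy_inter_marker_le hp t₀ n

theorem setIntegral_serve_le (hp : IsProbVector p) (hμ : IsBernoulliMeasure μ p)
    (hstep : ∀ w, out w = none → ∑ a, p a * pot (w ++ [a]) + 1 ≤ pot w) (β : ℝ) (t₀ : ℤ) (n : ℕ) :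
    ∫ x in {x | Busy out k a₀ M x t₀ n},
        (taskPot pot (serve out (x (t₀ + n)) (runMachine out k a₀ x t₀ n).tasks) +
          β * ((runMachine out k a₀ x t₀ n).pending + 1)) ∂μ +
      (1 - β) * μ.real {x | Busy out k a₀ M x t₀ n} ≤
    ∫ x in {x | Busy out k a₀ M x t₀ n}, machinePot β pot (runMachine out k a₀ x t₀ n) ∂μ +
      if n < M then 1 else 0 := by
  classical
  have : Nonempty A := ⟨a₀⟩
  have := hμ.isProbabilityMeasure
  have hB := finitelyDetermined_busy (out := out) (k := k) (a₀ := a₀) (M := M) t₀ n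
  have hR := finitelyDetermined_runMachine (out := out) (k := k) (a₀ := a₀) t₀ n
  have hintegrable (f : MachineState A → ℝ) : IntegrableOn (fun x => f (runMachine out k a₀ x t₀ n))
      {x | Busy out k a₀ M x t₀ n} μ := ((hR.comp f).integrable μ).integrableOn
  set c : ℝ := if n < M then 1 else 0 with hc
  have hc₀ : 0 ≤ c := by positivity
  have hpointwise : ∀ x ∈ {x | Busy out k a₀ M x t₀ n},
      ∑ a, p a * (taskPot pot (serve out a (runMachine out k a₀ x t₀ n).tasks) +
        β * ((runMachine out k a₀ x t₀ n).pending + 1)) ≤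
      machinePot β pot (runMachine out k a₀ x t₀ n) + (c - (1 - β)) := fun x hx => by
    have hresolved : (if IsResolved out (runMachine out k a₀ x t₀ n).tasks then 1 else 0) ≤ c := by
      split_ifs with h
      · rw [hc, if_pos (not_le.1 fun hn => hx n le_rfl hn h)]
      · exact hc₀
    have := sum_taskPot_serve_add_one_le hp hstep (runMachine out k a₀ x t₀ n).tasks
    simp only [mul_add, Finset.sum_add_distrib, ← Finset.sum_mul, hp.2, machinePot] at this ⊢
    linarith
  rw [hμ.setIntegral_apply_eq hp hB ((dependsOn_busy t₀ n).mono fun i hi => ne_of_lt hi) hR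
    (dependsOn_runMachine t₀ n) fun a σ => taskPot pot (serve out a σ.tasks) + β * (σ.pending + 1)]
  have hle := setIntegral_mono_on (hintegrable fun σ => ∑ a, p a *
      (taskPot pot (serve out a σ.tasks) + β * (σ.pending + 1)))
    ((hintegrable (machinePot β pot)).add (integrable_const (c - (1 - β)))) hB.measurableSet
    hpointwise
  have hcle : c * μ.real {x | Busy out k a₀ M x t₀ n} ≤ c :=
    mul_le_of_le_one_right hc₀ measureReal_le_one
  simp only [Pi.add_apply] at hle
  rw [integral_add (hintegrable _) (integrable_const _), setIntegral_const, smul_eq_mul] at hle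
  linarith

theorem setIntegral_machinePot_drift (hp : IsProbVector p) (hμ : IsBernoulliMeasure μ p)
    (hβ : 0 ≤ β) (hpot : ∀ w, 0 ≤ pot w) (hβL : pot [] ≤ β * L)
    (hstep : ∀ w, out w = none → ∑ a, p a * pot (w ++ [a]) + 1 ≤ pot w) (t₀ : ℤ) (n : ℕ) :
    ∫ x in {x | Busy out k a₀ M x t₀ (n + 1)},
        machinePot β pot (runMachine out k a₀ x t₀ (n + 1)) ∂μ +
        (1 - β) * μ.real {x | Busy out k a₀ M x t₀ n} ≤
      ∫ x in {x | Busy out k a₀ M x t₀ n}, machinePot β pot (runMachine out k a₀ x t₀ n) ∂μ +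
        pot [] * p a₀ ^ k * μ.real {x | Busy out k a₀ M x t₀ (n - k)} + if n < M then 1 else 0 := by
  have hmachine := setIntegral_machinePot_succ_le (out := out) (k := k) (a₀ := a₀) (M := M)
    hp hμ hβ hpot hβL t₀ n
  have hserve := setIntegral_serve_le (k := k) (a₀ := a₀) (M := M) hp hμ hstep β t₀ n
  linarith

theorem sum_range_sub_le {u : ℕ → ℝ} (hu : ∀ n, u n ∈ Set.Icc 0 1) (k N : ℕ) :
    ∑ n ∈ Finset.range N, u (n - k) ≤ k + ∑ n ∈ Finset.range N, u n := by
  have hsub : Finset.range N ⊆ Finset.range (k + N) := Finset.range_mono (Nat.le_add_left N k)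
  calc
    _ ≤ ∑ n ∈ Finset.range (k + N), u (n - k) :=
      Finset.sum_le_sum_of_subset_of_nonneg hsub fun n _ _ => (hu _).1
    _ = ∑ n ∈ Finset.range k, u (n - k) + ∑ n ∈ Finset.range N, u n := by
      simp [Finset.sum_range_add]
    _ ≤ _ := by
      gcongr
      simpa using Finset.sum_le_sum fun n (_ : n ∈ Finset.range k) => (hu (n - k)).2

theorem sum_le_of_drift {u v : ℕ → ℝ} (hu : ∀ n, u n ∈ Set.Icc 0 1) (hv₀ : v 0 = 0)
    (hv : ∀ n, 0 ≤ v n) {δ : ℝ} (hδ : 0 < δ)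
    (hdrift : ∀ n, v (n + 1) + 2 * δ * u n ≤ v n + δ * u (n - k) + if n < M then 1 else 0) (N : ℕ) :
    ∑ n ∈ Finset.range N, u n ≤ (M + δ * k) / δ := by
  have hM : ∑ n ∈ Finset.range N, (if n < M then (1 : ℝ) else 0) ≤ M := by
    rw [Finset.sum_boole]
    exact_mod_cast (Finset.card_le_card fun n hn =>
      Finset.mem_range.2 (Finset.mem_filter.1 hn).2).trans_eq (Finset.card_range M)
  have hsum : v N + 2 * δ * ∑ n ∈ Finset.range N, u n ≤
      δ * ∑ n ∈ Finset.range N, u (n - k) + ∑ n ∈ Finset.range N, if n < M then 1 else 0 := by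
    clear hM
    induction N with
    | zero => simp [hv₀]
    | succ N ih =>
      simp only [Finset.sum_range_succ, mul_add]
      linarith [hdrift N]
  rw [le_div_iff₀ hδ]
  linarith [hv N, mul_le_mul_of_nonneg_left (sum_range_sub_le hu k N) hδ.le]

theorem exists_summable_measureReal_busy (hp : IsProbVector p) (hμ : IsBernoulliMeasure μ p)
    (hpot : ∀ w, 0 ≤ pot w) (hL : pot [] < L)
    (hstep : ∀ w, out w = none → ∑ a, p a * pot (w ++ [a]) + 1 ≤ pot w) (ha₀ : p a₀ < 1) :
    ∃ k ≠ 0, ∀ M t₀, Summable fun n => μ.real {x | Busy out k a₀ M x t₀ n} := by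
  have : Nonempty A := ⟨a₀⟩
  have := hμ.isProbabilityMeasure
  have hL₀ : (0 : ℝ) < L := (hpot []).trans_lt hL
  set β := pot [] / L
  have hβL : pot [] = β * L := (div_mul_cancel₀ _ hL₀.ne').symm
  have hβ₀ : 0 ≤ β := div_nonneg (hpot []) hL₀.le
  have hδ : 0 < (1 - β) / 2 := half_pos (sub_pos.2 ((div_lt_one hL₀).2 hL))
  have hlim : Tendsto (fun k => pot [] * p a₀ ^ k) atTop (nhds (pot [] * 0)) :=
    (tendsto_pow_atTop_nhds_zero_of_lt_one (hp.1 a₀).le ha₀).const_mul _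
  rw [mul_zero] at hlim
  obtain ⟨k, hk, hk₀⟩ := ((hlim.eventually_le_const hδ).and (eventually_ne_atTop 0)).exists
  refine ⟨k, hk₀, fun M t₀ => summable_of_sum_range_le (fun n => measureReal_nonneg) <|
    sum_le_of_drift (k := k) (M := M) (fun n => ⟨measureReal_nonneg, measureReal_le_one⟩)
      (v := fun n => ∫ x in {x | Busy out k a₀ M x t₀ n},
        machinePot β pot (runMachine out k a₀ x t₀ n) ∂μ)
      (by simp [runMachine, machinePot, taskPot])
      (fun n => integral_nonneg fun x => machinePot_nonneg hβ₀ hpot _) hδ fun n => ?_⟩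
  rw [mul_div_cancel₀ _ two_ne_zero]
  refine (setIntegral_machinePot_drift hp hμ hβ₀ hpot hβL.le hstep t₀ n).trans ?_
  gcongr

end Drift

section Law

theorem sum_prod_eq_prod_of_injOn {ι κ B : Type*} [Fintype κ] [DecidableEq κ] [Fintype B]
    [DecidableEq B] {q : B → ℝ} (hq : ∑ b, q b = 1) {c : ι → κ} {G : Finset ι}
    (hc : Set.InjOn c G) (z : ι → B) :
    ∑ y : κ → B with ∀ s ∈ G, y (c s) = z s, ∏ i, q (y i) = ∏ s ∈ G, q (z s) := by
  have hpi : ({y | ∀ s ∈ G, y (c s) = z s} : Finset (κ → B)) =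
      Fintype.piFinset fun i => {b | ∀ s ∈ G, c s = i → b = z s} := by
    ext y
    simpa using ⟨fun h i s hs hi => hi ▸ h s hs, fun h s hs => h _ s hs rfl⟩
  rw [hpi, ← Finset.prod_univ_sum, ← Finset.prod_fiberwise G c]
  refine Finset.prod_congr rfl fun i _ => ?_
  by_cases hi : ∃ s ∈ G, c s = i
  · obtain ⟨s, hs, rfl⟩ := hi
    have hfiber : ∀ s', s' ∈ G ∧ c s' = c s ↔ s' = s := fun s' =>
      ⟨fun h => hc h.1 hs h.2, by rintro rfl; exact ⟨hs, rfl⟩⟩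
    have hG : {s' ∈ G | c s' = c s} = {s} := by
      ext s'
      simp [hfiber]
    have hB : ({b | ∀ s' ∈ G, c s' = c s → b = z s'} : Finset B) = {z s} := by
      ext b
      simp [← and_imp, hfiber]
    rw [hG, hB, Finset.sum_singleton, Finset.prod_singleton]
  · have hfiber : ∀ s ∈ G, c s ≠ i := fun s hs h => hi ⟨s, hs, h⟩
    rw [Finset.filter_false_of_mem hfiber, Finset.prod_empty,
      Finset.filter_true_of_mem fun b _ s hs h => absurd h (hfiber s hs), hq]

variable {A B : Type*} {L : ℕ} [NeZero L] [Fintype B] [DecidableEq B]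

/-- The conditional probability that the block starting at `s₀`, on behalf of which the word `w`
has been read, agrees with `z` on the set `G` of sites, which is assumed to lie in the block. -/
def blockWeight (law : List A → (Fin L → B) → ℝ) (z : ℤ → B) (G : Finset ℤ) (s₀ : ℤ)
    (w : List A) : ℝ :=
  ∑ y with ∀ s ∈ G, y (blockIndex L s₀ s) = z s, law w y

/-- The conditional probability that the blocks of a stack of tasks ending at the site `o`,
exclusive, agree with `z` on `F`. -/
def stackWeight (law : List A → (Fin L → B) → ℝ) (z : ℤ → B) (F : Finset ℤ) :
    ℤ → List (BlockTask A) → ℝ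
  | _, [] => 1
  | o, v :: l =>
    blockWeight law z (F ∩ Finset.Ico (o - v.size) o) (o - v.size) v.input *
      stackWeight law z F (o - v.size) l

/-- The conditional probability, given the state of the machine at time `t`, that the output agrees
with `z` on `F`: the letters outside of the blocks already formed are still independent of law
`q`. -/
def stateWeight (law : List A → (Fin L → B) → ℝ) (q : B → ℝ) (z : ℤ → B) (F : Finset ℤ) (t : ℤ)
    (σ : MachineState A) : ℝ :=
  stackWeight law z F (t - σ.pending) σ.tasks * ∏ s ∈ F with t - σ.pending ≤ s, q (z s)

variable {law : List A → (Fin L → B) → ℝ} {out : List A → Option (Fin L → B)} {F G : Finset ℤ}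
  {z : ℤ → B} {q : B → ℝ}

theorem blockWeight_mem_unitInterval (hlaw : ∀ w, law w ∈ stdSimplex ℝ (Fin L → B)) (s₀ : ℤ)
    (w : List A) : blockWeight law z G s₀ w ∈ unitInterval := by
  refine ⟨Finset.sum_nonneg fun y _ => (hlaw w).1 y, ?_⟩
  rw [← (hlaw w).2]
  exact Finset.sum_le_univ_sum_of_nonneg (hlaw w).1

theorem stackWeight_mem_unitInterval (hlaw : ∀ w, law w ∈ stdSimplex ℝ (Fin L → B)) (o : ℤ)
    (l : List (BlockTask A)) : stackWeight law z F o l ∈ unitInterval := by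
  induction l generalizing o with
  | nil => exact unitInterval.one_mem
  | cons v l ih => exact unitInterval.mul_mem (blockWeight_mem_unitInterval hlaw _ _) (ih _)

theorem stateWeight_mem_unitInterval (hlaw : ∀ w, law w ∈ stdSimplex ℝ (Fin L → B))
    (hq : IsProbVector q) (t : ℤ) (σ : MachineState A) :
    stateWeight law q z F t σ ∈ unitInterval :=
  unitInterval.mul_mem (stackWeight_mem_unitInterval hlaw _ _)
    (unitInterval.prod_mem fun _ _ => mem_Icc_of_mem_stdSimplex hq.mem_stdSimplex _)

theorem injOn_blockIndex (s₀ : ℤ) : Set.InjOn (blockIndex L s₀) (Set.Ico s₀ (s₀ + L)) := by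
  intro s hs s' hs' h
  rw [Set.mem_Ico] at hs hs'
  have hmod := congrArg Fin.val h
  simp only [blockIndex, Fin.val_ofNat] at hmod
  rw [Nat.mod_eq_of_lt (by omega), Nat.mod_eq_of_lt (by omega)] at hmod
  omega

theorem blockWeight_nil (hq : ∑ b, q b = 1) (hlaw : law [] = fun y => ∏ i, q (y i)) {s₀ : ℤ}
    (hG : (G : Set ℤ) ⊆ Set.Ico s₀ (s₀ + L)) :
    blockWeight law z G s₀ [] = ∏ s ∈ G, q (z s) := by
  rw [blockWeight, hlaw, sum_prod_eq_prod_of_injOn hq ((injOn_blockIndex s₀).mono hG)]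

theorem blockWeight_eq_ite (hlaw : ∀ w, law w ∈ stdSimplex ℝ (Fin L → B))
    (hdone : ∀ w y, out w = some y → law w = Pi.single y 1) {b : ℤ → B} {s₀ : ℤ} {w : List A}
    (h : ∀ s ∈ G, ((out w).map fun y => y (blockIndex L s₀ s)) = some (b s)) :
    blockWeight law z G s₀ w = if ∀ s ∈ G, b s = z s then 1 else 0 := by
  cases hw : out w with
  | none =>
    have hG : ∀ s, s ∉ G := fun s hs => by simpa [hw] using h s hs
    simpa [blockWeight, hG] using (hlaw w).2
  | some y =>
    have hb : ∀ s ∈ G, y (blockIndex L s₀ s) = b s := by simpa [hw] using h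
    simp only [blockWeight, hdone w y hw, Pi.single_apply, Finset.sum_ite_eq',
      Finset.mem_filter_univ]
    exact if_congr (forall₂_congr fun s hs => by rw [hb s hs]) rfl rfl

theorem stackWeight_eq_ite (hlaw : ∀ w, law w ∈ stdSimplex ℝ (Fin L → B))
    (hdone : ∀ w y, out w = some y → law w = Pi.single y 1) {b : ℤ → B} {o : ℤ}
    {l : List (BlockTask A)}
    (h : ∀ s ∈ F ∩ Finset.Ico (o - totalSize l) o, letterAt out o l s = some (b s)) :
    stackWeight law z F o l =
      if ∀ s ∈ F ∩ Finset.Ico (o - totalSize l) o, b s = z s then 1 else 0 := by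
  induction l generalizing o with
  | nil => simp [stackWeight, totalSize]
  | cons v l ih =>
    have hsplit : F ∩ Finset.Ico (o - totalSize (v :: l)) o =
        F ∩ Finset.Ico (o - v.size) o ∪ F ∩ Finset.Ico (o - v.size - totalSize l) (o - v.size) := by
      rw [← Finset.inter_union_distrib_left, Finset.union_comm,
        Finset.Ico_union_Ico_eq_Ico (by omega) (by omega), totalSize_cons, Nat.cast_add, sub_sub]
    rw [hsplit, Finset.forall_mem_union] at h
    rw [stackWeight, ih, blockWeight_eq_ite hlaw hdone (b := b), ite_zero_mul_ite_zero, mul_one]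
    · exact if_congr (by rw [hsplit, Finset.forall_mem_union]) rfl rfl
    · intro s hs
      rw [← h.1 s hs, letterAt, if_pos (Finset.mem_inter.1 hs).2]
    · intro s hs
      rw [← h.2 s hs, letterAt, if_neg]
      simp only [Finset.mem_inter, Finset.mem_Ico] at hs ⊢
      omega

theorem stateWeight_machineStep (hq : ∑ b, q b = 1) (hlaw : law [] = fun y => ∏ i, q (y i))
    (t : ℤ) (m : Prop) (a : A) {σ : MachineState A} (hσ : σ.pending < L) :
    stateWeight law q z F (t + 1) (machineStep out m a σ) =
      stateWeight law q z F t ⟨σ.pending, serve out a σ.tasks⟩ := by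
  have hstart : t + 1 - (σ.pending + 1 : ℕ) = t - σ.pending := by
    push_cast
    ring
  unfold stateWeight machineStep
  split_ifs
  · have hsplit : ∏ s ∈ F with t - σ.pending ≤ s, q (z s) =
        (∏ s ∈ F ∩ Finset.Ico (t - σ.pending) (t + 1), q (z s)) *
          ∏ s ∈ F with t + 1 ≤ s, q (z s) := by
      rw [← Finset.prod_union]
      · congr 1
        ext s
        simp only [Finset.mem_union, Finset.mem_inter, Finset.mem_filter, Finset.mem_Ico,
          ← and_or_left]
        refine and_congr_right fun _ => ?_
        omega
      · simp only [Finset.disjoint_left, Finset.mem_inter, Finset.mem_filter, Finset.mem_Ico]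
        omega
    rw [stackWeight, Nat.cast_zero, sub_zero, hstart, hsplit, blockWeight_nil hq hlaw]
    · ring
    · intro s hs
      simp only [Finset.coe_inter, Finset.coe_Ico, Set.mem_inter_iff, Set.mem_Ico] at hs ⊢
      omega
  · rw [hstart]

theorem stateWeight_runMachine_eq_ite (hlaw : ∀ w, law w ∈ stdSimplex ℝ (Fin L → B))
    (hdone : ∀ w y, out w = some y → law w = Pi.single y 1) {k : ℕ} {a₀ : A} {x : ℤ → A} {t₀ : ℤ}
    {n : ℕ} {b : ℤ → B} (ht : ∀ s ∈ F, t₀ ≤ s)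
    (h : ∀ s ∈ F, machineOutput out k a₀ x t₀ n s = some (b s)) :
    stateWeight law q z F (t₀ + n) (runMachine out k a₀ x t₀ n) =
      if ∀ s ∈ F, b s = z s then 1 else 0 := by
  have hsize := totalSize_runMachine (out := out) (k := k) (a₀ := a₀) x t₀ n
  have hlt : ∀ s ∈ F, s < t₀ + n - (runMachine out k a₀ x t₀ n).pending :=
    fun s hs => lt_of_letterAt_eq_some (h s hs)
  have hF : F ∩ Finset.Ico (t₀ + n - (runMachine out k a₀ x t₀ n).pending -
      totalSize (runMachine out k a₀ x t₀ n).tasks)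
      (t₀ + n - (runMachine out k a₀ x t₀ n).pending) = F := by
    refine Finset.inter_eq_left.2 fun s hs => Finset.mem_Ico.2 ⟨?_, hlt s hs⟩
    have := ht s hs
    omega
  rw [stateWeight, stackWeight_eq_ite hlaw hdone (b := b) fun s hs => h s (Finset.mem_inter.1 hs).1,
    hF, Finset.filter_false_of_mem fun s hs => not_le.2 (hlt s hs), Finset.prod_empty, mul_one]

variable [Fintype A] {p : A → ℝ}

theorem sum_stackWeight_serve (hp : ∑ a, p a = 1)
    (hstep : ∀ w, out w = none → ∀ y, ∑ a, p a * law (w ++ [a]) y = law w y) (o : ℤ)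
    (l : List (BlockTask A)) :
    ∑ a, p a * stackWeight law z F o (serve out a l) = stackWeight law z F o l := by
  induction l generalizing o with
  | nil => simp [serve, stackWeight, hp]
  | cons v l ih =>
    simp only [serve]
    cases hv : out v.input with
    | none =>
      simp only [stackWeight, ← mul_assoc, ← Finset.sum_mul, blockWeight, Finset.mul_sum]
      rw [Finset.sum_comm]
      simp only [hstep _ hv]
    | some y =>
      simp only [stackWeight, mul_left_comm (p _), ← Finset.mul_sum, ih]

variable [MeasurableSpace A] [DiscreteMeasurableSpace A] {μ : Measure (ℤ → A)}

theorem integral_stateWeight_runMachine (hp : IsProbVector p) (hμ : IsBernoulliMeasure μ p)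
    (hq : ∑ b, q b = 1) (hlaw : law [] = fun y => ∏ i, q (y i))
    (hstep : ∀ w, out w = none → ∀ y, ∑ a, p a * law (w ++ [a]) y = law w y) (k : ℕ) (a₀ : A)
    {t₀ : ℤ} (ht : ∀ s ∈ F, t₀ ≤ s) (n : ℕ) :
    ∫ x, stateWeight law q z F (t₀ + n) (runMachine out k a₀ x t₀ n) ∂μ = ∏ s ∈ F, q (z s) := by
  have : Nonempty A := ⟨a₀⟩
  have := hμ.isProbabilityMeasure
  induction n with
  | zero => simp [runMachine, stateWeight, stackWeight, Finset.filter_true_of_mem ht]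
  | succ n ih =>
    have hresample := hμ.setIntegral_apply_eq hp (P := fun _ => True) ⟨∅, fun _ _ _ => rfl⟩
      (fun _ _ _ => rfl) (finitelyDetermined_runMachine (out := out) (k := k) (a₀ := a₀) t₀ n)
      (dependsOn_runMachine t₀ n)
      fun a σ => stateWeight law q z F (t₀ + n) ⟨σ.pending, serve out a σ.tasks⟩
    simp only [stateWeight, ← mul_assoc, ← Finset.sum_mul, sum_stackWeight_serve hp.2 hstep,
      Set.ofPred_true, Measure.restrict_univ] at hresample ih
    rw [← ih, ← hresample]
    simp only [runMachine, Nat.cast_add_one, ← add_assoc, stateWeight_machineStep hq hlaw _ _ _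
      (pending_runMachine_lt (NeZero.pos L) _ t₀ n)]
    rfl

end Law

section OccupationTime

variable {α : Type*} {E : ℕ → Set α} {x : α}

/-- The number of indices `n` such that `x` belongs to `E n`. -/
def occupationTime (E : ℕ → Set α) (x : α) : ℝ≥0∞ := ∑' n, (E n).indicator 1 x

theorem exists_notMem_of_occupationTime_ne_top (h : occupationTime E x ≠ ⊤) :
    ∃ n : ℕ, x ∉ E n ∧ n ≤ occupationTime E x := by
  classical
  have hex : ∃ n, x ∉ E n := by
    by_contra! hE
    simp [occupationTime, hE] at h
  have hmem : ∀ i ∈ Finset.range (Nat.find hex), x ∈ E i := fun i hi =>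
    not_not.1 (Nat.find_min hex (Finset.mem_range.1 hi))
  refine ⟨Nat.find hex, Nat.find_spec hex, ?_⟩
  calc (Nat.find hex : ℝ≥0∞)
      = ∑ i ∈ Finset.range (Nat.find hex), (E i).indicator 1 x := by
        rw [Finset.sum_congr rfl fun i hi => Set.indicator_of_mem (hmem i hi) 1]
        simp
    _ ≤ occupationTime E x := ENNReal.sum_le_tsum _

variable [MeasurableSpace α]

theorem measurable_occupationTime (hE : ∀ n, MeasurableSet (E n)) :
    Measurable (occupationTime E) :=
  Measurable.tsum fun n => measurable_one.indicator (hE n)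

theorem lintegral_occupationTime_lt_top {μ : Measure α} [IsFiniteMeasure μ]
    (hE : ∀ n, MeasurableSet (E n)) (h : Summable fun n => μ.real (E n)) :
    ∫⁻ x, occupationTime E x ∂μ < ⊤ := by
  simp only [occupationTime]
  rw [lintegral_tsum fun n => (measurable_one.indicator (hE n)).aemeasurable]
  simpa only [lintegral_indicator_one (hE _), ofReal_measureReal (measure_ne_top μ _)] using
    h.tsum_ofReal_lt_top

end OccupationTime

section FactorMap

variable {A B : Type*} {L : ℕ} [NeZero L] (out : List A → Option (Fin L → B)) (k : ℕ) (a₀ : A)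

/-- Every machine started early enough eventually produces the letter `b` at the site `s`. -/
def Produces (x : ℤ → A) (s : ℤ) (b : B) : Prop :=
  ∃ T : ℤ, ∀ t₀ ≤ T, ∃ n, machineOutput out k a₀ x t₀ n s = some b

/-- The map sending `x` to the sequence of the letters produced by machines started early enough;
its value is arbitrary at a site where there is no such letter. -/
def factorMap [Nonempty B] (x : ℤ → A) (s : ℤ) : B := Classical.epsilon (Produces out k a₀ x s)

variable {out k a₀} {x : ℤ → A} {s m t₀ : ℤ} {b : B}

theorem Produces.unique {b' : B} (h : Produces out k a₀ x s b) (h' : Produces out k a₀ x s b') :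
    b = b' := by
  obtain ⟨T, hT⟩ := h
  obtain ⟨T', hT'⟩ := h'
  obtain ⟨n, hn⟩ := hT (min T T') (min_le_left _ _)
  obtain ⟨n', hn'⟩ := hT' (min T T') (min_le_right _ _)
  have hmax := machineOutput_mono (le_max_left n n') hn
  rw [machineOutput_mono (le_max_right n n') hn'] at hmax
  exact (Option.some_inj.1 hmax).symm

theorem Produces.factorMap_eq [Nonempty B] (h : Produces out k a₀ x s b) :
    factorMap out k a₀ x s = b :=
  (Classical.epsilon_spec ⟨b, h⟩).unique h

theorem produces_shift (x : ℤ → A) (s : ℤ) :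
    Produces out k a₀ (shift x) s = Produces out k a₀ x (s + 1) := by
  ext b
  simp only [Produces, machineOutput_shift]
  refine ⟨fun ⟨T, hT⟩ => ⟨T + 1, fun t₀ ht => ?_⟩,
    fun ⟨T, hT⟩ => ⟨T - 1, fun t₀ ht => hT _ (by omega)⟩⟩
  simpa using hT (t₀ - 1) (by omega)

theorem factorMap_shift [Nonempty B] (x : ℤ → A) :
    factorMap out k a₀ (shift x) = shift (factorMap out k a₀ x) :=
  funext fun s => congrArg Classical.epsilon (produces_shift x s)

theorem exists_machineOutput_add_of_marker (hm : Marker k a₀ x (m - 1)) (hms : m ≤ s)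
    (ht : t₀ ≤ m) :
    ∃ n₀, ∀ n, machineOutput out k a₀ x t₀ (n₀ + n) s = machineOutput out k a₀ x m n s := by
  obtain ⟨n₀, rfl⟩ := Int.le.dest ht
  exact ⟨n₀, fun n => machineOutput_add (pending_runMachine_of_marker hm) n hms⟩

theorem Produces.of_marker (hm : Marker k a₀ x (m - 1)) (hms : m ≤ s) (ht : t₀ ≤ m) {n : ℕ}
    (hn : machineOutput out k a₀ x t₀ n s = some b) : Produces out k a₀ x s b := by
  obtain ⟨n₀, hn₀⟩ := exists_machineOutput_add_of_marker (out := out) hm hms ht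
  refine ⟨m, fun t₁ ht₁ => ?_⟩
  obtain ⟨n₁, hn₁⟩ := exists_machineOutput_add_of_marker (out := out) hm hms ht₁
  exact ⟨n₁ + n, by rw [hn₁, ← hn₀, machineOutput_mono (Nat.le_add_left n n₀) hn]⟩

theorem machineOutput_eq_factorMap [Nonempty B] {j M n : ℕ} (hmark : ¬NoMarker k a₀ x m j)
    (hbusy : ¬Busy out k a₀ M x t₀ n) (hms : m ≤ s) (ht : t₀ + (j * k : ℕ) ≤ m)
    (hM : s + L ≤ t₀ + M) :
    machineOutput out k a₀ x t₀ n s = some (factorMap out k a₀ x s) := by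
  simp only [NoMarker, not_forall, not_not] at hmark
  simp only [Busy, not_forall, not_not] at hbusy
  obtain ⟨i, hij, hmark⟩ := hmark
  obtain ⟨n', hn', hMn', hres⟩ := hbusy
  have hik : i * k ≤ j * k := Nat.mul_le_mul_right k hij.le
  rw [sub_right_comm] at hmark
  obtain ⟨b, hb⟩ := Option.ne_none_iff_exists'.1
    (machineOutput_ne_none (s := s) hres (by omega) (by omega))
  have hbn := machineOutput_mono hn' hb
  rw [hbn, (Produces.of_marker hmark (by omega) (by omega) hbn).factorMap_eq]

theorem determinesAt_factorMap [Nonempty B] (hm : Marker k a₀ x (m - 1)) (hm0 : m ≤ 0) {n : ℕ}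
    (hn : machineOutput out k a₀ x m n 0 ≠ none) {c d : ℕ} (hc : k - m ≤ c) (hd : m + n ≤ d) :
    DeterminesAt Set.univ (factorMap out k a₀) c d x := by
  intro y _ hy
  obtain ⟨b, hb⟩ := Option.ne_none_iff_exists'.1 hn
  have hmy : Marker k a₀ y (m - 1) :=
    (Marker.congr fun i hi hi' => hy i (by omega) (by omega)).2 hm
  have hby : machineOutput out k a₀ y m n 0 = some b :=
    hb ▸ machineOutput_congr (fun i hi hi' => hy i (by omega) (by omega)) 0
  rw [(Produces.of_marker hmy hm0 le_rfl hby).factorMap_eq,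
    (Produces.of_marker hm hm0 le_rfl hb).factorMap_eq]

theorem exists_determinesAt_factorMap_of_not_busy [Nonempty B] {i : ℕ}
    (hm : Marker k a₀ x (0 - 1 - (i * k : ℕ))) :
    ∃ c < L, ∀ n, ¬Busy out k a₀ (2 * L) x (-c : ℤ) n →
      DeterminesAt Set.univ (factorMap out k a₀) (k * (i + 1)) n x := by
  set m : ℤ := -(i * k : ℕ) with hmdef
  obtain ⟨n₀, hn₀, hpending⟩ :=
    exists_pending_runMachine_eq_zero (out := out) (k := k) (a₀ := a₀) x m (i * k)
  have hlt := pending_runMachine_lt (out := out) (k := k) (a₀ := a₀) (NeZero.pos L) x m (i * k)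
  refine ⟨(runMachine out k a₀ x m (i * k)).pending, hlt, fun n hn => ?_⟩
  simp only [Busy, not_forall, not_not] at hn
  obtain ⟨n', hn', hL, hres⟩ := hn
  have hm' : Marker k a₀ x (m - 1) := by
    convert hm using 1
    omega
  refine determinesAt_factorMap (n := n₀ + n') hm' (by omega) ?_ (by push_cast [hmdef]; linarith)
    (by omega)
  rw [machineOutput_add hpending n' (by omega),
    show m + n₀ = -((runMachine out k a₀ x m (i * k)).pending : ℤ) by omega]
  exact machineOutput_ne_none hres (by omega) (by omega)

theorem codeLength_le_of_determinesAt {D : Set (ℤ → A)} {φ : (ℤ → A) → ℤ → B} {c d : ℕ}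
    (h : DeterminesAt D φ c d x) : codeLength D φ x ≤ c + d :=
  iInf_le_of_le c (iInf_le_of_le d (iInf_le_of_le h le_rfl))

theorem codeLength_factorMap_le [Nonempty B] (hk : k ≠ 0) (x : ℤ → A) :
    codeLength Set.univ (factorMap out k a₀) x ≤
      k * occupationTime (fun j => {x | NoMarker k a₀ x 0 j}) x +
      ∑ c ∈ Finset.range L,
        occupationTime (fun n => {x | Busy out k a₀ (2 * L) x (-c : ℤ) n}) x := by
  by_cases hmark : occupationTime (fun j => {x | NoMarker k a₀ x 0 j}) x = ⊤
  · simp [hmark, hk]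
  obtain ⟨j, hj, hjle⟩ := exists_notMem_of_occupationTime_ne_top hmark
  simp only [Set.mem_ofPred_eq, NoMarker, not_forall, not_not] at hj
  obtain ⟨i, hij, hm⟩ := hj
  obtain ⟨c, hcL, hdet⟩ := exists_determinesAt_factorMap_of_not_busy (out := out) hm
  have hle := Finset.single_le_sum (f := fun c : ℕ =>
    occupationTime (fun n => {x | Busy out k a₀ (2 * L) x (-c : ℤ) n}) x)
    (fun _ _ => zero_le) (Finset.mem_range.2 hcL)
  by_cases hbusy : occupationTime (fun n => {x | Busy out k a₀ (2 * L) x (-c : ℤ) n}) x = ⊤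
  · rw [hbusy, top_le_iff] at hle
    rw [hle, add_top]
    exact le_top
  obtain ⟨n, hn, hnle⟩ := exists_notMem_of_occupationTime_ne_top hbusy
  refine (codeLength_le_of_determinesAt (hdet n hn)).trans (add_le_add ?_ (hnle.trans hle))
  rw [Nat.cast_mul]
  exact mul_le_mul_right ((Nat.cast_le.2 hij).trans hjle) _

theorem isFinitary_of_codeLength_lt_top [MeasurableSpace A] [MeasurableSpace B]
    {μ : Measure (ℤ → A)} {D : Set (ℤ → A)} {φ : (ℤ → A) → ℤ → B}
    (h : ∀ᵐ x ∂μ, codeLength D φ x < ⊤) : IsFinitary μ D φ := by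
  filter_upwards [h] with x hx _
  simpa [codeLength, iInf_lt_iff] using hx

variable [MeasurableSpace A] [DiscreteMeasurableSpace A]

theorem measurable_factorMap [Finite A] [Finite B] [MeasurableSpace B] [Nonempty B] :
    Measurable (factorMap out k a₀) := by
  have houtput (t₀ : ℤ) (n : ℕ) (s : ℤ) (b : B) :
      FinitelyDetermined fun x => machineOutput out k a₀ x t₀ n s = some b :=
    (finitelyDetermined_runMachine t₀ n).comp fun σ =>
      letterAt out (t₀ + n - σ.pending) σ.tasks s = some b
  have hproduces (s : ℤ) (b : B) : Measurable fun x => Produces out k a₀ x s b :=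
    Measurable.exists fun _ => Measurable.forall fun t₀ => Measurable.forall fun _ =>
      Measurable.exists fun n => (houtput t₀ n s b).measurable
  exact measurable_pi_iff.2 fun s =>
    (Measurable.of_discrete (f := Classical.epsilon)).comp (measurable_pi_iff.2 (hproduces s))

variable [Fintype A] {p : A → ℝ} {μ : Measure (ℤ → A)}

theorem IsBernoulliMeasure.summable_measureReal_noMarker (hp : IsProbVector p)
    (hμ : IsBernoulliMeasure μ p) (s : ℤ) :
    Summable fun j => μ.real {x | NoMarker k a₀ x s j} := by
  simp only [hμ.measureReal_noMarker hp]
  exact summable_geometric_of_lt_one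
    (sub_nonneg.2 (pow_le_one₀ (hp.1 a₀).le (mem_Icc_of_mem_stdSimplex hp.mem_stdSimplex a₀).2))
    (sub_lt_self 1 (pow_pos (hp.1 a₀) k))

theorem exists_codeLength_factorMap_le [Nonempty B] (hp : IsProbVector p)
    (hμ : IsBernoulliMeasure μ p) (hk : k ≠ 0)
    (hbusy : ∀ M t₀, Summable fun n => μ.real {x | Busy out k a₀ M x t₀ n}) :
    ∃ g : (ℤ → A) → ℝ≥0∞, Measurable g ∧ ∫⁻ x, g x ∂μ < ⊤ ∧
      ∀ x, codeLength Set.univ (factorMap out k a₀) x ≤ g x := by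
  have : Nonempty A := ⟨a₀⟩
  have := hμ.isProbabilityMeasure
  have hmark (j : ℕ) : MeasurableSet {x | NoMarker k a₀ x 0 j} :=
    (finitelyDetermined_noMarker 0 j).measurableSet
  have hmbusy (t₀ : ℤ) (n : ℕ) : MeasurableSet {x | Busy out k a₀ (2 * L) x t₀ n} :=
    (finitelyDetermined_busy t₀ n).measurableSet
  have hsum := Finset.measurable_fun_sum (Finset.range L) fun c _ =>
    measurable_occupationTime (hmbusy (-c : ℤ))
  refine ⟨_, ((measurable_occupationTime hmark).const_mul _).add hsum, ?_,
    codeLength_factorMap_le hk⟩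
  simp only [Pi.add_apply]
  rw [lintegral_add_right _ hsum, lintegral_const_mul _ (measurable_occupationTime hmark),
    lintegral_finsetSum _ fun c _ => measurable_occupationTime (hmbusy _)]
  exact ENNReal.add_lt_top.2 ⟨ENNReal.mul_lt_top (ENNReal.natCast_lt_top k)
    (lintegral_occupationTime_lt_top hmark (hμ.summable_measureReal_noMarker hp 0)),
    ENNReal.sum_lt_top.2 fun c _ =>
      lintegral_occupationTime_lt_top (hmbusy _) (hbusy (2 * L) _)⟩

end FactorMap

section FactorMapLaw

theorem abs_integral_sub_measureReal_le {α : Type*} [MeasurableSpace α] {μ : Measure α}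
    [IsFiniteMeasure μ] {f : α → ℝ} (hf : Integrable f μ) (hf01 : ∀ x, f x ∈ unitInterval)
    {S N : Set α} (hS : MeasurableSet S) (hN : MeasurableSet N)
    (h : ∀ x ∉ N, f x = S.indicator 1 x) : |∫ x, f x ∂μ - μ.real S| ≤ μ.real N := by
  have hindicator {S : Set α} (hS : MeasurableSet S) :
      Integrable (S.indicator (1 : α → ℝ)) μ :=
    (integrable_const 1).indicator hS
  rw [← integral_indicator_one hS, ← integral_indicator_one hN, ← integral_sub hf (hindicator hS)]
  refine abs_integral_le_integral_abs.trans
    (integral_mono (hf.sub (hindicator hS)).abs (hindicator hN) fun x => ?_)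
  by_cases hx : x ∈ N
  · have hS01 : S.indicator 1 x ∈ unitInterval := by
      by_cases hxS : x ∈ S <;> simp [hxS]
    simpa [hx] using abs_sub_le_of_nonneg_of_le (hf01 x).1 (hf01 x).2 hS01.1 hS01.2
  · simp [hx, h x hx]

variable {A B : Type*} {L : ℕ} [NeZero L] {out : List A → Option (Fin L → B)} {k : ℕ} {a₀ : A}
  [Fintype A] [MeasurableSpace A] [DiscreteMeasurableSpace A] {μ : Measure (ℤ → A)} {p : A → ℝ}
  [Fintype B] [DecidableEq B] [MeasurableSpace B] [DiscreteMeasurableSpace B] [Nonempty B]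
  {law : List A → (Fin L → B) → ℝ} {pot : List A → ℝ} {q : B → ℝ}

theorem abs_prod_sub_measureReal_factorMap_le (hp : IsProbVector p) (hμ : IsBernoulliMeasure μ p)
    (hq : IsProbVector q) (hsim : IsSimulator p law pot out)
    (hlaw : law [] = fun y => ∏ i, q (y i)) {F : Finset ℤ} {z : ℤ → B} {s₀ t₀ : ℤ} {j M : ℕ}
    (hF : ∀ s ∈ F, s₀ ≤ s) (ht₀ : t₀ + (j * k : ℕ) ≤ s₀) (hM : ∀ s ∈ F, s + L ≤ t₀ + M) (n : ℕ) :
    |∏ s ∈ F, q (z s) - μ.real {x | ∀ s ∈ F, factorMap out k a₀ x s = z s}| ≤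
      μ.real {x | NoMarker k a₀ x s₀ j} + μ.real {x | Busy out k a₀ M x t₀ n} := by
  have : Nonempty A := ⟨a₀⟩
  have := hμ.isProbabilityMeasure
  have ht : ∀ s ∈ F, t₀ ≤ s := fun s hs => by have := hF s hs; omega
  rw [← integral_stateWeight_runMachine hp hμ hq.2 hlaw hsim.law_step k a₀ ht n]
  refine (abs_integral_sub_measureReal_le
    (((finitelyDetermined_runMachine t₀ n).comp (stateWeight law q z F (t₀ + n))).integrable μ)
    (fun x => stateWeight_mem_unitInterval hsim.law_mem hq _ _)
    (measurable_factorMap (finitelyDetermined_forall_eq F z).measurableSet)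
    ((finitelyDetermined_noMarker s₀ j).measurableSet.union
      (finitelyDetermined_busy t₀ n).measurableSet) fun x hx => ?_).trans (measureReal_union_le _ _)
  simp only [Set.mem_union, Set.mem_ofPred_eq, not_or] at hx
  rw [stateWeight_runMachine_eq_ite hsim.law_mem hsim.law_done ht fun s hs =>
    machineOutput_eq_factorMap hx.1 hx.2 (hF s hs) ht₀ (hM s hs)]
  simp [Set.indicator_apply]

theorem isBernoulliMeasure_map_factorMap (hp : IsProbVector p) (hμ : IsBernoulliMeasure μ p)
    (hq : IsProbVector q) (hsim : IsSimulator p law pot out)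
    (hlaw : law [] = fun y => ∏ i, q (y i))
    (hbusy : ∀ M t₀, Summable fun n => μ.real {x | Busy out k a₀ M x t₀ n}) :
    IsBernoulliMeasure (μ.map (factorMap out k a₀)) q := by
  intro F z
  have : Nonempty A := ⟨a₀⟩
  have := hμ.isProbabilityMeasure
  rw [Measure.map_apply measurable_factorMap (finitelyDetermined_forall_eq F z).measurableSet,
    Set.preimage_ofPred_eq, ← ofReal_measureReal]
  congr 1
  obtain ⟨s₀, hs₀⟩ : ∃ s₀ : ℤ, ∀ s ∈ F, s₀ ≤ s := F.bddBelow
  obtain ⟨s₁, hs₁⟩ : ∃ s₁ : ℤ, ∀ s ∈ F, s ≤ s₁ := F.bddAbove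
  have hle_noMarker (j : ℕ) :
      |∏ s ∈ F, q (z s) - μ.real {x | ∀ s ∈ F, factorMap out k a₀ x s = z s}| ≤
        μ.real {x | NoMarker k a₀ x s₀ j} := by
    have hlim := (hbusy (s₁ + L - (s₀ - (j * k : ℕ))).toNat
      (s₀ - (j * k : ℕ))).tendsto_atTop_zero.const_add (μ.real {x | NoMarker k a₀ x s₀ j})
    rw [add_zero] at hlim
    exact ge_of_tendsto hlim (.of_forall fun n => abs_prod_sub_measureReal_factorMap_le hp hμ hq
      hsim hlaw hs₀ (by omega) (fun s hs => by have := hs₁ s hs; omega) n)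
  have hzero := ge_of_tendsto (hμ.summable_measureReal_noMarker hp s₀).tendsto_atTop_zero
    (.of_forall hle_noMarker)
  exact (sub_eq_zero.1 (abs_nonpos_iff.1 hzero)).symm

end FactorMapLaw

theorem IsProbVector.vecEntropy_nonneg {A : Type*} [Fintype A] {p : A → ℝ}
    (hp : IsProbVector p) : 0 ≤ vecEntropy p := by
  rw [vecEntropy, Left.nonneg_neg_iff]
  exact Finset.sum_nonpos fun a _ => mul_nonpos_of_nonneg_of_nonpos (hp.1 a).le
    (Real.log_nonpos (hp.1 a).le (mem_Icc_of_mem_stdSimplex hp.mem_stdSimplex a).2)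

theorem IsProbVector.lt_one_of_vecEntropy_pos {A : Type*} [Fintype A] {p : A → ℝ}
    (hp : IsProbVector p) (h : 0 < vecEntropy p) (a : A) : p a < 1 := by
  refine (mem_Icc_of_mem_stdSimplex hp.mem_stdSimplex a).2.lt_of_ne fun ha => h.ne' ?_
  have huniq : ∀ b, b = a := fun b => by
    by_contra hb
    have hsum : p b + p a ≤ ∑ i, p i :=
      Finset.add_le_sum (fun i _ => (hp.1 i).le) (Finset.mem_univ b) (Finset.mem_univ a) hb
    linarith [hp.1 b, hp.2]
  simp [vecEntropy, huniq, ha]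

theorem IsProbVector.nonempty {A : Type*} [Fintype A] {p : A → ℝ} (hp : IsProbVector p) :
    Nonempty A := by
  by_contra! h
  simpa using hp.2

/-- **Serafin.** If `p` and `q` are strictly positive probability vectors on finite
alphabets with `H(p) > H(q)`, then there exists a finitary homomorphism from `BS(p)` to
`BS(q)` whose code length has finite expectation. -/
theorem finitary_factor_finite_expected_code_length_of_entropy_gt
    {A B : Type*} [Fintype A] [Fintype B]
    [MeasurableSpace A] [DiscreteMeasurableSpace A]
    [MeasurableSpace B] [DiscreteMeasurableSpace B]
    (p : A → ℝ) (q : B → ℝ) (hp : IsProbVector p) (hq : IsProbVector q)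
    (μ : Measure (ℤ → A)) (ν : Measure (ℤ → B))
    (hμ : IsBernoulliMeasure μ p) (hν : IsBernoulliMeasure ν q)
    (hH : vecEntropy q < vecEntropy p) :
    ∃ (D : Set (ℤ → A)) (φ : (ℤ → A) → (ℤ → B)),
      IsFactorMap μ ν D φ ∧ IsFinitary μ D φ ∧
      (∫⁻ x, codeLength D φ x ∂μ) < ⊤ := by
  classical
  have := hp.nonempty
  have := hq.nonempty
  have := hμ.isProbabilityMeasure
  obtain ⟨a₀, ha₀⟩ := Finite.exists_max p
  have hlt : p a₀ < 1 := hp.lt_one_of_vecEntropy_pos (hq.vecEntropy_nonneg.trans_lt hH) a₀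
  obtain ⟨L, hL, c, hcL, law, pot, out, hsim, hlaw, hpot⟩ :=
    exists_simulableWithin_lt hp hq hH ha₀ hlt
  have : NeZero L := ⟨hL.ne'⟩
  obtain ⟨k, hk, hbusy⟩ := exists_summable_measureReal_busy hp hμ hsim.pot_nonneg
    (hpot.trans_lt hcL) hsim.pot_step hlt
  obtain ⟨g, hgm, hg, hle⟩ := exists_codeLength_factorMap_le hp hμ hk hbusy
  have hν' := hν.unique (isBernoulliMeasure_map_factorMap hp hμ hq hsim hlaw hbusy)
  refine ⟨Set.univ, factorMap out k a₀, ⟨measurable_factorMap, .univ, rfl, measure_univ, hν',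
    fun x _ => factorMap_shift x⟩, isFinitary_of_codeLength_lt_top ?_,
    (lintegral_mono hle).trans_lt hg⟩
  filter_upwards [ae_lt_top hgm hg.ne] with x hx using (hle x).trans_lt hx
end
end

section
/- Let P and Q be irreducible aperiodic stochastic matrices on finite state sets. If the mixing Markov shifts determined by P and Q are finitarily isomorphic with finite expected code times, then Δ_P = Δ_Q. -/
open MeasureTheory ENNReal Filter

noncomputable section

/-- A stochastic matrix: nonnegative entries, rows summing to one. -/
def IsStochastic {S : Type*} [Fintype S] (P : Matrix S S ℝ) : Prop :=
  (∀ i j, 0 ≤ P i j) ∧ ∀ i, ∑ j, P i j = 1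

/-- Irreducible and aperiodic (primitive): some power has all entries strictly positive. -/
def IsPrimitive {S : Type*} [Fintype S] [DecidableEq S] (P : Matrix S S ℝ) : Prop :=
  ∃ n : ℕ, ∀ i j, 0 < (P ^ n) i j

/-- Irreducible: every state leads to every state in some positive number of steps. -/
def IsIrreducibleMat {S : Type*} [Fintype S] [DecidableEq S] (P : Matrix S S ℝ) : Prop :=
  ∀ i j, ∃ n : ℕ, 0 < n ∧ 0 < (P ^ n) i j

/-- A stationary probability vector for `P`. -/
def IsStationaryVector {S : Type*} [Fintype S] (P : Matrix S S ℝ) (ppi : S → ℝ) : Prop :=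
  (∀ i, 0 ≤ ppi i) ∧ (∑ i, ppi i = 1) ∧ ∀ j, ∑ i, ppi i * P i j = ppi j

/-- `μ` is the (stationary) Markov measure on `(ℤ → S)` determined by the stochastic
matrix `P` with stationary vector `ppi`. -/
def IsMarkovMeasure {S : Type*} [Fintype S] [MeasurableSpace S]
    (μ : Measure (ℤ → S)) (P : Matrix S S ℝ) (ppi : S → ℝ) : Prop :=
  ∀ (m n : ℤ), m ≤ n → ∀ w : ℤ → S,
    μ {x | ∀ i : ℤ, m ≤ i → i ≤ n → x i = w i} =
      ENNReal.ofReal (ppi (w m) * ∏ i ∈ Finset.Ico m n, P (w i) (w (i + 1)))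

/-- The entropy `h(P) = -∑_{i,j} π_i P(i,j) log P(i,j)` of the Markov shift of `P`. -/
def markovEntropy {S : Type*} [Fintype S] (P : Matrix S S ℝ) (ppi : S → ℝ) : ℝ :=
  -∑ i, ∑ j, ppi i * P i j * Real.log (P i j)

/-- The weight `P(c_0,c_1) ⋯ P(c_{n-1},c_n)` of the path `c_0, …, c_n` in `P`. -/
def cycleWeight {S : Type*} (P : Matrix S S ℝ) (n : ℕ) (c : ℕ → S) : ℝ :=
  ∏ i ∈ Finset.range n, P (c i) (c (i + 1))

/-- `c` describes a cycle of length `n`: it returns to its starting state. -/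
def IsCycle {S : Type*} (n : ℕ) (c : ℕ → S) : Prop := c n = c 0

/-- Krieger's Δ-group: the multiplicative subgroup of the positive reals (inside `ℝˣ`)
generated by ratios of strictly positive weights of two cycles of the same length through
the same state. -/
def DeltaGroup {S : Type*} (P : Matrix S S ℝ) : Subgroup ℝˣ :=
  Subgroup.closure {u : ℝˣ | ∃ (n : ℕ) (c d : ℕ → S), 0 < n ∧ IsCycle n c ∧ IsCycle n d ∧
    c 0 = d 0 ∧ 0 < cycleWeight P n c ∧ 0 < cycleWeight P n d ∧
    (u : ℝ) = cycleWeight P n c / cycleWeight P n d}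

/-- The Γ-group of Parry–Schmidt: the multiplicative subgroup of the positive reals (inside
`ℝˣ`) generated by all strictly positive cycle weights. -/
def GammaGroup {S : Type*} (P : Matrix S S ℝ) : Subgroup ℝˣ :=
  Subgroup.closure {u : ℝˣ | ∃ (n : ℕ) (c : ℕ → S), 0 < n ∧ IsCycle n c ∧
    0 < cycleWeight P n c ∧ (u : ℝ) = cycleWeight P n c}

/-- The matrix `P^{(t)}` with entries `P(i,j)^t` where `P(i,j) > 0`, and `0` elsewhere,
viewed as a complex matrix. -/
def betaMatrix {S : Type*} (P : Matrix S S ℝ) (t : ℝ) : Matrix S S ℂ :=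
  Matrix.of fun i j => if 0 < P i j then ((P i j ^ t : ℝ) : ℂ) else 0

/-- Tuncel's β-function: `β_P(t)` is the spectral radius of `P^{(t)}`. -/
def betaFunction {S : Type*} [Fintype S] [DecidableEq S] (P : Matrix S S ℝ) (t : ℝ) : ℝ≥0∞ :=
  spectralRadius ℂ (betaMatrix P t)

/-- Two shift systems are finitarily isomorphic with finite expected code times (fect):
there is a finitary isomorphism such that the code lengths of the map and of its inverse
both have finite expectation. -/
def FinitarilyIsomorphicFect {A B : Type*} [MeasurableSpace A] [MeasurableSpace B]
    (μ : Measure (ℤ → A)) (ν : Measure (ℤ → B)) : Prop :=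
  ∃ (D : Set (ℤ → A)) (E : Set (ℤ → B)) (φ : (ℤ → A) → (ℤ → B)) (ψ : (ℤ → B) → (ℤ → A)),
    IsFinitaryIsomorphism μ ν D E φ ψ ∧
    (∫⁻ x, codeLength D φ x ∂μ) < ⊤ ∧ (∫⁻ y, codeLength E ψ y ∂ν) < ⊤

/-! The idea is to exchange words. Writing a word `v` over a word `u` with the same end states is,
on the cylinder of `u`, an injective map which multiplies the Markov measure by the ratio of the
path weights of `v` and `u`. The code time of `φ` is integrable, so by Borel–Cantelli the window
which determines `(φ x)_i` is almost surely shorter than `|i|` for all but finitely many `i`, and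
the exchange changes only finitely many coordinates of `φ x`. On a set of positive measure it is
therefore conjugated by `φ` to the exchange of two words of the other shift. As `φ` is injective
and measure preserving, the two ratios agree: every generator of `Δ_P` is a ratio of weights of two
paths of `Q` with the same length and end states. Closing both up by a common path shows that it
lies in `Δ_Q`. -/

section Cylinders

variable {ι S : Type*}

/-- The cylinder of the points which agree with `w` on the finite set `s` of coordinates. Only the
values of `w` on `s` matter; taking `w` to be a point avoids words indexed by subtypes. -/
def wordCylinder (s : Finset ι) (w : ι → S) : Set (ι → S) := {x | ∀ i ∈ s, x i = w i}

lemma wordCylinder_eq_preimage_restrict (s : Finset ι) (w : ι → S) :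
    wordCylinder s w = s.restrict (π := fun _ => S) ⁻¹' {s.restrict w} := by
  ext x
  simp [wordCylinder, funext_iff]

section Inclusion

variable {s t : Finset ι} {u w : ι → S}

lemma wordCylinder_subset (hst : s ⊆ t) (hw : w ∈ wordCylinder s u) :
    wordCylinder t w ⊆ wordCylinder s u :=
  fun _ hx i hi => (hx i (hst hi)).trans (hw i hi)

lemma disjoint_wordCylinder (hst : s ⊆ t) (hw : w ∉ wordCylinder s u) :
    Disjoint (wordCylinder t w) (wordCylinder s u) :=
  Set.disjoint_left.2 fun _ hx hxu => hw fun i hi => (hx i (hst hi)).symm.trans (hxu i hi)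

end Inclusion

section Overwrite

variable [DecidableEq ι] {s t : Finset ι} {u v w x : ι → S} {i : ι}

/-- Write the word `v` over the coordinates of `x` in `s`. On the cylinder of a word `u` over `s`
this is the exchange of `u` for `v`. -/
def overwrite (s : Finset ι) (v x : ι → S) : ι → S := s.piecewise v x

lemma overwrite_of_mem (hi : i ∈ s) (v x : ι → S) : overwrite s v x i = v i :=
  s.piecewise_eq_of_mem _ _ hi

lemma overwrite_of_notMem (hi : i ∉ s) (v x : ι → S) : overwrite s v x i = x i :=
  s.piecewise_eq_of_notMem _ _ hi

lemma overwrite_mem_wordCylinder (s : Finset ι) (v x : ι → S) :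
    overwrite s v x ∈ wordCylinder s v :=
  fun _ hi => overwrite_of_mem hi v x

lemma overwrite_eq_of_mem_wordCylinder (hx : x ∈ wordCylinder s u) : overwrite s u x = x :=
  (s.piecewise_congr (fun i hi => (hx i hi).symm) fun _ _ => rfl).trans (s.piecewise_same x)

lemma overwrite_overwrite_of_mem_wordCylinder (hx : x ∈ wordCylinder s u) :
    overwrite s u (overwrite s v x) = x := by
  rw [overwrite, overwrite, Finset.piecewise_idem_right, ← overwrite,
    overwrite_eq_of_mem_wordCylinder hx]

lemma image_overwrite_of_subset_wordCylinder {A : Set (ι → S)} (hA : A ⊆ wordCylinder s u) :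
    overwrite s v '' A = wordCylinder s v ∩ overwrite s u ⁻¹' A := by
  ext y
  constructor
  · rintro ⟨x, hx, rfl⟩
    refine ⟨overwrite_mem_wordCylinder s v x, ?_⟩
    rwa [Set.mem_preimage, overwrite_overwrite_of_mem_wordCylinder (hA hx)]
  · rintro ⟨hy, hyA⟩
    exact ⟨overwrite s u y, hyA, overwrite_overwrite_of_mem_wordCylinder hy⟩

lemma overwrite_mem_wordCylinder_overwrite (s : Finset ι) (v : ι → S) (hx : x ∈ wordCylinder t w) :
    overwrite s v x ∈ wordCylinder t (overwrite s v w) := fun i hi => by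
  by_cases his : i ∈ s
  · rw [overwrite_of_mem his, overwrite_of_mem his]
  · rw [overwrite_of_notMem his, overwrite_of_notMem his, hx i hi]

lemma image_overwrite_wordCylinder (hst : s ⊆ t) (hw : w ∈ wordCylinder s u) :
    overwrite s v '' wordCylinder t w = wordCylinder t (overwrite s v w) := by
  refine Set.Subset.antisymm
    (Set.image_subset_iff.2 fun x => overwrite_mem_wordCylinder_overwrite s v) fun y hy => ?_
  refine ⟨overwrite s u y, ?_, overwrite_overwrite_of_mem_wordCylinder fun i hi => ?_⟩
  · simpa only [overwrite_overwrite_of_mem_wordCylinder hw] using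
      overwrite_mem_wordCylinder_overwrite s u hy
  · rw [hy i (hst hi), overwrite_of_mem hi]

end Overwrite

section Measurability

variable [MeasurableSpace S]

lemma measurable_overwrite [DecidableEq ι] (s : Finset ι) (v : ι → S) :
    Measurable (overwrite s v : (ι → S) → ι → S) := by
  refine measurable_pi_lambda _ fun i => ?_
  by_cases hi : i ∈ s
  · simp only [overwrite_of_mem hi, measurable_const]
  · simp only [overwrite_of_notMem hi, measurable_pi_apply]

variable [MeasurableSingletonClass S]

lemma measurableSet_of_dependsOn [Countable S] {s : Finset ι} {A : Set (ι → S)}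
    (hA : DependsOn (· ∈ A) (s : Set ι)) : MeasurableSet A := by
  have hpre : A = s.restrict ⁻¹' (s.restrict '' A) := by
    refine Set.Subset.antisymm (Set.subset_preimage_image _ _) ?_
    rintro y ⟨x, hx, hxy⟩
    exact (hA fun i hi => congrFun hxy ⟨i, hi⟩).mp hx
  rw [hpre]
  exact s.measurable_restrict (Set.to_countable _).measurableSet

lemma measurableSet_wordCylinder (s : Finset ι) (w : ι → S) : MeasurableSet (wordCylinder s w) := by
  rw [wordCylinder_eq_preimage_restrict]
  exact s.measurable_restrict (measurableSet_singleton _)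

lemma measure_ext_of_wordCylinder [Countable S] {μ₁ μ₂ : Measure (ι → S)} [IsFiniteMeasure μ₁]
    [IsFiniteMeasure μ₂]
    (h : ∀ s : Finset ι, ∃ t, s ⊆ t ∧ ∀ w, μ₁ (wordCylinder t w) = μ₂ (wordCylinder t w)) :
    μ₁ = μ₂ := by
  have map_eq : ∀ s : Finset ι, μ₁.map s.restrict = μ₂.map s.restrict := fun s => by
    obtain ⟨t, hst, ht⟩ := h s
    have map_eq_t : μ₁.map t.restrict = μ₂.map t.restrict := Measure.ext_of_singleton fun w => by
      rw [Measure.map_apply t.measurable_restrict (measurableSet_singleton _),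
        Measure.map_apply t.measurable_restrict (measurableSet_singleton _)]
      obtain hw | ⟨x, rfl⟩ := (t.restrict (π := fun _ => S) ⁻¹' {w}).eq_empty_or_nonempty
      · simp only [hw, measure_empty]
      · simpa only [wordCylinder_eq_preimage_restrict] using ht x
    rw [← Finset.restrict₂_comp_restrict hst,
      ← Measure.map_map (Finset.measurable_restrict₂ hst) t.measurable_restrict, map_eq_t,
      Measure.map_map (Finset.measurable_restrict₂ hst) t.measurable_restrict]
  exact IsProjectiveLimit.unique (P := fun s => μ₂.map s.restrict) map_eq fun _ => rfl

end Measurability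

end Cylinders

section PathWeights

variable {S : Type*} {P : Matrix S S ℝ} {a b c d : ℤ} {u v w : ℤ → S}

/-- The weight of the path which `w` follows on the window `[a, b]`: the counterpart of
`cycleWeight` for two-sided sequences. -/
def pathWeight (P : Matrix S S ℝ) (a b : ℤ) (w : ℤ → S) : ℝ :=
  ∏ i ∈ Finset.Ico a b, P (w i) (w (i + 1))

lemma pathWeight_nonneg (hP : ∀ i j, 0 ≤ P i j) (a b : ℤ) (w : ℤ → S) : 0 ≤ pathWeight P a b w :=
  Finset.prod_nonneg fun _ _ => hP _ _

lemma pathWeight_congr (h : ∀ i ∈ Finset.Icc a b, u i = v i) :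
    pathWeight P a b u = pathWeight P a b v :=
  Finset.prod_congr rfl fun i hi => by
    rw [Finset.mem_Ico] at hi
    rw [h i (by grind), h (i + 1) (by grind)]

lemma pathWeight_mul_pathWeight (hab : a ≤ b) (hbc : b ≤ c) (w : ℤ → S) :
    pathWeight P a b w * pathWeight P b c w = pathWeight P a c w := by
  rw [pathWeight, pathWeight, pathWeight,
    ← Finset.prod_union (Finset.Ico_disjoint_Ico_consecutive a b c),
    Finset.Ico_union_Ico_eq_Ico hab hbc]

lemma pathWeight_eq_cycleWeight (P : Matrix S S ℝ) (a b : ℤ) (w : ℤ → S) :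
    pathWeight P a b w = cycleWeight P (b - a).toNat fun i => w (a + i) := by
  simp only [pathWeight, cycleWeight, Int.Ico_eq_finset_map, Finset.prod_map]
  simp [add_assoc]

lemma overwrite_Icc_eq_of_notMem_Ioo (ha : u a = v a) (hb : u b = v b) {i : ℤ}
    (hi : i ∉ Finset.Ioo a b) (w : ℤ → S) :
    overwrite (Finset.Icc a b) u w i = overwrite (Finset.Icc a b) v w i := by
  by_cases h : i ∈ Finset.Icc a b
  · obtain rfl | rfl : i = a ∨ i = b := by grind
    all_goals simpa only [overwrite_of_mem h]
  · simp only [overwrite_of_notMem h]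

lemma pathWeight_mul_pathWeight_overwrite (hca : c ≤ a) (hab : a ≤ b) (hbd : b ≤ d)
    (ha : u a = v a) (hb : u b = v b) (w : ℤ → S) :
    pathWeight P a b u * pathWeight P c d (overwrite (Finset.Icc a b) v w) =
      pathWeight P a b v * pathWeight P c d (overwrite (Finset.Icc a b) u w) := by
  have split : ∀ y : ℤ → S, pathWeight P c d y =
      pathWeight P c a y * pathWeight P a b y * pathWeight P b d y := fun y => by
    rw [pathWeight_mul_pathWeight hca hab, pathWeight_mul_pathWeight (hca.trans hab) hbd]
  have inner : ∀ y : ℤ → S, pathWeight P a b (overwrite (Finset.Icc a b) y w) =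
      pathWeight P a b y := fun y => pathWeight_congr (overwrite_mem_wordCylinder _ y w)
  have outer : ∀ i ∉ Finset.Ioo a b,
      overwrite (Finset.Icc a b) v w i = overwrite (Finset.Icc a b) u w i := fun i hi =>
    overwrite_Icc_eq_of_notMem_Ioo ha.symm hb.symm hi w
  rw [split, split, inner, inner, pathWeight_congr fun i hi => outer i (by grind),
    pathWeight_congr (a := b) fun i hi => outer i (by grind)]
  ring

end PathWeights

section Shift

variable {S : Type*}

/-- Translation by `n` steps: the `n`-th power of `shift`, for `n` of either sign. -/
def shiftBy (n : ℤ) (x : ℤ → S) : ℤ → S := fun i => x (i + n)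

lemma shiftBy_zero (x : ℤ → S) : shiftBy 0 x = x := by
  funext i
  simp only [shiftBy, add_zero]

lemma shift_shiftBy (n : ℤ) (x : ℤ → S) : shift (shiftBy n x) = shiftBy (n + 1) x := by
  funext i
  simp only [shift, shiftBy, add_assoc, add_comm 1 n]

lemma shift_injective : Function.Injective (shift : (ℤ → S) → ℤ → S) := fun x y h => by
  funext i
  simpa only [shift, sub_add_cancel] using congrFun h (i - 1)

lemma measurable_shiftBy [MeasurableSpace S] (n : ℤ) :
    Measurable (shiftBy n : (ℤ → S) → ℤ → S) :=
  measurable_pi_lambda _ fun i => measurable_pi_apply (i + n)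

lemma preimage_shiftBy_wordCylinder (n c d : ℤ) (w : ℤ → S) :
    shiftBy n ⁻¹' wordCylinder (Finset.Icc c d) w =
      wordCylinder (Finset.Icc (c + n) (d + n)) (shiftBy (-n) w) := by
  ext x
  simp only [Set.mem_preimage, wordCylinder, Set.mem_ofPred_eq, shiftBy, Finset.mem_Icc]
  refine ⟨fun hx i hi => ?_, fun hx i hi => ?_⟩
  · simpa using hx (i + -n) (by lia)
  · simpa using hx (i + n) (by lia)

lemma pathWeight_shiftBy_neg (P : Matrix S S ℝ) (n c d : ℤ) (w : ℤ → S) :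
    pathWeight P (c + n) (d + n) (shiftBy (-n) w) = pathWeight P c d w := by
  rw [pathWeight, ← Finset.prod_Ico_add']
  simp only [pathWeight, shiftBy, add_right_comm _ n, neg_add_cancel_right]

end Shift

section MarkovMeasures

lemma exists_subset_Icc (s : Finset ℤ) (a b : ℤ) :
    ∃ c d, s ⊆ Finset.Icc c d ∧ c ≤ a ∧ b ≤ d := by
  obtain ⟨c, hc⟩ := (insert a s).bddBelow
  obtain ⟨d, hd⟩ := (insert b s).bddAbove
  exact ⟨c, d, fun i hi => Finset.mem_Icc.2 ⟨hc (by simp [hi]), hd (by simp [hi])⟩,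
    hc (by simp), hd (by simp)⟩

variable {S : Type*} [Fintype S] [MeasurableSpace S] {P : Matrix S S ℝ} {ppi : S → ℝ}
  {μ : Measure (ℤ → S)} {a b : ℤ} {u v : ℤ → S}

lemma IsMarkovMeasure.measure_wordCylinder (hμ : IsMarkovMeasure μ P ppi) (hab : a ≤ b)
    (w : ℤ → S) :
    μ (wordCylinder (Finset.Icc a b) w) = ENNReal.ofReal (ppi (w a) * pathWeight P a b w) := by
  simpa only [wordCylinder, pathWeight, Finset.mem_Icc, and_imp] using hμ a b hab w

lemma IsMarkovMeasure.pathWeight_pos (hμ : IsMarkovMeasure μ P ppi) (hppi : ∀ i, 0 ≤ ppi i)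
    (hab : a ≤ b) (h : μ (wordCylinder (Finset.Icc a b) u) ≠ 0) : 0 < pathWeight P a b u := by
  rw [hμ.measure_wordCylinder hab, ← pos_iff_ne_zero, ENNReal.ofReal_pos] at h
  exact pos_of_mul_pos_right h (hppi _)

lemma IsMarkovMeasure.measure_image_overwrite_wordCylinder (hμ : IsMarkovMeasure μ P ppi)
    (hP : ∀ i j, 0 ≤ P i j) {c d : ℤ} (hca : c ≤ a) (hab : a ≤ b) (hbd : b ≤ d) (ha : u a = v a)
    (hb : u b = v b) (hu : 0 < pathWeight P a b u) {w : ℤ → S}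
    (hw : w ∈ wordCylinder (Finset.Icc a b) u) :
    μ (overwrite (Finset.Icc a b) v '' wordCylinder (Finset.Icc c d) w) =
      ENNReal.ofReal (pathWeight P a b v / pathWeight P a b u) *
        μ (wordCylinder (Finset.Icc c d) w) := by
  have hcd : c ≤ d := by lia
  have start : overwrite (Finset.Icc a b) v w c = w c := by
    rw [overwrite_Icc_eq_of_notMem_Ioo ha.symm hb.symm (by grind),
      overwrite_eq_of_mem_wordCylinder hw]
  have weight := pathWeight_mul_pathWeight_overwrite (P := P) hca hab hbd ha hb w
  rw [overwrite_eq_of_mem_wordCylinder hw] at weight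
  rw [image_overwrite_wordCylinder (Finset.Icc_subset_Icc hca hbd) hw,
    hμ.measure_wordCylinder hcd, hμ.measure_wordCylinder hcd, start,
    ← ENNReal.ofReal_mul (div_nonneg (pathWeight_nonneg hP _ _ _) hu.le)]
  congr 1
  field_simp
  linear_combination ppi (w c) * weight

variable [DiscreteMeasurableSpace S]

lemma IsMarkovMeasure.isProbabilityMeasure (hμ : IsMarkovMeasure μ P ppi)
    (hppi : IsStationaryVector P ppi) : IsProbabilityMeasure μ := by
  have measure_coord : ∀ s : S, μ ((fun x : ℤ → S => x 0) ⁻¹' {s}) = ENNReal.ofReal (ppi s) :=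
    fun s => by
      simpa [wordCylinder, pathWeight, Set.preimage] using
        hμ.measure_wordCylinder (le_refl 0) fun _ => s
  constructor
  rw [← Set.preimage_univ (f := fun x : ℤ → S => x 0), ← Finset.coe_univ,
    ← sum_measure_preimage_singleton _ fun s _ =>
      measurable_pi_apply 0 (measurableSet_singleton s)]
  simp only [measure_coord]
  rw [← ENNReal.ofReal_sum_of_nonneg fun i _ => hppi.1 i, hppi.2.1, ENNReal.ofReal_one]

lemma IsMarkovMeasure.measurePreserving_shiftBy [IsFiniteMeasure μ]
    (hμ : IsMarkovMeasure μ P ppi) (n : ℤ) : MeasurePreserving (shiftBy n) μ μ := by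
  refine ⟨measurable_shiftBy n, measure_ext_of_wordCylinder fun s => ?_⟩
  obtain ⟨c, d, hs, hc, hd⟩ := exists_subset_Icc s 0 0
  refine ⟨Finset.Icc c d, hs, fun w => ?_⟩
  rw [Measure.map_apply (measurable_shiftBy n) (measurableSet_wordCylinder _ _),
    preimage_shiftBy_wordCylinder, hμ.measure_wordCylinder (by lia),
    hμ.measure_wordCylinder (by lia), pathWeight_shiftBy_neg]
  simp only [shiftBy, add_neg_cancel_right]

lemma IsMarkovMeasure.measure_image_overwrite [IsFiniteMeasure μ] (hμ : IsMarkovMeasure μ P ppi)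
    (hP : ∀ i j, 0 ≤ P i j) (hab : a ≤ b) (ha : u a = v a) (hb : u b = v b)
    (hu : 0 < pathWeight P a b u) {A : Set (ℤ → S)} (hA : MeasurableSet A)
    (hAu : A ⊆ wordCylinder (Finset.Icc a b) u) :
    μ (overwrite (Finset.Icc a b) v '' A) =
      ENNReal.ofReal (pathWeight P a b v / pathWeight P a b u) * μ A := by
  set s := Finset.Icc a b
  set r := pathWeight P a b v / pathWeight P a b u
  have hmeas := measurable_overwrite s u
  have map_apply : ∀ {B : Set (ℤ → S)}, MeasurableSet B →
      (μ.restrict (wordCylinder s v)).map (overwrite s u) B =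
        μ (wordCylinder s v ∩ overwrite s u ⁻¹' B) := fun hB => by
    rw [Measure.map_apply hmeas hB, Measure.restrict_apply (hmeas hB), Set.inter_comm]
  have map_restrict : (μ.restrict (wordCylinder s v)).map (overwrite s u) =
      r.toNNReal • μ.restrict (wordCylinder s u) := by
    refine measure_ext_of_wordCylinder fun t => ?_
    obtain ⟨c, d, ht, hca, hbd⟩ := exists_subset_Icc t a b
    have hs : s ⊆ Finset.Icc c d := Finset.Icc_subset_Icc hca hbd
    refine ⟨Finset.Icc c d, ht, fun w => ?_⟩
    rw [map_apply (measurableSet_wordCylinder _ _), Measure.smul_apply,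
      Measure.restrict_apply (measurableSet_wordCylinder _ _)]
    by_cases hw : w ∈ wordCylinder s u
    · have hsub := wordCylinder_subset hs hw
      rw [← image_overwrite_of_subset_wordCylinder hsub, Set.inter_eq_left.2 hsub]
      exact hμ.measure_image_overwrite_wordCylinder hP hca hab hbd ha hb hu hw
    · have hdisj := disjoint_wordCylinder hs hw
      have hempty : wordCylinder s v ∩ overwrite s u ⁻¹' wordCylinder (Finset.Icc c d) w = ∅ :=
        Set.eq_empty_of_forall_notMem fun x hx =>
          Set.disjoint_left.1 hdisj hx.2 (overwrite_mem_wordCylinder s u x)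
      rw [hempty, hdisj.inter_eq, measure_empty, smul_zero]
  rw [image_overwrite_of_subset_wordCylinder hAu, ← map_apply hA, map_restrict,
    Measure.smul_apply, Measure.restrict_apply hA, Set.inter_eq_left.2 hAu]
  rfl

lemma IsMarkovMeasure.ae_overwrite_mem [IsFiniteMeasure μ] (hμ : IsMarkovMeasure μ P ppi)
    (hP : ∀ i j, 0 ≤ P i j) (hab : a ≤ b) (ha : u a = v a) (hb : u b = v b)
    (hu : 0 < pathWeight P a b u) (hv : 0 < pathWeight P a b v) {D : Set (ℤ → S)}
    (hD : MeasurableSet D) (hDμ : ∀ᵐ x ∂μ, x ∈ D) :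
    ∀ᵐ x ∂μ, x ∈ wordCylinder (Finset.Icc a b) u → overwrite (Finset.Icc a b) v x ∈ D := by
  set s := Finset.Icc a b
  set bad := wordCylinder s u ∩ overwrite s v ⁻¹' Dᶜ
  have image_subset : overwrite s v '' bad ⊆ Dᶜ := Set.image_subset_iff.2 Set.inter_subset_right
  have measure_image := hμ.measure_image_overwrite hP hab ha hb hu
    ((measurableSet_wordCylinder s u).inter (measurable_overwrite s v hD.compl))
    Set.inter_subset_left
  rw [measure_mono_null image_subset hDμ, eq_comm, mul_eq_zero,
    or_iff_right (ENNReal.ofReal_pos.2 (div_pos hv hu)).ne'] at measure_image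
  filter_upwards [measure_eq_zero_iff_ae_notMem.1 measure_image] with x hx hxu
  by_contra hxD
  exact hx ⟨hxu, hxD⟩

end MarkovMeasures

section Paths

variable {S : Type*} {P : Matrix S S ℝ}

/-- The path which follows `c` for `n` steps and continues along `t`; the two should meet, that is
`c n = t 0`. -/
def concatPath (n : ℕ) (c t : ℕ → S) : ℕ → S := fun i => if i < n then c i else t (i - n)

lemma concatPath_of_le {n i : ℕ} {c t : ℕ → S} (h : c n = t 0) (hi : i ≤ n) :
    concatPath n c t i = c i := by
  obtain hi | rfl := hi.lt_or_eq
  · exact if_pos hi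
  · simp [concatPath, h]

lemma concatPath_add (n i : ℕ) (c t : ℕ → S) : concatPath n c t (n + i) = t i := by
  simp [concatPath]

lemma cycleWeight_concatPath {n : ℕ} {c t : ℕ → S} (h : c n = t 0) (k : ℕ) :
    cycleWeight P (n + k) (concatPath n c t) = cycleWeight P n c * cycleWeight P k t := by
  rw [cycleWeight, Finset.prod_range_add]
  congr 1
  · refine Finset.prod_congr rfl fun i hi => ?_
    rw [Finset.mem_range] at hi
    rw [concatPath_of_le h hi.le, concatPath_of_le h hi]
  · exact Finset.prod_congr rfl fun i _ => by rw [add_assoc, concatPath_add, concatPath_add]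

variable [Fintype S] [DecidableEq S]

lemma exists_path_of_pow_pos (hP : ∀ i j, 0 ≤ P i j) {n : ℕ} {i j : S} (h : 0 < (P ^ n) i j) :
    ∃ c : ℕ → S, c 0 = i ∧ c n = j ∧ 0 < cycleWeight P n c := by
  induction n generalizing j with
  | zero =>
    have hij : i = j := by
      by_contra hne
      simp [Matrix.one_apply_ne hne] at h
    exact ⟨fun _ => i, rfl, hij, by simp [cycleWeight]⟩
  | succ n ih =>
    rw [pow_succ, Matrix.mul_apply] at h
    obtain ⟨k, -, hk⟩ := (Finset.sum_pos_iff_of_nonneg fun l _ =>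
      mul_nonneg (Matrix.pow_apply_nonneg hP n i l) (hP l j)).1 h
    obtain ⟨c, hc₀, hcn, hc⟩ := ih (pos_of_mul_pos_left hk (hP k j))
    let edge : ℕ → S := fun i => if i = 0 then k else j
    refine ⟨concatPath n c edge, ?_, concatPath_add n 1 c edge, ?_⟩
    · rw [concatPath_of_le hcn n.zero_le, hc₀]
    · rw [cycleWeight_concatPath hcn]
      refine mul_pos hc ?_
      simpa [cycleWeight, edge] using pos_of_mul_pos_right hk (Matrix.pow_apply_nonneg hP n i k)

lemma IsPrimitive.isIrreducibleMat (hprim : IsPrimitive P) (hP : IsStochastic P) :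
    IsIrreducibleMat P := by
  obtain ⟨n, hn⟩ := hprim
  intro i j
  obtain ⟨k, -, hk⟩ := (Finset.sum_pos_iff_of_nonneg fun l _ => hP.1 i l).1
    ((hP.2 i).symm ▸ one_pos)
  refine ⟨n + 1, n.succ_pos, ?_⟩
  rw [pow_succ', Matrix.mul_apply]
  exact Finset.sum_pos' (fun l _ => mul_nonneg (hP.1 i l) (hn l j).le)
    ⟨k, Finset.mem_univ k, mul_pos hk (hn k j)⟩

lemma IsStationaryVector.vecMul_pow {ppi : S → ℝ} (hppi : IsStationaryVector P ppi) (n : ℕ) :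
    Matrix.vecMul ppi (P ^ n) = ppi := by
  induction n with
  | zero => simp
  | succ n ih =>
    rw [pow_succ, ← Matrix.vecMul_vecMul, ih]
    exact funext hppi.2.2

lemma IsStationaryVector.pos {ppi : S → ℝ} (hppi : IsStationaryVector P ppi)
    (hP : ∀ i j, 0 ≤ P i j) (hirr : IsIrreducibleMat P) (j : S) : 0 < ppi j := by
  obtain ⟨i, -, hi⟩ := (Finset.sum_pos_iff_of_nonneg fun l _ => hppi.1 l).1
    (hppi.2.1.symm ▸ one_pos)
  obtain ⟨n, -, hn⟩ := hirr i j
  rw [← hppi.vecMul_pow n]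
  exact Finset.sum_pos' (fun k _ => mul_nonneg (hppi.1 k) (Matrix.pow_apply_nonneg hP n k j))
    ⟨i, Finset.mem_univ i, mul_pos hi hn⟩

lemma mem_deltaGroup_of_paths (hP : ∀ i j, 0 ≤ P i j) (hirr : IsIrreducibleMat P) {n : ℕ}
    {c d : ℕ → S} (h₀ : c 0 = d 0) (hn : c n = d n) (hc : 0 < cycleWeight P n c)
    (hd : 0 < cycleWeight P n d) {r : ℝˣ}
    (hr : (r : ℝ) = cycleWeight P n c / cycleWeight P n d) : r ∈ DeltaGroup P := by
  obtain ⟨k, hk, hpos⟩ := hirr (c n) (c 0)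
  obtain ⟨t, ht₀, htk, ht⟩ := exists_path_of_pow_pos hP hpos
  have hct : c n = t 0 := ht₀.symm
  have hdt : d n = t 0 := hn.symm.trans hct
  refine Subgroup.subset_closure ⟨n + k, concatPath n c t, concatPath n d t, by lia, ?_, ?_, ?_,
    ?_, ?_, ?_⟩
  · rw [IsCycle, concatPath_add, concatPath_of_le hct n.zero_le, htk]
  · rw [IsCycle, concatPath_add, concatPath_of_le hdt n.zero_le, htk, h₀]
  · rw [concatPath_of_le hct n.zero_le, concatPath_of_le hdt n.zero_le, h₀]
  · rw [cycleWeight_concatPath hct]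
    exact mul_pos hc ht
  · rw [cycleWeight_concatPath hdt]
    exact mul_pos hd ht
  · rw [cycleWeight_concatPath hct, cycleWeight_concatPath hdt, mul_div_mul_right _ _ ht.ne', hr]

lemma mem_deltaGroup_of_pathWeight (hP : ∀ i j, 0 ≤ P i j) (hirr : IsIrreducibleMat P) {a b : ℤ}
    (hab : a ≤ b) {u v : ℤ → S} (ha : u a = v a) (hb : u b = v b) (hu : 0 < pathWeight P a b u)
    (hv : 0 < pathWeight P a b v) {r : ℝˣ}
    (hr : (r : ℝ) = pathWeight P a b u / pathWeight P a b v) : r ∈ DeltaGroup P := by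
  rw [pathWeight_eq_cycleWeight] at hu hv
  rw [pathWeight_eq_cycleWeight, pathWeight_eq_cycleWeight] at hr
  refine mem_deltaGroup_of_paths hP hirr ?_ ?_ hu hv hr
  · simpa only [Nat.cast_zero, add_zero] using ha
  · simpa only [Int.toNat_sub_of_le hab, add_sub_cancel] using hb

end Paths

section Coding

variable {A B : Type*} {D : Set (ℤ → A)} {φ : (ℤ → A) → ℤ → B}

lemma exists_determinesAt_of_codeLength_add_lt {x : ℤ → A} {m n : ℕ}
    (h : codeLength D φ x + m < n) : ∃ q r : ℕ, q + r + m < n ∧ DeterminesAt D φ q r x := by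
  rw [← lt_tsub_iff_right] at h
  simp only [codeLength, iInf_lt_iff] at h
  obtain ⟨q, r, hdet, hlt⟩ := h
  exact ⟨q, r, by exact_mod_cast lt_tsub_iff_right.1 hlt, hdet⟩

section Measurability

variable [MeasurableSpace A] [MeasurableSingletonClass A] [Countable A] {μ : Measure (ℤ → A)}

lemma aemeasurable_codeLength (hD : ∀ᵐ x ∂μ, x ∈ D) : AEMeasurable (codeLength D φ) μ := by
  classical
  let constantOnWindow (q r : ℕ) : Set (ℤ → A) :=
    {x | ∀ y ∈ D, ∀ z ∈ D, (∀ i ∈ Finset.Icc (-q : ℤ) r, y i = x i) →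
      (∀ i ∈ Finset.Icc (-q : ℤ) r, z i = x i) → φ y 0 = φ z 0}
  have measurable_window : ∀ q r, MeasurableSet (constantOnWindow q r) := fun q r =>
    measurableSet_of_dependsOn (s := Finset.Icc (-q : ℤ) r) fun x y hxy => by
      simp only [constantOnWindow, Set.mem_ofPred_eq]
      refine propext (forall₄_congr fun y _ z _ => ?_)
      refine imp_congr (forall₂_congr fun i hi => ?_)
        (imp_congr_left (forall₂_congr fun i hi => ?_)) <;> rw [hxy i hi]
  have mem_iff : ∀ x ∈ D, ∀ q r, x ∈ constantOnWindow q r ↔ DeterminesAt D φ q r x := by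
    refine fun x hx q r => ⟨fun h y hy hyx => ?_, fun h y hy z hz hyx hzx => ?_⟩
    · exact h y hy x hx (by simpa using hyx) fun _ _ => rfl
    · rw [h y hy (by simpa using hyx), h z hz (by simpa using hzx)]
  refine ⟨fun x => ⨅ (q : ℕ) (r : ℕ), if x ∈ constantOnWindow q r then (q : ℝ≥0∞) + r else ⊤,
    .iInf fun q => .iInf fun r => .ite (measurable_window q r) measurable_const measurable_const,
    ?_⟩
  filter_upwards [hD] with x hx
  refine iInf_congr fun q => iInf_congr fun r => ?_
  simp only [mem_iff x hx, iInf_eq_if]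

end Measurability

section BorelCantelli

variable {Ω : Type*} [MeasurableSpace Ω] {μ : Measure Ω} [IsProbabilityMeasure μ] {C : Ω → ℝ≥0∞}

lemma tsum_measure_natCast_le_lt_top (hC : AEMeasurable C μ) (hfin : ∫⁻ x, C x ∂μ ≠ ⊤) :
    ∑' j : ℕ, μ {x | j ≤ C x} < ⊤ := by
  have hX : Integrable (fun x => (C x).toReal + 1) μ :=
    (integrable_toReal_of_lintegral_ne_top hC hfin).add (integrable_const _)
  -- `tsum_prob_mem_Ioi_lt_top` is stated for the measure `volume`.
  let _ : MeasureSpace Ω := ⟨μ⟩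
  refine (ENNReal.tsum_le_tsum fun j => measure_mono_ae ?_).trans_lt
    (ProbabilityTheory.tsum_prob_mem_Ioi_lt_top hX fun x => by positivity)
  filter_upwards [ae_lt_top' hC hfin] with x hx hj
  exact lt_add_of_le_of_pos (by simpa using ENNReal.toReal_mono hx.ne hj) one_pos

lemma ae_eventually_lt_natCast (hC : AEMeasurable C μ) (hfin : ∫⁻ x, C x ∂μ ≠ ⊤) {T : ℕ → Ω → Ω}
    (hT : ∀ j, MeasurePreserving (T j) μ μ) : ∀ᵐ x ∂μ, ∀ᶠ j : ℕ in atTop, C (T j x) < j := by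
  have hpre : ∀ j : ℕ, μ {x | j ≤ C (T j x)} = μ {x | j ≤ C x} := fun j =>
    (hT j).measure_preimage (hC.nullMeasurableSet_preimage measurableSet_Ici)
  have hsum : ∑' j : ℕ, μ {x | j ≤ C (T j x)} ≠ ⊤ := by
    simpa only [hpre] using (tsum_measure_natCast_le_lt_top hC hfin).ne
  filter_upwards [ae_eventually_notMem hsum] with x hx
  exact hx.mono fun j hj => not_le.1 hj

lemma ae_eventually_lt_natAbs (hC : AEMeasurable C μ) (hfin : ∫⁻ x, C x ∂μ ≠ ⊤) {T : ℤ → Ω → Ω}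
    (hT : ∀ i, MeasurePreserving (T i) μ μ) :
    ∀ᵐ x ∂μ, ∀ᶠ i : ℤ in cofinite, C (T i x) < i.natAbs := by
  filter_upwards [ae_eventually_lt_natCast hC hfin fun j => hT j,
    ae_eventually_lt_natCast hC hfin fun j => hT (-j)] with x hpos hneg
  obtain ⟨K, hK⟩ := eventually_atTop.1 (hpos.and hneg)
  filter_upwards [(Set.finite_Ioo (-K : ℤ) K).compl_mem_cofinite] with i hi
  obtain ⟨hpos, hneg⟩ := hK i.natAbs (by grind)
  obtain h | h := i.natAbs_eq
  · rwa [← h] at hpos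
  · rwa [← h] at hneg

end BorelCantelli

variable [MeasurableSpace A] [MeasurableSpace B] {μ : Measure (ℤ → A)} {ν : Measure (ℤ → B)}

lemma IsFactorMap.ae_mem_dom [IsProbabilityMeasure μ] (hφ : IsFactorMap μ ν D φ) :
    ∀ᵐ x ∂μ, x ∈ D :=
  (prob_compl_eq_zero_iff hφ.dom_measurable).2 hφ.dom_full

lemma IsFactorMap.shiftBy_mem_iff (hφ : IsFactorMap μ ν D φ) (n : ℤ) {x : ℤ → A} :
    shiftBy n x ∈ D ↔ x ∈ D := by
  have step : ∀ k : ℤ, shiftBy (k + 1) x ∈ D ↔ shiftBy k x ∈ D := fun k => by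
    rw [← shift_shiftBy, ← Set.mem_preimage, hφ.dom_shift_invariant]
  induction n with
  | zero => rw [shiftBy_zero]
  | succ n ih => exact (step n).trans ih
  | pred n ih => rwa [← step, sub_add_cancel]

lemma IsFactorMap.map_shiftBy (hφ : IsFactorMap μ ν D φ) {x : ℤ → A} (hx : x ∈ D) (n : ℤ) :
    φ (shiftBy n x) = shiftBy n (φ x) := by
  have step : ∀ k : ℤ, φ (shiftBy (k + 1) x) = shift (φ (shiftBy k x)) := fun k => by
    rw [← shift_shiftBy, hφ.equivariant _ ((hφ.shiftBy_mem_iff k).2 hx)]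
  induction n with
  | zero => rw [shiftBy_zero, shiftBy_zero]
  | succ n ih => rw [step, ih, shift_shiftBy]
  | pred n ih => exact shift_injective (by rw [← step, shift_shiftBy, sub_add_cancel, ih])

lemma IsFactorMap.apply_eq_of_determinesAt (hφ : IsFactorMap μ ν D φ) {x y : ℤ → A} (hx : x ∈ D)
    (hy : y ∈ D) {i : ℤ} {q r : ℕ} (hdet : DeterminesAt D φ q r (shiftBy i x))
    (hxy : ∀ l ∈ Finset.Icc (i - q) (i + r), y l = x l) : φ y i = φ x i := by
  have coord : ∀ z ∈ D, φ z i = φ (shiftBy i z) 0 := fun z hz => by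
    rw [hφ.map_shiftBy hz, shiftBy, zero_add]
  rw [coord y hy, coord x hx]
  exact hdet _ ((hφ.shiftBy_mem_iff i).2 hy) fun l hl₁ hl₂ => hxy _ (by grind)

lemma IsFactorMap.ae_eventually_apply_eq [Countable A] [MeasurableSingletonClass A]
    [IsProbabilityMeasure μ] (hφ : IsFactorMap μ ν D φ)
    (hshift : ∀ n, MeasurePreserving (shiftBy n) μ μ) (hfin : ∫⁻ x, codeLength D φ x ∂μ ≠ ⊤)
    (s : Finset ℤ) :
    ∀ᵐ x ∂μ, ∀ᶠ i in cofinite, ∀ y ∈ D, (∀ j ∉ s, y j = x j) → φ y i = φ x i := by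
  obtain ⟨m, hm⟩ : ∃ m : ℕ, ∀ j ∈ s, j.natAbs ≤ m :=
    ⟨s.sup Int.natAbs, fun j hj => Finset.le_sup (f := Int.natAbs) hj⟩
  have hC : AEMeasurable (fun x => codeLength D φ x + m) μ :=
    (aemeasurable_codeLength hφ.ae_mem_dom).add_const _
  have hCfin : ∫⁻ x, codeLength D φ x + m ∂μ ≠ ⊤ := by
    simpa [lintegral_add_right] using hfin
  filter_upwards [hφ.ae_mem_dom, ae_eventually_lt_natAbs hC hCfin hshift] with x hx hlt
  filter_upwards [hlt] with i hi y hy hyx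
  obtain ⟨q, r, hqr, hdet⟩ := exists_determinesAt_of_codeLength_add_lt hi
  refine hφ.apply_eq_of_determinesAt hx hy hdet fun l hl => hyx l fun hls => ?_
  have hlm := hm l hls
  rw [Finset.mem_Icc] at hl
  lia

end Coding

section ExchangeRatios

lemma exists_mem_measure_fiber_ne_zero {α β : Type*} [MeasurableSpace α] [Countable β]
    {μ : Measure α} {A : Set α} (hA : μ A ≠ 0) (f : α → β) :
    ∃ x₀ ∈ A, μ {x ∈ A | f x = f x₀} ≠ 0 := by
  have cover : A = ⋃ b, {x ∈ A | f x = b} := by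
    ext x
    simp
  rw [cover] at hA
  obtain ⟨b, hb⟩ := exists_measure_pos_of_not_measure_iUnion_null hA
  obtain ⟨x₀, hx₀, rfl⟩ := nonempty_of_measure_ne_zero hb.ne'
  exact ⟨x₀, hx₀, hb.ne'⟩

section FactorMaps

variable {A B : Type*} [MeasurableSpace A] [MeasurableSpace B]
  {μ : Measure (ℤ → A)} {ν : Measure (ℤ → B)} {D M : Set (ℤ → A)} {φ : (ℤ → A) → ℤ → B}

/-- The points of the cylinder of `u` at which exchanging `u` for `v` changes only coordinates of
the image under `φ` in `(-k, k)`. -/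
def exchangeSet (D : Set (ℤ → A)) (φ : (ℤ → A) → ℤ → B) (s : Finset ℤ) (u v : ℤ → A) (k : ℕ) :
    Set (ℤ → A) :=
  {x ∈ wordCylinder s u | x ∈ D ∧ overwrite s v x ∈ D ∧
    ∀ i : ℤ, k ≤ |i| → φ (overwrite s v x) i = φ x i}

lemma measurableSet_exchangeSet [MeasurableSingletonClass A] [StandardBorelSpace B]
    (hD : MeasurableSet D) (hφ : Measurable φ) (s : Finset ℤ) (u v : ℤ → A) (k : ℕ) :
    MeasurableSet (exchangeSet D φ s u v k) := by
  have measurable_exchange := measurable_overwrite s v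
  have measurable_tail :
      MeasurableSet {x | ∀ i : ℤ, k ≤ |i| → φ (overwrite s v x) i = φ x i} := by
    simp only [Set.ofPred_forall]
    exact .iInter fun i => .iInter fun _ => measurableSet_eq_fun
      ((measurable_pi_apply i).comp (hφ.comp measurable_exchange))
      ((measurable_pi_apply i).comp hφ)
  exact (measurableSet_wordCylinder s u).inter
    (hD.inter ((measurable_exchange hD).inter measurable_tail))

variable [StandardBorelSpace A] [StandardBorelSpace B]

lemma IsFactorMap.measurableSet_image (hφ : IsFactorMap μ ν D φ) (hinj : D.InjOn φ)
    (hM : MeasurableSet M) (hMD : M ⊆ D) : MeasurableSet (φ '' M) :=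
  hM.image_of_measurable_injOn hφ.measurable_map (hinj.mono hMD)

lemma IsFactorMap.measure_image [IsProbabilityMeasure μ] (hφ : IsFactorMap μ ν D φ)
    (hinj : D.InjOn φ) (hM : MeasurableSet M) (hMD : M ⊆ D) : ν (φ '' M) = μ M := by
  rw [hφ.pushforward,
    Measure.map_apply hφ.measurable_map (hφ.measurableSet_image hinj hM hMD)]
  refine measure_congr ?_
  filter_upwards [hφ.ae_mem_dom] with x hx
  exact propext (hinj.mem_image_iff hMD hx)

end FactorMaps

variable {S₁ S₂ : Type*} [Fintype S₁] [MeasurableSpace S₁] [DiscreteMeasurableSpace S₁]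
  {P : Matrix S₁ S₁ ℝ} {ppi₁ : S₁ → ℝ} {μ : Measure (ℤ → S₁)} [IsProbabilityMeasure μ]
  {D : Set (ℤ → S₁)} {a b : ℤ} {u v : ℤ → S₁}

lemma IsFactorMap.exists_measure_exchangeSet_ne_zero {B : Type*} [MeasurableSpace B]
    {ν : Measure (ℤ → B)} {φ : (ℤ → S₁) → ℤ → B} (hφ : IsFactorMap μ ν D φ)
    (hP : ∀ i j, 0 ≤ P i j) (hμ : IsMarkovMeasure μ P ppi₁)
    (hfin : ∫⁻ x, codeLength D φ x ∂μ ≠ ⊤) (hab : a ≤ b) (ha : u a = v a) (hb : u b = v b)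
    (hppi : 0 < ppi₁ (u a)) (hu : 0 < pathWeight P a b u) (hv : 0 < pathWeight P a b v) :
    ∃ k, μ (exchangeSet D φ (Finset.Icc a b) u v k) ≠ 0 := by
  have measure_cylinder : μ (wordCylinder (Finset.Icc a b) u) ≠ 0 := by
    rw [hμ.measure_wordCylinder hab]
    exact (ENNReal.ofReal_pos.2 (mul_pos hppi hu)).ne'
  by_contra! hnull
  refine measure_cylinder (measure_mono_null_ae ?_ (measure_iUnion_null hnull))
  filter_upwards [hφ.ae_mem_dom,
    hμ.ae_overwrite_mem hP hab ha hb hu hv hφ.dom_measurable hφ.ae_mem_dom,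
    hφ.ae_eventually_apply_eq hμ.measurePreserving_shiftBy hfin (Finset.Icc a b)] with x hx hxv
    htail hxu
  rw [Int.cofinite_eq, ← comap_abs_atTop] at htail
  obtain ⟨k, -, hk⟩ := (atTop_basis.comap _).eventually_iff.1 htail
  refine Set.mem_iUnion.2 ⟨k.toNat, hxu, hx, hxv hxu, fun i hi => ?_⟩
  exact hk (k.self_le_toNat.trans hi) _ (hxv hxu) fun j hj => overwrite_of_notMem hj v x

variable [Fintype S₂] [MeasurableSpace S₂] [DiscreteMeasurableSpace S₂] {Q : Matrix S₂ S₂ ℝ}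
  {ppi₂ : S₂ → ℝ} {ν : Measure (ℤ → S₂)} [IsFiniteMeasure ν] {φ : (ℤ → S₁) → ℤ → S₂}

lemma IsFactorMap.pathWeight_div_eq (hφ : IsFactorMap μ ν D φ) (hinj : D.InjOn φ)
    (hP : ∀ i j, 0 ≤ P i j) (hμ : IsMarkovMeasure μ P ppi₁) (hQ : ∀ i j, 0 ≤ Q i j)
    (hppi₂ : ∀ i, 0 ≤ ppi₂ i) (hν : IsMarkovMeasure ν Q ppi₂) (hab : a ≤ b) (ha : u a = v a)
    (hb : u b = v b) (hu : 0 < pathWeight P a b u) {c d : ℤ} {u' v' : ℤ → S₂} (hcd : c ≤ d)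
    (hc : u' c = v' c) (hd : u' d = v' d) {M : Set (ℤ → S₁)} (hM : MeasurableSet M)
    (hM₀ : μ M ≠ 0) (hMD : M ⊆ D) (hMu : M ⊆ wordCylinder (Finset.Icc a b) u)
    (hMv : ∀ x ∈ M, overwrite (Finset.Icc a b) v x ∈ D)
    (hMu' : ∀ x ∈ M, φ x ∈ wordCylinder (Finset.Icc c d) u')
    (hconj : ∀ x ∈ M, φ (overwrite (Finset.Icc a b) v x) = overwrite (Finset.Icc c d) v' (φ x)) :
    0 < pathWeight Q c d u' ∧
      pathWeight P a b v / pathWeight P a b u = pathWeight Q c d v' / pathWeight Q c d u' := by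
  have image_subset : φ '' M ⊆ wordCylinder (Finset.Icc c d) u' := Set.image_subset_iff.2 hMu'
  have measure_image : ν (φ '' M) = μ M := hφ.measure_image hinj hM hMD
  have hu' : 0 < pathWeight Q c d u' := hν.pathWeight_pos hppi₂ hcd fun h =>
    hM₀ (measure_image ▸ measure_mono_null image_subset h)
  have image_comm : φ '' (overwrite (Finset.Icc a b) v '' M) =
      overwrite (Finset.Icc c d) v' '' (φ '' M) := by
    rw [Set.image_image, Set.image_image]
    exact Set.image_congr hconj
  have measurable_exchange : MeasurableSet (overwrite (Finset.Icc a b) v '' M) := by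
    rw [image_overwrite_of_subset_wordCylinder hMu]
    exact (measurableSet_wordCylinder _ _).inter (measurable_overwrite _ _ hM)
  have ratio := calc
    ENNReal.ofReal (pathWeight P a b v / pathWeight P a b u) * μ M
      = μ (overwrite (Finset.Icc a b) v '' M) :=
        (hμ.measure_image_overwrite hP hab ha hb hu hM hMu).symm
    _ = ν (φ '' (overwrite (Finset.Icc a b) v '' M)) :=
        (hφ.measure_image hinj measurable_exchange (Set.image_subset_iff.2 hMv)).symm
    _ = ν (overwrite (Finset.Icc c d) v' '' (φ '' M)) := by rw [image_comm]
    _ = ENNReal.ofReal (pathWeight Q c d v' / pathWeight Q c d u') * ν (φ '' M) :=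
        hν.measure_image_overwrite hQ hcd hc hd hu' (hφ.measurableSet_image hinj hM hMD)
          image_subset
    _ = ENNReal.ofReal (pathWeight Q c d v' / pathWeight Q c d u') * μ M := by rw [measure_image]
  exact ⟨hu', (ENNReal.ofReal_eq_ofReal_iff (div_nonneg (pathWeight_nonneg hP a b v) hu.le)
    (div_nonneg (pathWeight_nonneg hQ c d v') hu'.le)).1
    ((ENNReal.mul_left_inj hM₀ (measure_ne_top μ M)).1 ratio)⟩

lemma IsFactorMap.exists_pathWeight_div_eq (hφ : IsFactorMap μ ν D φ) (hinj : D.InjOn φ)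
    (hP : ∀ i j, 0 ≤ P i j) (hμ : IsMarkovMeasure μ P ppi₁)
    (hfin : ∫⁻ x, codeLength D φ x ∂μ ≠ ⊤) (hQ : ∀ i j, 0 ≤ Q i j) (hppi₂ : ∀ i, 0 ≤ ppi₂ i)
    (hν : IsMarkovMeasure ν Q ppi₂) (hab : a ≤ b) (ha : u a = v a) (hb : u b = v b)
    (hppi₁ : 0 < ppi₁ (u a)) (hu : 0 < pathWeight P a b u) (hv : 0 < pathWeight P a b v) :
    ∃ (k : ℕ) (u' v' : ℤ → S₂), u' (-k) = v' (-k) ∧ u' k = v' k ∧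
      0 < pathWeight Q (-k) k u' ∧ 0 < pathWeight Q (-k) k v' ∧
      pathWeight P a b v / pathWeight P a b u =
        pathWeight Q (-k) k v' / pathWeight Q (-k) k u' := by
  obtain ⟨k, hk⟩ := hφ.exists_measure_exchangeSet_ne_zero hP hμ hfin hab ha hb hppi₁ hu hv
  let exchange := overwrite (Finset.Icc a b) v
  let J : Finset ℤ := Finset.Icc (-k) k
  let image_words : (ℤ → S₁) → (J → S₂) × (J → S₂) := fun x =>
    (J.restrict (φ x), J.restrict (φ (exchange x)))
  have measurable_words : Measurable image_words :=
    (J.measurable_restrict.comp hφ.measurable_map).prodMk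
      (J.measurable_restrict.comp (hφ.measurable_map.comp (measurable_overwrite _ v)))
  obtain ⟨x₀, ⟨-, -, -, tail⟩, hx₀⟩ := exists_mem_measure_fiber_ne_zero hk image_words
  have left_end : φ x₀ (-k) = φ (exchange x₀) (-k) := (tail (-k) (by simp)).symm
  have right_end : φ x₀ k = φ (exchange x₀) k := (tail k (by simp)).symm
  obtain ⟨hu', ratio⟩ := hφ.pathWeight_div_eq hinj hP hμ hQ hppi₂ hν hab ha hb hu (by lia)
    left_end right_end
    ((measurableSet_exchangeSet hφ.dom_measurable hφ.measurable_map _ u v k).inter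
      (measurable_words (measurableSet_singleton (image_words x₀)))) hx₀
    (fun x hx => hx.1.2.1) (fun x hx => hx.1.1) (fun x hx => hx.1.2.2.1)
    (fun x hx i hi => congrFun (congrArg Prod.fst hx.2) ⟨i, hi⟩) fun x hx => by
      funext i
      by_cases hi : i ∈ J
      · rw [overwrite_of_mem hi]
        exact congrFun (congrArg Prod.snd hx.2) ⟨i, hi⟩
      · rw [overwrite_of_notMem hi]
        exact hx.1.2.2.2 i (by grind)
  exact ⟨k, φ x₀, φ (exchange x₀), left_end, right_end, hu',
    (div_pos_iff_of_pos_right hu').1 (ratio ▸ div_pos hv hu), ratio⟩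

end ExchangeRatios

section DeltaGroups

variable {S₁ S₂ : Type*} [Fintype S₁] [MeasurableSpace S₁] [DiscreteMeasurableSpace S₁]
  [DecidableEq S₁] [Fintype S₂] [DecidableEq S₂] [MeasurableSpace S₂] [DiscreteMeasurableSpace S₂]
  {P : Matrix S₁ S₁ ℝ} {ppi₁ : S₁ → ℝ} {μ : Measure (ℤ → S₁)}
  {Q : Matrix S₂ S₂ ℝ} {ppi₂ : S₂ → ℝ} {ν : Measure (ℤ → S₂)}

lemma IsFactorMap.deltaGroup_le {D : Set (ℤ → S₁)} {φ : (ℤ → S₁) → ℤ → S₂}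
    (hφ : IsFactorMap μ ν D φ) (hinj : D.InjOn φ) (hfin : ∫⁻ x, codeLength D φ x ∂μ ≠ ⊤)
    (hP : ∀ i j, 0 ≤ P i j) (hPirr : IsIrreducibleMat P) (hppi₁ : IsStationaryVector P ppi₁)
    (hμ : IsMarkovMeasure μ P ppi₁) (hQ : ∀ i j, 0 ≤ Q i j) (hQirr : IsIrreducibleMat Q)
    (hppi₂ : IsStationaryVector Q ppi₂) (hν : IsMarkovMeasure ν Q ppi₂) :
    DeltaGroup P ≤ DeltaGroup Q := by
  have := hμ.isProbabilityMeasure hppi₁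
  have := hν.isProbabilityMeasure hppi₂
  refine (Subgroup.closure_le _).2 ?_
  rintro r ⟨n, c, d, -, hc, hd, hcd, hcw, hdw, hr⟩
  have weight : ∀ e : ℕ → S₁, pathWeight P 0 n (fun i => e i.toNat) = cycleWeight P n e :=
    fun e => by simp [pathWeight_eq_cycleWeight]
  rw [← weight] at hcw hdw
  rw [← weight, ← weight] at hr
  have right_end : d n = c n := by rw [hc, hd, hcd]
  obtain ⟨k, u', v', hleft, hright, hu', hv', ratio⟩ :=
    hφ.exists_pathWeight_div_eq hinj hP hμ hfin hQ hppi₂.1 hν n.cast_nonneg hcd.symm right_end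
      (hppi₁.pos hP hPirr _) hdw hcw
  exact mem_deltaGroup_of_pathWeight hQ hQirr (by lia) hleft.symm hright.symm hv' hu'
    (hr.trans ratio)

theorem delta_eq_of_fect_general (hP : IsStochastic P) (hPirr : IsIrreducibleMat P)
    (hppi₁ : IsStationaryVector P ppi₁) (hμ : IsMarkovMeasure μ P ppi₁)
    (hQ : IsStochastic Q) (hQirr : IsIrreducibleMat Q)
    (hppi₂ : IsStationaryVector Q ppi₂) (hν : IsMarkovMeasure ν Q ppi₂)
    (hfect : FinitarilyIsomorphicFect μ ν) : DeltaGroup P = DeltaGroup Q := by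
  obtain ⟨D, E, φ, ψ, ⟨hφ, hψ, -, -, hψφ, hφψ⟩, hfinφ, hfinψ⟩ := hfect
  have injOn_φ : D.InjOn φ := Set.LeftInvOn.injOn fun x hx => (hψφ x hx).2
  have injOn_ψ : E.InjOn ψ := Set.LeftInvOn.injOn fun y hy => (hφψ y hy).2
  exact le_antisymm
    (hφ.deltaGroup_le injOn_φ hfinφ.ne hP.1 hPirr hppi₁ hμ hQ.1 hQirr hppi₂ hν)
    (hψ.deltaGroup_le injOn_ψ hfinψ.ne hQ.1 hQirr hppi₂ hν hP.1 hPirr hppi₁ hμ)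

end DeltaGroups

/-- **Krieger.** If the mixing Markov shifts of `P` and `Q` are finitarily isomorphic with
finite expected code times, then `Δ_P = Δ_Q`. -/
theorem delta_eq_of_fect
    {S₁ S₂ : Type*} [Fintype S₁] [DecidableEq S₁] [Fintype S₂] [DecidableEq S₂]
    [MeasurableSpace S₁] [DiscreteMeasurableSpace S₁]
    [MeasurableSpace S₂] [DiscreteMeasurableSpace S₂]
    (P : Matrix S₁ S₁ ℝ) (hPstoch : IsStochastic P) (hPprim : IsPrimitive P)
    (ppi₁ : S₁ → ℝ) (hppi₁ : IsStationaryVector P ppi₁)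
    (μ : Measure (ℤ → S₁)) (hμ : IsMarkovMeasure μ P ppi₁)
    (Q : Matrix S₂ S₂ ℝ) (hQstoch : IsStochastic Q) (hQprim : IsPrimitive Q)
    (ppi₂ : S₂ → ℝ) (hppi₂ : IsStationaryVector Q ppi₂)
    (ν : Measure (ℤ → S₂)) (hν : IsMarkovMeasure ν Q ppi₂)
    (hfect : FinitarilyIsomorphicFect μ ν) :
    DeltaGroup (S := S₁) P = DeltaGroup (S := S₂) Q := by
  exact delta_eq_of_fect_general hPstoch (hPprim.isIrreducibleMat hPstoch) hppi₁ hμ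
    hQstoch (hQprim.isIrreducibleMat hQstoch) hppi₂ hν hfect
end
end
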